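/- arXiv:2204.12849 — 3 statements merged into one kernel-verified Lean document; each statement's English description precedes it below -/
import Mathlib

section
/- Let p be a prime, G a finite group, S a Sylow p-subgroup of G, and let H₁ and H₂ be subnormal subgroups of G. Then ⟨H₁, H₂⟩ ∩ S = ⟨H₁ ∩ S, H₂ ∩ S⟩. -/
/-!
Subnormality is treated relative to subgroups `U` of `G`. The proof is by induction, first on
`J = ⟨A, B⟩` and then, downwards, on the subnormal subgroup `A` of `J`. For the induction the join
of two subnormal subgroups of a finite group must be subnormal (Wielandt, `SN.sup`). Write
`T = ⟨A ∩ S, B ∩ S⟩`, where `S` is a Sylow `p`-subgroup of `J`; the claim is `S ≤ T`.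

Suppose that `O^r(J) < J` for some prime `r`. Residuals commute with joins of subnormal subgroups,
`O^r(⟨A, B⟩) = ⟨O^r(A), O^r(B)⟩` (`res_sup`), so induction gives `S ∩ O^r(J) ≤ T`. If `r ≠ p`,
then `S ≤ O^r(J)`. If `r = p`, then `A = O^p(A)(A ∩ S)` and similarly for `B`, so that
`J = T O^p(J)` and Dedekind's law gives `S = T (S ∩ O^p(J)) = T`.

Otherwise `J` is perfect. Let `N` be a maximal normal subgroup of `J` containing `A`, and `K ≤ B` a
subnormal subgroup of `J` minimal subject to not lying in `N`. Then `J = KN`, and `K` is an atom: it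
is perfect and not the product of two proper normal subgroups. By a theorem of Wielandt
(`Atom.normalizes`) a subnormal atom is normalized by every subnormal subgroup that does not contain
it; so `N` normalizes `K`, and `K` is normal in `J`. Since `AK > A`, induction gives
`S = ⟨AK ∩ S, B ∩ S⟩`, and `AK ∩ S = (A ∩ S)(K ∩ S)` because `K` is normal (`IsSyl.le_sup_inf`).
As `K ≤ B`, this is the claim.
-/

/-- `H` is normal in `K` (both viewed as subgroups of an ambient group `G`):
`H ≤ K` and `H` is closed under conjugation by elements of `K`. -/
def NormalIn {G : Type*} [Group G] (H K : Subgroup G) : Prop :=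
  H ≤ K ∧ ∀ h ∈ H, ∀ k ∈ K, k⁻¹ * h * k ∈ H

/-- A subgroup `H` of `G` is subnormal if there is a chain
`H = K₀ ⊴ K₁ ⊴ ⋯ ⊴ Kₙ = G` with each `Kᵢ₋₁` normal in `Kᵢ`. -/
def IsSubnormal {G : Type*} [Group G] (H : Subgroup G) : Prop :=
  ∃ (n : ℕ) (c : Fin (n + 1) → Subgroup G),
    c 0 = H ∧ c (Fin.last n) = ⊤ ∧ ∀ i : Fin n, NormalIn (c i.castSucc) (c i.succ)


namespace Meier

open Subgroup
open scoped commutatorElement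

variable {G : Type*} [Group G]

/-! ### Conjugation and normalization -/

/-- `A` normalizes `H`: conjugation by every element of `A` maps `H` into itself. -/
def Normalizes (A H : Subgroup G) : Prop :=
  ∀ a ∈ A, ∀ h ∈ H, a * h * a⁻¹ ∈ H

/-- The conjugate `g H g⁻¹`. -/
def cj (g : G) (H : Subgroup G) : Subgroup G :=
  H.map (MulAut.conj g).toMonoidHom

/-- `SN A U` says that `A` is subnormal in the subgroup `U` of the ambient group `G`: a finite
chain of successive normal inclusions leads from `A` to `U`. -/
def SN : Subgroup G → Subgroup G → Prop := Relation.ReflTransGen NormalIn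

lemma normalIn_iff {H K : Subgroup G} : NormalIn H K ↔ H ≤ K ∧ Normalizes K H := by
  refine and_congr_right fun _ => ⟨fun h k hk x hx => ?_, fun h x hx k hk => ?_⟩
  · simpa using h x hx k⁻¹ (K.inv_mem hk)
  · simpa using h k⁻¹ (K.inv_mem hk) x hx

lemma _root_.NormalIn.normalizes {H K : Subgroup G} (h : NormalIn H K) : Normalizes K H :=
  (normalIn_iff.1 h).2

lemma mem_cj {g x : G} {H : Subgroup G} : x ∈ cj g H ↔ g⁻¹ * x * g ∈ H := by
  constructor
  · rintro ⟨y, hy, rfl⟩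
    simpa [mul_assoc] using hy
  · intro h
    exact ⟨_, h, by simp [mul_assoc]⟩

lemma conj_mem_cj {g x : G} {H : Subgroup G} (h : x ∈ H) : g * x * g⁻¹ ∈ cj g H := by
  rw [mem_cj]; simpa [mul_assoc] using h

lemma cj_mono {g : G} {H K : Subgroup G} (h : H ≤ K) : cj g H ≤ cj g K := map_mono h

lemma cj_sup (g : G) (H K : Subgroup G) : cj g (H ⊔ K) = cj g H ⊔ cj g K := map_sup _ _ _

lemma cj_le_of_normalizes {A H K : Subgroup G} (hA : Normalizes A K) (hH : H ≤ K) {g : G}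
    (hg : g ∈ A) : cj g H ≤ K := by
  rintro _ ⟨y, hy, rfl⟩
  exact hA g hg y (hH hy)

lemma cj_eq {A H : Subgroup G} (hA : Normalizes A H) {g : G} (hg : g ∈ A) : cj g H = H := by
  refine le_antisymm (cj_le_of_normalizes hA le_rfl hg) fun x hx => ?_
  rw [mem_cj]
  simpa using hA g⁻¹ (A.inv_mem hg) x hx

lemma cj_cj_inv (g : G) (H : Subgroup G) : cj g (cj g⁻¹ H) = H := by
  ext x; simp [mem_cj, mul_assoc]

lemma cj_inv_cj (g : G) (H : Subgroup G) : cj g⁻¹ (cj g H) = H := by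
  ext x; simp [mem_cj, mul_assoc]

lemma card_cj (g : G) (H : Subgroup G) : Nat.card (cj g H) = Nat.card H :=
  (Nat.card_congr (H.equivMapOfInjective _ (MulAut.conj g).injective).toEquiv).symm

lemma eq_of_cj_le [Finite G] {g : G} {H : Subgroup G} (h : cj g H ≤ H) : cj g H = H :=
  eq_of_le_of_card_ge h (card_cj g H).ge

lemma eq_of_le_cj [Finite G] {g : G} {H : Subgroup G} (h : H ≤ cj g H) : H = cj g H :=
  eq_of_le_of_card_ge h (card_cj g H).le

lemma normalizes_of_cj_le {A H : Subgroup G} (h : ∀ a ∈ A, cj a H ≤ H) : Normalizes A H :=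
  fun a ha _ hx => h a ha (conj_mem_cj hx)

lemma normalizes_iff_le {A H : Subgroup G} :
    Normalizes A H ↔ A ≤ normalizer (H : Set G) := by
  constructor
  · intro h a ha
    rw [mem_normalizer_iff]
    refine fun x => ⟨h a ha x, fun hx => ?_⟩
    simpa [mul_assoc] using h a⁻¹ (A.inv_mem ha) _ hx
  · intro h a ha x hx
    exact (mem_normalizer_iff.1 (h ha) x).1 hx

lemma Normalizes.mono {A B H : Subgroup G} (h : Normalizes B H) (hAB : A ≤ B) :
    Normalizes A H := fun a ha => h a (hAB ha)

lemma normalizes_self (A : Subgroup G) : Normalizes A A :=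
  fun _ ha _ hx => A.mul_mem (A.mul_mem ha hx) (A.inv_mem ha)

lemma Normalizes.sup_left {A B H : Subgroup G} (hA : Normalizes A H) (hB : Normalizes B H) :
    Normalizes (A ⊔ B) H :=
  normalizes_iff_le.2 (sup_le (normalizes_iff_le.1 hA) (normalizes_iff_le.1 hB))

lemma Normalizes.sup_right {A H K : Subgroup G} (hH : Normalizes A H) (hK : Normalizes A K) :
    Normalizes A (H ⊔ K) :=
  normalizes_of_cj_le fun a ha => by rw [cj_sup, cj_eq hH ha, cj_eq hK ha]

lemma Normalizes.inf_right {A H K : Subgroup G} (hH : Normalizes A H) (hK : Normalizes A K) :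
    Normalizes A (H ⊓ K) := fun a ha x hx => ⟨hH a ha x hx.1, hK a ha x hx.2⟩

lemma Normalizes.conj {A H : Subgroup G} (h : Normalizes A H) (g : G) :
    Normalizes (cj g A) (cj g H) := by
  intro a ha x hx
  rw [mem_cj] at *
  simpa [mul_assoc] using h _ ha _ hx

/-- If `A` normalizes `H`, then every element of `A ⊔ H` is a product `a * h`. -/
lemma mem_sup_of_normalizes {A H : Subgroup G} (h : Normalizes A H) {x : G} :
    x ∈ A ⊔ H ↔ ∃ a ∈ A, ∃ y ∈ H, a * y = x := by
  constructor
  · intro hx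
    rw [← SetLike.mem_coe, coe_mul_of_left_le_normalizer_right A H (normalizes_iff_le.1 h)] at hx
    exact hx
  · rintro ⟨a, ha, y, hy, rfl⟩
    exact mul_mem (mem_sup_left ha) (mem_sup_right hy)

lemma normalIn_sup_right {A H : Subgroup G} (h : Normalizes A H) : NormalIn H (A ⊔ H) :=
  normalIn_iff.2 ⟨le_sup_right, h.sup_left (normalizes_self H)⟩

lemma _root_.NormalIn.inf {A U : Subgroup G} (h : NormalIn A U) (V : Subgroup G) :
    NormalIn (A ⊓ V) (U ⊓ V) :=
  normalIn_iff.2 ⟨inf_le_inf_right V h.1,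
    (h.normalizes.mono inf_le_left).inf_right ((normalizes_self V).mono inf_le_right)⟩

/-! ### Subnormality -/

namespace SN

lemma refl (A : Subgroup G) : SN A A := Relation.ReflTransGen.refl

lemma trans {A B C : Subgroup G} (h : SN A B) (h' : SN B C) : SN A C :=
  Relation.ReflTransGen.trans h h'

lemma of_normalIn {A B : Subgroup G} (h : NormalIn A B) : SN A B := Relation.ReflTransGen.single h

lemma le {A U : Subgroup G} (h : SN A U) : A ≤ U := by
  induction h with
  | refl => exact le_rfl
  | tail _ h ih => exact ih.trans h.1

lemma inf {A U : Subgroup G} (h : SN A U) (V : Subgroup G) : SN (A ⊓ V) (U ⊓ V) := by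
  induction h with
  | refl => exact refl _
  | tail _ h ih => exact ih.trans (of_normalIn (h.inf V))

lemma restrict {A U V : Subgroup G} (h : SN A U) (hA : A ≤ V) (hV : V ≤ U) : SN A V := by
  simpa [inf_eq_left.2 hA, inf_eq_right.2 hV] using h.inf V

lemma conj {A U : Subgroup G} (h : SN A U) (g : G) : SN (cj g A) (cj g U) := by
  induction h with
  | refl => exact refl _
  | tail _ h ih =>
    exact ih.trans (of_normalIn (normalIn_iff.2 ⟨cj_mono h.1, h.normalizes.conj g⟩))

lemma cj_of_normalizes {A U V : Subgroup G} (h : SN A U) (hV : Normalizes V U) {g : G}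
    (hg : g ∈ V) : SN (cj g A) U := by
  simpa [cj_eq hV hg] using h.conj g

/-- The image of a subnormal subgroup in the quotient by a normal subgroup `N` is subnormal. -/
lemma sup_normal {A U N : Subgroup G} (h : SN A U) (hN : NormalIn N U) : SN (A ⊔ N) U := by
  induction h using Relation.ReflTransGen.head_induction_on with
  | refl => rw [sup_eq_left.2 hN.1]; exact refl _
  | head h hc ih =>
    refine trans (of_normalIn (normalIn_iff.2 ⟨sup_le_sup_right h.1 N, ?_⟩)) ih
    have hc' := hN.normalizes.mono (le hc)
    exact (h.normalizes.sup_right hc').sup_left ((normalizes_self _).mono le_sup_right)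

lemma exists_normalIn {A U : Subgroup G} (h : SN A U) (hne : A ≠ U) :
    ∃ N, NormalIn N U ∧ N < U ∧ SN A N := by
  induction h with
  | refl => exact absurd rfl hne
  | @tail b c hb h ih =>
    by_cases hbc : b = c
    · subst hbc; exact ih hne
    · exact ⟨b, h, lt_of_le_of_ne h.1 hbc, hb⟩

end SN


/-! ### Joins of subnormal subgroups -/

/-- If `B` normalizes `A`, the chain from `A` to `V` can be refined to a `B`-invariant one, and
joining with `B` gives a subnormal chain. -/
lemma SN.sup_of_normalizes_aux [Finite G] {A B : Subgroup G} (hBA : Normalizes B A)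
    (V : Subgroup G) (hAV : SN A V) (hBV : Normalizes B V) (hB : SN B (V ⊔ B)) :
    SN (A ⊔ B) (V ⊔ B) := by
  induction V using WellFoundedLT.induction with
  | ind V ih =>
    by_cases hne : A = V
    · subst hne; exact SN.refl _
    obtain ⟨M, hMV, hlt, hAM⟩ := hAV.exists_normalIn hne
    -- the intersection of the `B`-conjugates of `M` is `B`-invariant
    let N : Subgroup G := ⨅ b : B, cj (b : G) M
    have memN : ∀ x, x ∈ N ↔ ∀ b ∈ B, b⁻¹ * x * b ∈ M := by
      intro x
      simp [N, mem_iInf, mem_cj]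
    have hNM : N ≤ M := fun x hx => by simpa using (memN x).1 hx 1 B.one_mem
    have hAN : A ≤ N := fun x hx => (memN x).2 fun b hb => by
      simpa using hAM.le (hBA b⁻¹ (B.inv_mem hb) x hx)
    have hBN : Normalizes B N := by
      intro c hc x hx
      rw [memN] at *
      intro b hb
      simpa [mul_assoc] using hx (c⁻¹ * b) (B.mul_mem (B.inv_mem hc) hb)
    have hVN : Normalizes V N := by
      intro v hv x hx
      rw [memN] at *
      intro b hb
      have h1 : b⁻¹ * v * b ∈ V := by simpa using hBV b⁻¹ (B.inv_mem hb) v hv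
      simpa [mul_assoc] using hMV.normalizes _ h1 _ (hx b hb)
    have hNV : NormalIn N (V ⊔ B) :=
      normalIn_iff.2 ⟨(hNM.trans hlt.le).trans le_sup_left, hVN.sup_left hBN⟩
    have hle : N ⊔ B ≤ V ⊔ B := sup_le_sup_right (hNM.trans hlt.le) B
    have h1 := ih N (hNM.trans_lt hlt) (hAM.restrict hAN hNM) hBN
      (hB.restrict le_sup_right hle)
    have h2 := hB.sup_normal hNV
    rw [sup_comm] at h2
    exact h1.trans h2

lemma SN.sup_of_normalizes [Finite G] {A B U : Subgroup G} (hA : SN A U) (hB : SN B U)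
    (hBA : Normalizes B A) : SN (A ⊔ B) U := by
  have hU : U ⊔ B = U := sup_eq_left.2 hB.le
  have := SN.sup_of_normalizes_aux hBA U hA ((normalizes_self U).mono hB.le) (by rwa [hU])
  rwa [hU] at this

/-- If `g` moves `A` properly, then `A` and its conjugate generate a strictly larger subgroup. -/
lemma lt_sup_cj {A : Subgroup G} {g : G} (h : ¬ cj g A ≤ A) : A < A ⊔ cj g A :=
  left_lt_sup.2 h

lemma sup_cj_sup_eq {A B : Subgroup G} {g : G} (hg : g ∈ B) : A ⊔ cj g A ⊔ B = A ⊔ B := by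
  refine le_antisymm (sup_le (sup_le le_sup_left ?_) le_sup_right)
    (sup_le_sup_right le_sup_left B)
  exact cj_le_of_normalizes ((normalizes_self (A ⊔ B)).mono le_sup_right) le_sup_left hg

/-- Wielandt's join theorem for finite groups. In a counterexample with `U` minimal and `A`
maximal, every conjugate `A ^ b` with `b ∈ B` equals `A`, for otherwise `A` could be replaced by
`⟨A, A ^ b⟩`, which lies in a proper normal subgroup; so `B` normalizes `A`. -/
lemma SN.sup [Finite G] {U : Subgroup G} :
    ∀ {A B : Subgroup G}, SN A U → SN B U → SN (A ⊔ B) U := by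
  induction U using WellFoundedLT.induction with
  | ind U ihU =>
    intro A
    induction A using WellFoundedGT.induction with
    | ind A ihA =>
      intro B hA hB
      by_cases hne : A = U
      · rw [hne, sup_eq_left.2 hB.le]; exact SN.refl _
      obtain ⟨N, hNU, hlt, hAN⟩ := hA.exists_normalIn hne
      by_cases hBA : ∀ b ∈ B, cj b A ≤ A
      · exact hA.sup_of_normalizes hB (normalizes_of_cj_le hBA)
      push Not at hBA
      obtain ⟨b, hb, hbA⟩ := hBA
      have h1 : SN (cj b A) N := hAN.cj_of_normalizes hNU.normalizes (hB.le hb)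
      have h2 := ihA (A ⊔ cj b A) (lt_sup_cj hbA)
        ((ihU N hlt hAN h1).trans (.of_normalIn hNU)) hB
      rwa [sup_cj_sup_eq hb] at h2

/-! ### Atoms -/

/-- A perfect group that is not the product of two proper normal subgroups. (The trivial group
satisfies the condition; it does no harm.) -/
def Atom (K : Subgroup G) : Prop :=
  ⁅K, K⁆ = K ∧ ∀ L M, NormalIn L K → NormalIn M K → K ≤ L ⊔ M → K ≤ L ∨ K ≤ M

lemma Atom.conj {K : Subgroup G} (h : Atom K) (g : G) : Atom (cj g K) := by
  have key : ∀ L, NormalIn L (cj g K) → NormalIn (cj g⁻¹ L) K := by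
    intro L hL
    rw [normalIn_iff] at *
    have h1 := cj_mono (g := g⁻¹) hL.1
    have h2 := hL.2.conj g⁻¹
    rw [cj_inv_cj] at h1 h2
    exact ⟨h1, h2⟩
  refine ⟨?_, fun L M hL hM hLM => ?_⟩
  · rw [cj, ← map_commutator, h.1]
  · have h1 := cj_mono (g := g⁻¹) hLM
    rw [cj_inv_cj, cj_sup] at h1
    refine (h.2 _ _ (key L hL) (key M hM) h1).imp (fun h => ?_) (fun h => ?_)
    all_goals
      have := cj_mono (g := g) h
      rwa [cj_cj_inv] at this

/-- Suppose `K` and the atom `L` normalize each other, `D` normalizes `L`, and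
`L ≤ KD`. Then `L = [L, L] ≤ (K ∩ L)(L ∩ N)` for every `N ≥ D` that is invariant under `K`
and `L`, and so `L` lies in `K` or in `N`. -/
lemma Atom.le_or_le {K L D N : Subgroup G} (hL : Atom L) (hKL : Normalizes K L)
    (hLK : Normalizes L K) (hDL : Normalizes D L) (hDN : D ≤ N) (hKN : Normalizes K N)
    (hLN : Normalizes L N) (h : ∀ x ∈ L, ∃ k ∈ K, ∃ d ∈ D, x = k * d) : L ≤ K ∨ L ≤ N := by
  have h1 : NormalIn (K ⊓ L) L :=
    normalIn_iff.2 ⟨inf_le_right, hLK.inf_right (normalizes_self L)⟩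
  have h2 : NormalIn (N ⊓ L) L :=
    normalIn_iff.2 ⟨inf_le_right, hLN.inf_right (normalizes_self L)⟩
  have h3 : L ≤ (K ⊓ L) ⊔ (N ⊓ L) := by
    conv_lhs => rw [← hL.1]
    rw [commutator_le]
    intro u hu v hv
    obtain ⟨k, hk, d, hd, rfl⟩ := h v hv
    have e : ⁅u, k * d⁆ = ⁅u, k⁆ * (k * ⁅u, d⁆ * k⁻¹) := by
      simp only [commutatorElement_def]; group
    rw [e]
    refine mul_mem (mem_sup_left ⟨?_, ?_⟩) (mem_sup_right ⟨?_, ?_⟩)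
    · rw [commutatorElement_def]
      exact K.mul_mem (hLK u hu k hk) (K.inv_mem hk)
    · rw [commutatorElement_def, mul_assoc, mul_assoc, ← mul_assoc k]
      exact mul_mem hu (hKL k hk _ (inv_mem hu))
    · exact hKN k hk _ (mul_mem (hLN u hu d (hDN hd)) (inv_mem (hDN hd)))
    · refine hKL k hk _ ?_
      rw [commutatorElement_def, mul_assoc, mul_assoc, ← mul_assoc d]
      exact mul_mem hu (hDL d hd _ (inv_mem hu))
  exact (hL.2 _ _ h1 h2 h3).imp (fun h => h.trans inf_le_left) (fun h => h.trans inf_le_left)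

/-- Wielandt: a subnormal atom `K` is normalized by every subnormal subgroup `B` that does not
contain it. By induction this is reduced to a normal subgroup `N` not containing `K`; if some
`x ∈ N` moved `K`, then `K` and `K ^ x` would normalize each other, `N` being normal they would
agree modulo `N`, and this contradicts the fact that `K ^ x` is an atom. -/
lemma Atom.normalizes [Finite G] {J : Subgroup G} :
    ∀ {K B : Subgroup G}, Atom K → SN K J → SN B J → ¬ K ≤ B → Normalizes B K := by
  induction J using WellFoundedLT.induction with
  | ind J ih =>
    intro K B hat hK hB hKB
    by_cases hBJ : B = J
    · subst hBJ; exact absurd hK.le hKB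
    obtain ⟨N, hN, hNlt, hBN⟩ := hB.exists_normalIn hBJ
    by_cases hKN : K ≤ N
    · exact ih N hNlt hat (hK.restrict hKN hNlt.le) hBN hKB
    refine Normalizes.mono ?_ hBN.le
    by_cases hKJ : K = J
    · subst hKJ; exact (normalizes_self K).mono hNlt.le
    obtain ⟨M, hM, hMlt, hKM⟩ := hK.exists_normalIn hKJ
    refine normalizes_of_cj_le fun x hx => ?_
    by_contra hcon
    have hxJ := hNlt.le hx
    set L := cj x K with hLdef
    have hLM : SN L M := hKM.cj_of_normalizes hM.normalizes hxJ
    have hLat : Atom L := hat.conj x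
    have hKL : ¬ K ≤ L := fun h => hcon (eq_of_le_cj h).ge
    have hLN : ¬ L ≤ N := by
      intro h
      apply hKN
      have := cj_mono (g := x⁻¹) h
      rwa [hLdef, cj_inv_cj, cj_eq hN.normalizes (inv_mem hxJ)] at this
    have hNM : SN (N ⊓ M) M := by
      have := (SN.of_normalIn hN).inf M
      rwa [inf_eq_right.2 hMlt.le] at this
    have h1 : Normalizes K L := ih M hMlt hLat hLM hKM hcon
    have h2 : Normalizes L K := ih M hMlt hat hKM hLM hKL
    have h3 : Normalizes (N ⊓ M) L :=
      ih M hMlt hLat hLM hNM fun h => hLN (h.trans inf_le_left)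
    have hKJ' := hK.le
    have hLJ : L ≤ J := hLM.le.trans hMlt.le
    have h4 : ∀ y ∈ L, ∃ k ∈ K, ∃ d ∈ N ⊓ M, y = k * d := by
      rintro _ ⟨k, hk, rfl⟩
      have hk' : x * k * x⁻¹ ∈ L := conj_mem_cj hk
      refine ⟨k, hk, k⁻¹ * (x * k * x⁻¹), ⟨?_, ?_⟩, by simp⟩
      · have := hN.normalizes k⁻¹ (inv_mem (hKJ' hk)) x hx
        simpa [mul_assoc] using mul_mem this (inv_mem hx)
      · exact M.mul_mem (M.inv_mem (hKM.le hk)) (hLM.le hk')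
    exact (hLat.le_or_le h1 h2 h3 inf_le_left (hN.normalizes.mono hKJ')
      (hN.normalizes.mono hLJ) h4).elim hcon hLN

/-! ### Sylow subgroups -/

/-- `S` is a Sylow `p`-subgroup of the subgroup `U` of `G`. -/
structure IsSyl (p : ℕ) (S U : Subgroup G) : Prop where
  le : S ≤ U
  isPGroup : IsPGroup p S
  not_dvd : ¬ p ∣ S.relIndex U

lemma exists_isSyl [Finite G] (p : ℕ) [Fact p.Prime] (U : Subgroup G) : ∃ S, IsSyl p S U := by
  obtain ⟨P⟩ : Nonempty (Sylow p U) := inferInstance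
  refine ⟨(P : Subgroup U).map U.subtype, ?_, P.2.map _, ?_⟩
  · rintro _ ⟨y, _, rfl⟩; exact y.2
  · rw [relIndex, subgroupOf, comap_map_eq_self_of_injective U.subtype_injective]
    exact P.not_dvd_index

lemma relIndex_dvd_index_of_normal_right {H : Type*} [Group H] [Finite H] (P N : Subgroup H)
    [N.Normal] : P.relIndex N ∣ P.index := by
  have h1 := relIndex_mul_relIndex (P ⊓ N) N (N ⊔ P) inf_le_right le_sup_left
  have h2 := relIndex_mul_relIndex (P ⊓ N) P (N ⊔ P) inf_le_left le_sup_right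
  rw [inf_relIndex_right, relIndex_sup_left] at h1
  rw [inf_relIndex_left, ← h1, mul_comm] at h2
  have h3 : N.relIndex P ≠ 0 := (N.subgroupOf P).index_ne_zero_of_finite
  have h4 : P.relIndex (N ⊔ P) = P.relIndex N := Nat.eq_of_mul_eq_mul_right (Nat.pos_of_ne_zero h3) h2
  rw [← h4]
  exact relIndex_dvd_index_of_le le_sup_right

lemma IsSyl.inf_normalIn [Finite G] {p : ℕ} {S U A : Subgroup G} (hS : IsSyl p S U)
    (hA : NormalIn A U) : IsSyl p (A ⊓ S) A := by
  refine ⟨inf_le_left, hS.isPGroup.to_inf_right, fun h => hS.not_dvd (h.trans ?_)⟩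
  rw [inf_comm, inf_relIndex_right]
  have : (A.subgroupOf U).Normal := by
    refine ⟨fun x hx g => ?_⟩
    exact hA.normalizes g g.2 x hx
  have h1 := relIndex_dvd_index_of_normal_right (S.subgroupOf U) (A.subgroupOf U)
  rwa [relIndex_subgroupOf hA.1] at h1

/-- A Sylow `p`-subgroup of `U` meets every subnormal subgroup of `U` in a Sylow
`p`-subgroup. -/
lemma IsSyl.inf_sn [Finite G] {p : ℕ} {S U A : Subgroup G} (hS : IsSyl p S U) (hA : SN A U) :
    IsSyl p (A ⊓ S) A := by
  induction hA using Relation.ReflTransGen.head_induction_on with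
  | refl => rwa [inf_eq_right.2 hS.le]
  | @head a c h hc ih =>
    have := ih.inf_normalIn h
    rwa [← inf_assoc, inf_eq_left.2 h.1] at this

/-- If `A / C` is an `r`-group, then a subgroup of `A` containing `C` whose index is prime to `r`
is all of `A`. -/
lemma le_of_pow_mem [Finite G] {r : ℕ} [hr : Fact r.Prime] {A C Q : Subgroup G}
    (hAC : Normalizes A C) (hpow : ∀ a ∈ A, ∃ k : ℕ, a ^ r ^ k ∈ C) (hCQ : C ≤ Q)
    (hQ : ¬ r ∣ Q.relIndex A) : A ≤ Q := by
  have hn : (C.subgroupOf A).Normal := ⟨fun x hx g => hAC g g.2 x hx⟩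
  have hp : IsPGroup r (A ⧸ C.subgroupOf A) := by
    rw [isPGroup_iff_pow_pow_eq_one]
    intro g
    obtain ⟨a, rfl⟩ := QuotientGroup.mk_surjective g
    obtain ⟨k, hk⟩ := hpow a a.2
    refine ⟨k, ?_⟩
    rw [← QuotientGroup.mk_pow, QuotientGroup.eq_one_iff]
    simpa [mem_subgroupOf] using hk
  obtain ⟨n, hn'⟩ := IsPGroup.iff_card.1 hp
  have h1 : Q.relIndex A ∣ r ^ n := by
    rw [← hn', ← index_eq_card]
    exact relIndex_dvd_of_le_left A hCQ
  obtain ⟨j, -, hj⟩ := (Nat.dvd_prime_pow hr.out).1 h1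
  rw [← relIndex_eq_one, hj]
  rw [hj] at hQ
  cases j with
  | zero => simp
  | succ j => exact absurd (dvd_pow_self r j.succ_ne_zero) hQ

lemma index_eq_relIndex_of_sup_eq_top {H : Type*} [Group H] {A K Q : Subgroup H} [K.Normal]
    (hAK : A ⊔ K = ⊤) (hKQ : K ≤ Q) : Q.index = Q.relIndex A := by
  have hs : Function.Surjective ((QuotientGroup.mk' K).comp A.subtype) := by
    intro g
    obtain ⟨x, rfl⟩ := QuotientGroup.mk'_surjective K g
    obtain ⟨a, ha, k, hk, rfl⟩ := mem_sup_of_normal_right.1 (hAK ▸ mem_top x : x ∈ A ⊔ K)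
    refine ⟨⟨a, ha⟩, ?_⟩
    simp [(QuotientGroup.eq_one_iff k).2 hk]
  have hQ : (Q.map (QuotientGroup.mk' K)).comap (QuotientGroup.mk' K) = Q := by
    rw [comap_map_eq_self]; simpa using hKQ
  have h1 := index_comap_of_surjective (Q.map (QuotientGroup.mk' K)) hs
  rw [← comap_comap, hQ] at h1
  rw [← index_map_eq Q (QuotientGroup.mk'_surjective K) (by simpa using hKQ), ← h1]
  rfl

/-- If `K` is normal in `AK` and `R` is a Sylow subgroup of `AK` meeting `A` in a Sylow subgroup,
then `R = (A ∩ R)(K ∩ R)`. -/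
lemma IsSyl.le_sup_inf [Finite G] {p : ℕ} [Fact p.Prime] {A K R : Subgroup G}
    (hAK : Normalizes A K) (hR : IsSyl p R (A ⊔ K)) (hA : IsSyl p (A ⊓ R) A) :
    R ≤ (A ⊓ R) ⊔ (K ⊓ R) := by
  have hHK : Normalizes (A ⊔ K) K := hAK.sup_left (normalizes_self K)
  have hRK : Normalizes R K := hHK.mono hR.le
  have hVH : R ⊔ K ≤ A ⊔ K := sup_le hR.le le_sup_right
  have hQV : (A ⊓ R) ⊔ K ≤ R ⊔ K := sup_le_sup_right inf_le_right K
  have h1 : ¬ p ∣ ((A ⊓ R) ⊔ K).relIndex (R ⊔ K) := by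
    intro h
    apply hA.not_dvd
    have h2 := h.trans (Dvd.intro _ (relIndex_mul_relIndex _ _ _ hQV hVH))
    refine h2.trans (dvd_trans ?_ (relIndex_dvd_of_le_left A (le_sup_left : A ⊓ R ≤ (A ⊓ R) ⊔ K)))
    have hn : (K.subgroupOf (A ⊔ K)).Normal := ⟨fun x hx g => hHK g g.2 x hx⟩
    have h3 : A.subgroupOf (A ⊔ K) ⊔ K.subgroupOf (A ⊔ K) = ⊤ := by
      rw [← subgroupOf_sup le_sup_left le_sup_right, subgroupOf_self]
    have h4 : K.subgroupOf (A ⊔ K) ≤ ((A ⊓ R) ⊔ K).subgroupOf (A ⊔ K) :=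
      comap_mono le_sup_right
    have h5 := index_eq_relIndex_of_sup_eq_top h3 h4
    rw [relIndex_subgroupOf le_sup_left] at h5
    exact h5.dvd
  have h2 : R ⊔ K ≤ (A ⊓ R) ⊔ K := by
    refine le_of_pow_mem (hHK.mono hVH) (fun x hx => ?_) le_sup_right h1
    have hn : (K.subgroupOf (R ⊔ K)).Normal := ⟨fun x hx g => hHK g (hVH g.2) x hx⟩
    obtain ⟨a, ha, y, hy, rfl⟩ := (mem_sup_of_normalizes hRK).1 hx
    obtain ⟨k, hk⟩ := isPGroup_iff_pow_pow_eq_one.1 hR.isPGroup ⟨a, ha⟩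
    refine ⟨k, ?_⟩
    have hq : ((⟨a * y, hx⟩ : ↥(R ⊔ K)) : ↥(R ⊔ K) ⧸ K.subgroupOf (R ⊔ K)) =
        (⟨a, mem_sup_left ha⟩ : ↥(R ⊔ K)) := by
      rw [eq_comm, QuotientGroup.eq]
      simpa [mem_subgroupOf] using hy
    have := congrArg (· ^ p ^ k) hq
    simp only [← QuotientGroup.mk_pow] at this
    rw [QuotientGroup.eq, mem_subgroupOf] at this
    have hk' : a ^ p ^ k = 1 := by simpa using congrArg Subtype.val hk
    simpa [hk'] using this
  intro x hx
  obtain ⟨a, ha, y, hy, rfl⟩ :=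
    (mem_sup_of_normalizes (hAK.mono inf_le_left)).1 (h2 (mem_sup_left hx))
  refine mul_mem (mem_sup_left ha) (mem_sup_right ⟨hy, ?_⟩)
  simpa using R.mul_mem (R.inv_mem ha.2) hx

/-! ### The `r`-residual -/

/-- The subgroup of `H` generated by the elements of order prime to `r`. For a prime `r` and a
finite `H`, this is the `r`-residual `O^r(H)`, the smallest normal subgroup whose quotient is an
`r`-group. -/
def res (r : ℕ) (H : Subgroup G) : Subgroup G :=
  closure {x | x ∈ H ∧ (orderOf x).Coprime r}

section
variable {r : ℕ}

lemma mem_res {H : Subgroup G} {x : G} (hx : x ∈ H) (h : (orderOf x).Coprime r) : x ∈ res r H :=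
  subset_closure ⟨hx, h⟩

lemma res_le_iff {H K : Subgroup G} :
    res r H ≤ K ↔ ∀ x ∈ H, (orderOf x).Coprime r → x ∈ K := by
  rw [res, closure_le]
  exact ⟨fun h x hx hc => h ⟨hx, hc⟩, fun h x hx => h x hx.1 hx.2⟩

lemma res_le (H : Subgroup G) : res r H ≤ H := res_le_iff.2 fun _ hx _ => hx

lemma res_mono {H K : Subgroup G} (h : H ≤ K) : res r H ≤ res r K :=
  res_le_iff.2 fun _ hx hc => mem_res (h hx) hc

lemma res_le_res_res (H : Subgroup G) : res r H ≤ res r (res r H) :=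
  res_le_iff.2 fun _ hx hc => mem_res (mem_res hx hc) hc

lemma res_cj_le (g : G) (H : Subgroup G) : res r (cj g H) ≤ cj g (res r H) := by
  refine res_le_iff.2 ?_
  rintro _ ⟨y, hy, rfl⟩ hc
  refine ⟨y, mem_res hy ?_, rfl⟩
  rwa [orderOf_injective _ (MulAut.conj g).injective] at hc

lemma Normalizes.res {A H : Subgroup G} (h : Normalizes A H) : Normalizes A (res r H) := by
  refine normalizes_of_cj_le fun a ha => ?_
  have h1 := cj_mono (g := a) (res_cj_le (r := r) a⁻¹ H)
  rwa [cj_cj_inv, cj_eq h (inv_mem ha)] at h1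

lemma res_normalIn (H : Subgroup G) : NormalIn (res r H) H :=
  normalIn_iff.2 ⟨res_le H, (normalizes_self H).res⟩

lemma exists_pow_mem_res [Finite G] [hr : Fact r.Prime] {H : Subgroup G} {a : G} (ha : a ∈ H) :
    ∃ k : ℕ, a ^ r ^ k ∈ res r H := by
  obtain ⟨k, m, hm, h⟩ := Nat.exists_eq_pow_mul_and_not_dvd (orderOf_pos a).ne' r hr.out.ne_one
  refine ⟨k, mem_res (pow_mem ha _) ?_⟩
  rw [orderOf_pow_of_dvd (pow_pos hr.out.pos k).ne' (h ▸ dvd_mul_right _ _), h,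
    Nat.mul_div_cancel_left _ (pow_pos hr.out.pos k)]
  exact ((Nat.Prime.coprime_iff_not_dvd hr.out).2 hm).symm

lemma le_res_sup_inf [Finite G] [Fact r.Prime] {A J R : Subgroup G} (hA : SN A J)
    (hR : IsSyl r R J) : A ≤ res r A ⊔ (A ⊓ R) :=
  le_of_pow_mem (res_normalIn A).normalizes (fun _ ha => exists_pow_mem_res ha) le_sup_left
    fun h => (hR.inf_sn hA).not_dvd (h.trans (relIndex_dvd_of_le_left A le_sup_right))

/-- Let `H` be subnormal in `U`. An element of `U` of order prime to `r` lies in `H` as soon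
as it agrees modulo `H` with an element having an `r`-power power in `H`. -/
lemma SN.mem_of_eq_mul {H U : Subgroup G} (hH : SN H U) {x a h : G} {k : ℕ} (hx : x ∈ U)
    (hc : (orderOf x).Coprime r) (he : x = a * h) (hh : h ∈ H) (ha : a ^ r ^ k ∈ H) : x ∈ H := by
  induction hH using Relation.ReflTransGen.head_induction_on with
  | refl => exact hx
  | @head b c hbc _ ih =>
    have hxc := ih (hbc.1 hh) (hbc.1 ha)
    have hac : a ∈ c := by
      have := mul_mem hxc (inv_mem (hbc.1 hh))
      simpa [he] using this
    have key : ∀ n : ℕ, ∃ y ∈ b, x ^ n = a ^ n * y := by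
      intro n
      induction n with
      | zero => exact ⟨1, b.one_mem, by simp⟩
      | succ n ihn =>
        obtain ⟨y, hy, hxy⟩ := ihn
        refine ⟨a⁻¹ * y * a * h, mul_mem ?_ hh, ?_⟩
        · simpa using hbc.normalizes a⁻¹ (inv_mem hac) y hy
        · rw [pow_succ, hxy, he, pow_succ]; group
    obtain ⟨y, hy, hxy⟩ := key (r ^ k)
    obtain ⟨m, hm⟩ := exists_pow_eq_self_of_coprime (hc.pow_right k).symm
    rw [← hm, hxy]
    exact pow_mem (mul_mem ha hy) m

end

/-! ### The residual of a join -/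

section
variable {r : ℕ}

/-- In a counterexample to `res_sup` with `U` minimal and `A` maximal, the residual of `B`
normalizes `A`. The hypotheses are the two induction hypotheses. -/
lemma res_sup_or_normalizes [Finite G] {U A B : Subgroup G}
    (ihU : ∀ N, N < U → ∀ A B : Subgroup G, SN A N → SN B N →
      res r (A ⊔ B) ≤ res r A ⊔ res r B)
    (ihA : ∀ L, A < L → SN L U → res r (L ⊔ B) ≤ res r L ⊔ res r B)
    (hA : SN A U) (hB : SN B U) :
    res r (A ⊔ B) ≤ res r A ⊔ res r B ∨ Normalizes (res r B) A := by
  by_cases hne : A = U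
  · left
    rw [sup_eq_left.2 (hne ▸ hB.le : B ≤ A)]
    exact le_sup_left
  obtain ⟨N, hNU, hlt, hAN⟩ := hA.exists_normalIn hne
  by_cases hBA : ∀ b ∈ res r B, cj b A ≤ A
  · exact .inr (normalizes_of_cj_le hBA)
  left
  push Not at hBA
  obtain ⟨b, hb, hbA⟩ := hBA
  have hbB := res_le B hb
  have h1 : SN (cj b A) N := hAN.cj_of_normalizes hNU.normalizes (hB.le hbB)
  have h2 := ihA (A ⊔ cj b A) (lt_sup_cj hbA) ((hAN.sup h1).trans (.of_normalIn hNU))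
  rw [sup_cj_sup_eq hbB] at h2
  refine h2.trans (sup_le ((ihU N hlt A _ hAN h1).trans (sup_le le_sup_left ?_)) le_sup_right)
  refine (res_cj_le b A).trans ?_
  exact cj_le_of_normalizes ((normalizes_self (res r A ⊔ res r B)).mono le_sup_right)
    le_sup_left hb

/-- If the residual `D` of `B` normalizes `A`, then the residuals of `A` and `B` generate the
residual of `AD`, which is therefore normalized by `A`. -/
lemma normalizes_res_sup_res [Finite G] [Fact r.Prime] {U A B : Subgroup G} (hA : SN A U)
    (hB : SN B U) (hn : Normalizes (res r B) A) : Normalizes A (res r A ⊔ res r B) := by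
  have hD : SN (res r B) U := (SN.of_normalIn (res_normalIn B)).trans hB
  have hC : NormalIn (res r A) (A ⊔ res r B) :=
    normalIn_iff.2 ⟨(res_le A).trans le_sup_left, ((normalizes_self A).res).sup_left hn.res⟩
  have h1 : SN (res r B ⊔ res r A) (A ⊔ res r B) :=
    (hD.restrict le_sup_right (sup_le hA.le hD.le)).sup_normal hC
  have h2 : res r A ⊔ res r B = res r (A ⊔ res r B) := by
    refine le_antisymm (sup_le (res_mono le_sup_left)
      ((res_le_res_res B).trans (res_mono le_sup_right))) (res_le_iff.2 fun x hx hc => ?_)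
    obtain ⟨d, hd, a, ha, h⟩ := (mem_sup_of_normalizes hn).1
      (by rw [sup_comm]; exact inv_mem hx : x⁻¹ ∈ res r B ⊔ A)
    obtain ⟨k, hk⟩ := exists_pow_mem_res (r := r) (inv_mem ha)
    rw [sup_comm]
    refine h1.mem_of_eq_mul hx hc (a := a⁻¹) (h := d⁻¹) (k := k) ?_
      (mem_sup_left (inv_mem hd)) (mem_sup_right hk)
    rw [← mul_inv_rev, h, inv_inv]
  rw [h2]
  exact ((normalizes_self (A ⊔ res r B)).mono le_sup_left).res

/-- The residual of the join of two subnormal subgroups is contained in the join `X` of their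
residuals (the other inclusion is monotonicity). By minimality of `U` and maximality of `(A, B)`,
each residual normalizes the other subgroup; then `X` is normal in `⟨A, B⟩`, and `⟨A, B⟩ = XR` for
a Sylow `r`-subgroup `R`. -/
lemma res_sup [Finite G] [Fact r.Prime] {U : Subgroup G} :
    ∀ A B : Subgroup G, SN A U → SN B U → res r (A ⊔ B) ≤ res r A ⊔ res r B := by
  induction U using WellFoundedLT.induction with
  | ind U ihU =>
    have key : ∀ P : Subgroup G × Subgroup G, SN P.1 U → SN P.2 U →
        res r (P.1 ⊔ P.2) ≤ res r P.1 ⊔ res r P.2 := by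
      intro P
      induction P using WellFoundedGT.induction with
      | ind P ih =>
        obtain ⟨A, B⟩ := P
        intro hA hB
        dsimp only at hA hB ⊢
        have h1 := res_sup_or_normalizes ihU
          (fun L hL hLU => ih (L, B) (Prod.mk_lt_mk_iff_left.2 hL) hLU hB) hA hB
        have h2 := res_sup_or_normalizes ihU
          (fun L hL hLU => by
            have := ih (A, L) (Prod.mk_lt_mk_iff_right.2 hL) hA hLU
            dsimp only at this
            rwa [sup_comm, sup_comm (res r L)]) hB hA
        rw [sup_comm B, sup_comm (res r B)] at h2
        refine h1.elim id fun h1 => h2.elim id fun h2 => ?_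
        have h3 := normalizes_res_sup_res hA hB h1
        have h4 := normalizes_res_sup_res hB hA h2
        rw [sup_comm (res r B)] at h4
        have hX : NormalIn (res r A ⊔ res r B) (A ⊔ B) :=
          normalIn_iff.2 ⟨sup_le_sup (res_le A) (res_le B), h3.sup_left h4⟩
        obtain ⟨R, hR⟩ := exists_isSyl r (A ⊔ B)
        have hJ : A ⊔ B ≤ U := sup_le hA.le hB.le
        have hAR := le_res_sup_inf (hA.restrict le_sup_left hJ) hR
        have hBR := le_res_sup_inf (hB.restrict le_sup_right hJ) hR
        have hJR : A ⊔ B ≤ R ⊔ (res r A ⊔ res r B) :=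
          sup_le
            (hAR.trans (sup_le (le_sup_left.trans le_sup_right) (inf_le_right.trans le_sup_left)))
            (hBR.trans (sup_le (le_sup_right.trans le_sup_right) (inf_le_right.trans le_sup_left)))
        refine res_le_iff.2 fun x hx hc => ?_
        obtain ⟨a, ha, y, hy, h⟩ :=
          (mem_sup_of_normalizes (hX.normalizes.mono hR.le)).1 (hJR hx)
        obtain ⟨k, hk⟩ := isPGroup_iff_pow_pow_eq_one.1 hR.isPGroup ⟨a, ha⟩
        have hk' : a ^ r ^ k = 1 := by simpa using congrArg Subtype.val hk
        exact (SN.of_normalIn hX).mem_of_eq_mul hx hc h.symm hy (k := k)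
          (by rw [hk']; exact one_mem _)
    exact fun A B => key (A, B)

/-- A finite group that equals all of its residuals is perfect: a prime dividing the order of the
abelianization would divide the order of some element, but the abelianization is generated by
elements of order prime to `r`. -/
lemma commutator_eq_of_res_eq [Finite G] {J : Subgroup G}
    (h : ∀ r : ℕ, r.Prime → res r J = J) : ⁅J, J⁆ = J := by
  suffices hc : commutator J = ⊤ by
    have h1 := congrArg (map J.subtype) hc
    rwa [map_subtype_commutator, ← MonoidHom.range_eq_map, range_subtype] at h1
  by_contra hne
  have hcard : Nat.card (Abelianization J) ≠ 1 := by
    intro h1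
    exact hne (index_eq_one.1 h1)
  obtain ⟨r, hr, hdvd⟩ := Nat.exists_prime_and_dvd hcard
  have := Fact.mk hr
  have : Finite (Abelianization J) := inferInstanceAs (Finite (J ⧸ commutator J))
  obtain ⟨z, hz⟩ := exists_prime_orderOf_dvd_card' r hdvd
  obtain ⟨⟨x, hx⟩, rfl⟩ := QuotientGroup.mk_surjective z
  have key : ∀ y (hy : y ∈ res r J),
      (orderOf (Abelianization.of (⟨y, res_le J hy⟩ : J))).Coprime r := by
    intro y hy
    have hy' := hy
    rw [res] at hy'
    induction hy' using closure_induction with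
    | mem y hyr =>
      refine Nat.Coprime.coprime_dvd_left (orderOf_map_dvd _ _) ?_
      rw [← orderOf_injective J.subtype J.subtype_injective]
      exact hyr.2
    | one =>
      have : (⟨1, res_le J (res r J).one_mem⟩ : J) = 1 := rfl
      rw [this]; simp
    | mul a b ha hb iha ihb =>
      have : (⟨a * b, res_le J ((res r J).mul_mem ha hb)⟩ : J) =
        ⟨a, res_le J ha⟩ * ⟨b, res_le J hb⟩ := rfl
      rw [this, map_mul]
      exact Nat.Coprime.coprime_dvd_left ((Commute.all _ _).orderOf_mul_dvd_mul_orderOf)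
        ((iha ha).mul_left (ihb hb))
    | inv a ha iha =>
      have : (⟨a⁻¹, res_le J ((res r J).inv_mem ha)⟩ : J) = ⟨a, res_le J ha⟩⁻¹ := rfl
      rw [this, map_inv, orderOf_inv]
      exact iha ha
  have h1 := key x (by rw [h r hr]; exact hx)
  have hz' : orderOf (Abelianization.of (⟨x, hx⟩ : J)) = r := hz
  rw [hz', Nat.coprime_self] at h1
  exact hr.one_lt.ne' h1

end

/-! ### Sylow intersections of a join -/

/-- A `p`-subgroup lies in the `r`-residual for every prime `r ≠ p`. -/
lemma le_res_of_isPGroup [Finite G] {p r : ℕ} [hp : Fact p.Prime] (hr : r.Prime) (hne : p ≠ r)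
    {S J : Subgroup G} (hS : IsPGroup p S) (hSJ : S ≤ J) : S ≤ res r J := by
  intro x hx
  obtain ⟨k, hk⟩ := IsPGroup.iff_orderOf.1 hS ⟨x, hx⟩
  refine mem_res (hSJ hx) ?_
  rw [orderOf_mk] at hk
  rw [hk]
  exact ((Nat.coprime_primes hp.out hr).2 hne).pow_left k

/-- If `J` is perfect and `A` is a proper subnormal subgroup of `J = ⟨A, B⟩`, then `B` contains a
subgroup `K` that is normal in `J` and not contained in `A`: take `N` a maximal normal subgroup of
`J` containing `A` and `K ≤ B` minimal subnormal with respect to not lying in `N`. Then `K` is an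
atom with `J = NK`, and `N` normalizes `K`. -/
lemma exists_normalIn_not_le [Finite G] {J A B : Subgroup G} (hA : SN A J) (hB : SN B J)
    (hJ : J = A ⊔ B) (hperf : ⁅J, J⁆ = J) (hne : A ≠ J) :
    ∃ K, NormalIn K J ∧ K ≤ B ∧ ¬ K ≤ A := by
  obtain ⟨N₀, hN₀, hlt₀, hAN₀⟩ := hA.exists_normalIn hne
  obtain ⟨N, ⟨hN, hlt, hAN⟩, hmax⟩ :=
    (Set.toFinite {N : Subgroup G | NormalIn N J ∧ N < J ∧ A ≤ N}).exists_maximal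
      ⟨N₀, hN₀, hlt₀, hAN₀.le⟩
  have hBN : ¬ B ≤ N := fun h => hlt.not_ge (by rw [hJ]; exact sup_le hAN h)
  obtain ⟨K, ⟨hK, hKB, hKN⟩, hmin⟩ :=
    (Set.toFinite {K : Subgroup G | SN K J ∧ K ≤ B ∧ ¬ K ≤ N}).exists_minimal ⟨B, hB, le_rfl, hBN⟩
  have hsmall : ∀ L, NormalIn L K → ¬ K ≤ L → L ≤ N := by
    intro L hL hKL
    by_contra hLN
    exact hKL (hmin ⟨(SN.of_normalIn hL).trans hK, hL.1.trans hKB, hLN⟩ hL.1)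
  have hKNJ : K ⊔ N = J := by
    by_contra h
    obtain ⟨N₂, hN₂, hlt₂, hle⟩ := (hK.sup_normal hN).exists_normalIn h
    have h1 : N ≤ N₂ := le_sup_right.trans hle.le
    exact hKN ((le_sup_left.trans hle.le).trans (hmax ⟨hN₂, hlt₂, hAN.trans h1⟩ h1))
  have hKN' : Normalizes K N := hN.normalizes.mono hK.le
  have hat : Atom K := by
    refine ⟨?_, fun L M hL hM hKLM => ?_⟩
    · by_contra hKK
      have hle : ⁅K, K⁆ ≤ K := by
        rw [commutator_le]
        intro u hu v hv
        exact mul_mem (mul_mem (mul_mem hu hv) (inv_mem hu)) (inv_mem hv)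
      have hcN : ⁅K, K⁆ ≤ N := by
        refine hsmall _ (normalIn_iff.2 ⟨hle, normalizes_of_cj_le fun k hk => ?_⟩)
          fun h => hKK (le_antisymm hle h)
        rw [cj, map_commutator]
        have := (cj_eq (normalizes_self K) hk).le
        exact commutator_mono this this
      -- `J / N` is a quotient of the abelian group `K / [K, K]`, so `J = [J, J] ≤ N`
      refine hlt.not_ge ?_
      conv_lhs => rw [← hperf]
      have hn : (N.subgroupOf J).Normal := ⟨fun x hx g => hN.normalizes g g.2 x hx⟩
      have hrep : ∀ u : J, ∃ k : J, (k : G) ∈ K ∧ (u : J ⧸ N.subgroupOf J) = k := by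
        rintro ⟨u, hu⟩
        obtain ⟨k, hk, y, hy, rfl⟩ := (mem_sup_of_normalizes hKN').1 (hKNJ.ge hu)
        refine ⟨⟨k, hK.le hk⟩, hk, ?_⟩
        rw [eq_comm, QuotientGroup.eq, mem_subgroupOf]
        simpa using hy
      rw [commutator_le]
      intro u hu v hv
      obtain ⟨k, hk, hku⟩ := hrep ⟨u, hu⟩
      obtain ⟨l, hl, hlv⟩ := hrep ⟨v, hv⟩
      have h1 : ((⁅k, l⁆ : J) : J ⧸ N.subgroupOf J) = 1 := by
        rw [QuotientGroup.eq_one_iff, mem_subgroupOf]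
        exact hcN (commutator_mem_commutator hk hl)
      have h2 : ((⁅(⟨u, hu⟩ : J), ⟨v, hv⟩⁆ : J) : J ⧸ N.subgroupOf J) = 1 := by
        rw [← h1]
        simp only [commutatorElement_def, QuotientGroup.mk_mul, QuotientGroup.mk_inv, hku, hlv]
      rw [QuotientGroup.eq_one_iff, mem_subgroupOf] at h2
      exact h2
    · by_contra! hcon
      exact hKN (hKLM.trans (sup_le (hsmall L hL hcon.1) (hsmall M hM hcon.2)))
  have hNK : Normalizes N K := hat.normalizes hK (.of_normalIn hN) hKN
  refine ⟨K, normalIn_iff.2 ⟨hK.le, ?_⟩, hKB, fun h => hKN (h.trans hAN)⟩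
  rw [← hKNJ]
  exact (normalizes_self K).sup_left hNK

/-- The passage from a residual of `J` to `J`: by `res_sup` the residuals of `A` and `B` generate
that of `J`, so the induction hypothesis puts `S ∩ O^r(J)` into `T = ⟨A ∩ S, B ∩ S⟩`. If `r ≠ p`
then `S ≤ O^r(J)`; if `r = p` then `J = T O^p(J)`. -/
lemma le_sup_inf_of_res_ne [Finite G] {p r : ℕ} [hp : Fact p.Prime] (hr : r.Prime)
    {J A B S : Subgroup G} (hA : SN A J) (hB : SN B J) (hJ : J = A ⊔ B) (hS : IsSyl p S J)
    (ih : ∀ C D S' : Subgroup G, SN C (res r J) → SN D (res r J) → res r J = C ⊔ D →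
      IsSyl p S' (res r J) → S' ≤ (C ⊓ S') ⊔ (D ⊓ S')) :
    S ≤ (A ⊓ S) ⊔ (B ⊓ S) := by
  have := Fact.mk hr
  have hrJ : SN (res r J) J := .of_normalIn (res_normalIn J)
  have hres : res r J = res r A ⊔ res r B := by
    refine le_antisymm ?_ (sup_le (res_mono hA.le) (res_mono hB.le))
    have h := res_sup (r := r) A B hA hB
    rwa [← hJ] at h
  have hC : SN (res r A) (res r J) :=
    ((SN.of_normalIn (res_normalIn A)).trans hA).restrict (res_mono hA.le) hrJ.le
  have hD : SN (res r B) (res r J) :=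
    ((SN.of_normalIn (res_normalIn B)).trans hB).restrict (res_mono hB.le) hrJ.le
  have h1 : res r J ⊓ S ≤ (A ⊓ S) ⊔ (B ⊓ S) :=
    (ih _ _ _ hC hD hres (hS.inf_sn hrJ)).trans
      (sup_le_sup (inf_le_inf (res_le A) inf_le_right) (inf_le_inf (res_le B) inf_le_right))
  by_cases hpr : p = r
  · subst hpr
    have hTS : (A ⊓ S) ⊔ (B ⊓ S) ≤ S := sup_le inf_le_right inf_le_right
    have hT : J ≤ ((A ⊓ S) ⊔ (B ⊓ S)) ⊔ res p J := by
      conv_lhs => rw [hJ]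
      exact sup_le
        ((le_res_sup_inf hA hS).trans (sup_le ((res_mono hA.le).trans le_sup_right)
          (le_sup_left.trans le_sup_left)))
        ((le_res_sup_inf hB hS).trans (sup_le ((res_mono hB.le).trans le_sup_right)
          (le_sup_right.trans le_sup_left)))
    intro x hx
    obtain ⟨t, ht, y, hy, rfl⟩ := (mem_sup_of_normalizes
      ((res_normalIn J).normalizes.mono (hTS.trans hS.le))).1 (hT (hS.le hx))
    refine mul_mem ht (h1 ⟨hy, ?_⟩)
    simpa using S.mul_mem (S.inv_mem (hTS ht)) hx
  · exact (le_inf (le_res_of_isPGroup hr hpr hS.isPGroup hS.le) le_rfl).trans h1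

/-- Meierfrankenfeld's Lemma for subnormal subgroups `A`, `B` of `J = ⟨A, B⟩`, by induction on `J`
upwards and then on `A` downwards. -/
lemma le_sup_inf [Finite G] {p : ℕ} [Fact p.Prime] {J : Subgroup G} :
    ∀ A B S : Subgroup G, SN A J → SN B J → J = A ⊔ B → IsSyl p S J →
      S ≤ (A ⊓ S) ⊔ (B ⊓ S) := by
  induction J using WellFoundedLT.induction with
  | ind J ihJ =>
    intro A
    induction A using WellFoundedGT.induction with
    | ind A ihA =>
      intro B S hA hB hJ hS
      by_cases hne : A = J
      · exact (le_inf (hne ▸ hS.le) le_rfl).trans le_sup_left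
      by_cases hres : ∃ r : ℕ, r.Prime ∧ res r J ≠ J
      · obtain ⟨r, hr, hrJ⟩ := hres
        exact le_sup_inf_of_res_ne hr hA hB hJ hS (ihJ _ (lt_of_le_of_ne (res_le J) hrJ))
      push Not at hres
      obtain ⟨K, hK, hKB, hKA⟩ :=
        exists_normalIn_not_le hA hB hJ (commutator_eq_of_res_eq hres) hne
      have hAK : SN (A ⊔ K) J := hA.sup_normal hK
      have hJ' : J = A ⊔ K ⊔ B := by rw [sup_assoc, sup_eq_right.2 hKB, hJ]
      have h1 := ihA (A ⊔ K) (left_lt_sup.2 hKA) B S hAK hB hJ' hS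
      have h2 : (A ⊔ K) ⊓ S ≤ (A ⊓ S) ⊔ (K ⊓ S) := by
        have hAS : A ⊓ ((A ⊔ K) ⊓ S) = A ⊓ S := by
          rw [← inf_assoc, inf_sup_self]
        have hKS : K ⊓ ((A ⊔ K) ⊓ S) = K ⊓ S := by
          rw [← inf_assoc, sup_comm, inf_sup_self]
        have := (hS.inf_sn hAK).le_sup_inf (hK.normalizes.mono hA.le)
          (by rw [hAS]; exact hS.inf_sn hA)
        rwa [hAS, hKS] at this
      exact h1.trans (sup_le (h2.trans (sup_le_sup_left (inf_le_inf_right S hKB) _)) le_sup_right)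

lemma SN.of_isSubnormal {H : Subgroup G} (h : _root_.IsSubnormal H) : SN H ⊤ := by
  obtain ⟨n, c, rfl, hn, hc⟩ := h
  rw [← hn]
  have key : ∀ i : Fin (n + 1), SN (c 0) (c i) := by
    intro i
    induction i using Fin.induction with
    | zero => exact SN.refl _
    | succ i ih => exact ih.trans (.of_normalIn (hc i))
  exact key _

end Meier

/-- **Meierfrankenfeld's Lemma**: if `H₁`, `H₂` are subnormal subgroups of a
finite group `G` and `S` is a Sylow `p`-subgroup of `G`, then
`⟨H₁, H₂⟩ ∩ S = ⟨H₁ ∩ S, H₂ ∩ S⟩`. -/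
theorem meierfrankenfeld {p : ℕ} [Fact p.Prime] {G : Type*} [Group G] [Finite G]
    (S : Sylow p G) (H₁ H₂ : Subgroup G)
    (h₁ : IsSubnormal H₁) (h₂ : IsSubnormal H₂) :
    (H₁ ⊔ H₂) ⊓ (S : Subgroup G) = (H₁ ⊓ (S : Subgroup G)) ⊔ (H₂ ⊓ (S : Subgroup G)) := by
  refine le_antisymm ?_
    (sup_le (inf_le_inf_right _ le_sup_left) (inf_le_inf_right _ le_sup_right))
  have hS : Meier.IsSyl p (S : Subgroup G) ⊤ :=
    ⟨le_top, S.2, by rw [Subgroup.relIndex_top_right]; exact S.not_dvd_index⟩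
  have hH₁ := Meier.SN.of_isSubnormal h₁
  have hH₂ := Meier.SN.of_isSubnormal h₂
  have h := Meier.le_sup_inf H₁ H₂ _ (hH₁.restrict le_sup_left le_top)
    (hH₂.restrict le_sup_right le_top) rfl (hS.inf_sn (hH₁.sup hH₂))
  exact h.trans (sup_le_sup (inf_le_inf_left _ inf_le_right) (inf_le_inf_left _ inf_le_right))
end

section
/- Let p be a prime, G a finite group, S a Sylow p-subgroup of G, and let H₁ and H₂ be subnormal subgroups of G. Then ⟨H₁, H₂⟩ is a subnormal subgroup of G and ⟨H₁, H₂⟩ ∩ S = ⟨H₁ ∩ S, H₂ ∩ S⟩. -/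
/-! ### Indices and subnormal subgroups -/

section Preliminaries

variable {G : Type*} [Group G]

open Subgroup

theorem card_mul_relIndex {H K : Subgroup G} (h : H ≤ K) :
    Nat.card H * H.relIndex K = Nat.card K := by
  rw [← relIndex_bot_left, relIndex_mul_relIndex ⊥ H K bot_le h, relIndex_bot_left]

theorem card_lt_of_ne_top [Finite G] {N : Subgroup G} (h : N ≠ ⊤) : Nat.card N < Nat.card G :=
  lt_of_le_of_ne (card_le_card_group N) fun he => h (eq_top_of_card_eq N he)

theorem relIndex_sup_left_of_le_normalizer {N Y : Subgroup G}
    (h : Y ≤ normalizer (N : Set G)) : N.relIndex (N ⊔ Y) = N.relIndex Y := by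
  have hn : (N.subgroupOf (N ⊔ Y)).Normal :=
    normal_subgroupOf_of_le_normalizer (sup_le le_normalizer h)
  have := relIndex_sup_left (K := N.subgroupOf (N ⊔ Y)) (H := Y.subgroupOf (N ⊔ Y))
  rwa [← subgroupOf_sup le_sup_left le_sup_right, relIndex_subgroupOf le_rfl,
    relIndex_subgroupOf le_sup_right] at this

/-- The second isomorphism theorem for indices: if `Y` normalizes `N`, then
`|NY : Y| = |N : N ∩ Y|`. -/
theorem relIndex_sup_of_le_normalizer [Finite G] {N Y : Subgroup G}
    (h : Y ≤ normalizer (N : Set G)) : Y.relIndex (N ⊔ Y) = Y.relIndex N := by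
  have e1 := relIndex_sup_left_of_le_normalizer h
  have c1 := card_mul_relIndex (le_sup_left : N ≤ N ⊔ Y)
  have c2 := card_mul_relIndex (le_sup_right : Y ≤ N ⊔ Y)
  have c3 := card_mul_relIndex (inf_le_left : N ⊓ Y ≤ N)
  have c4 := card_mul_relIndex (inf_le_right : N ⊓ Y ≤ Y)
  rw [inf_relIndex_left] at c3
  rw [inf_relIndex_right] at c4
  have hpos : 0 < Nat.card Y := Nat.card_pos
  apply Nat.eq_of_mul_eq_mul_left hpos
  rw [c2, ← c1, e1, ← c3, ← c4]
  ring

theorem relIndex_dvd_of_le_normalizer {D K L : Subgroup G} (hLK : L ≤ K)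
    (h : K ≤ normalizer (D : Set G)) : D.relIndex L ∣ D.relIndex K := by
  have hn : (D.subgroupOf K).Normal := by
    rw [normal_subgroupOf_iff_le_normalizer_inf]
    exact (le_inf h le_normalizer).trans inf_normalizer_le_normalizer_inf
  have := relIndex_dvd_index_of_normal (D.subgroupOf K) (L.subgroupOf K)
  rwa [relIndex_subgroupOf hLK] at this

theorem subnormal_of_le_normalizer {H K : Subgroup G} (hK : K.IsSubnormal) (hle : H ≤ K)
    (h : K ≤ normalizer (H : Set G)) : H.IsSubnormal :=
  .step _ _ hle hK (normal_subgroupOf_of_le_normalizer h)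

/-- The index form of the fact that a Sylow `p`-subgroup of `G` meets every subnormal subgroup in a
Sylow `p`-subgroup; it holds for every subgroup `S` of index prime to `p`. -/
theorem not_dvd_relIndex_of_subnormal [Finite G] {p : ℕ} {S H : Subgroup G}
    (hH : H.IsSubnormal) (hS : ¬ p ∣ S.index) : ¬ p ∣ S.relIndex H := by
  induction hH with
  | top => simpa using hS
  | step H K hle hK hN ih =>
    have hHK := (normal_subgroupOf_iff_le_normalizer hle).1 hN
    intro hd
    apply ih
    have h1 : (S ⊓ K).relIndex (H ⊔ S ⊓ K) = (S ⊓ K).relIndex H :=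
      relIndex_sup_of_le_normalizer (inf_le_right.trans hHK)
    have h2 : (S ⊓ K).relIndex H = S.relIndex H := by
      rw [← inf_relIndex_right (S ⊓ K), inf_assoc, inf_eq_right.2 hle, inf_relIndex_right]
    have h3 := relIndex_mul_relIndex (S ⊓ K) (H ⊔ S ⊓ K) K le_sup_right (sup_le hle inf_le_right)
    rw [inf_relIndex_right, h1, h2] at h3
    rw [← h3]
    exact hd.mul_right _

/-- If the index of `P` in `Y` is prime to `p`, then `P` is not properly contained in any
`p`-subgroup of `Y`. -/
theorem le_of_not_dvd_relIndex [Finite G] {p : ℕ} [Fact p.Prime] {P Q Y : Subgroup G}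
    (hPQ : P ≤ Q) (hQY : Q ≤ Y) (hQ : IsPGroup p Q) (h : ¬ p ∣ P.relIndex Y) : Q ≤ P := by
  rw [← relIndex_eq_one]
  obtain ⟨n, hn⟩ := hQ.index (P.subgroupOf Q)
  change P.relIndex Q = p ^ n at hn
  rcases Nat.eq_zero_or_pos n with rfl | hpos
  · simpa using hn
  · exfalso
    apply h
    rw [← relIndex_mul_relIndex P Q Y hPQ hQY, hn]
    exact (dvd_pow_self p hpos.ne').mul_right _

theorem conj_mem_normalizer_map {H : Subgroup G} {x g : G} :
    x ∈ normalizer ((H.map (MulAut.conj g).toMonoidHom : Subgroup G) : Set G) ↔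
      g⁻¹ * x * g ∈ normalizer (H : Set G) := by
  rw [← map_equiv_normalizer_eq]
  constructor
  · rintro ⟨y, hy, rfl⟩
    simpa [mul_assoc] using hy
  · intro h
    exact ⟨_, h, by simp [mul_assoc]⟩

theorem subnormal_conj {H : Subgroup G} (hH : H.IsSubnormal) (g : G) :
    (H.map (MulAut.conj g).toMonoidHom).IsSubnormal :=
  hH.map (MulAut.conj g).surjective

end Preliminaries

/-! ### Minimal normal subgroups and Wielandt's join theorem -/

section Minimal

variable {G : Type*} [Group G]

/-- `M` is a minimal normal subgroup of `G`. -/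
def IsMinNormal (M : Subgroup G) : Prop :=
  M.Normal ∧ M ≠ ⊥ ∧ ∀ N : Subgroup G, N.Normal → N ≤ M → N ≠ ⊥ → N = M

theorem exists_isMinNormal_le [Finite G] {N : Subgroup G} (hN : N.Normal) (h : N ≠ ⊥) :
    ∃ M, IsMinNormal M ∧ M ≤ N := by
  obtain ⟨M, hMN, hM⟩ := exists_minimal_le_of_wellFoundedLT
    (fun X : Subgroup G => X.Normal ∧ X ≠ ⊥) N ⟨hN, h⟩
  exact ⟨M, ⟨hM.prop.1, hM.prop.2, fun X hX hXM hXb => le_antisymm hXM (hM.le_of_le ⟨hX, hXb⟩ hXM)⟩,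
    hMN⟩

theorem IsMinNormal.eq_bot_or_le {M : Subgroup G} (hM : IsMinNormal M) {N : Subgroup G}
    (hN : N.Normal) : M ⊓ N = ⊥ ∨ M ≤ N := by
  have := hM.1
  by_cases h : M ⊓ N = ⊥
  · exact Or.inl h
  · exact Or.inr (inf_eq_left.1 (hM.2.2 _ inferInstance inf_le_left h))

end Minimal

open Subgroup in
/-- Wielandt: minimal normal subgroups of a finite group normalize all subnormal subgroups. -/
theorem IsMinNormal.le_normalizer_of_subnormal : ∀ (n : ℕ) {G : Type*} [Group G] [Finite G],
    Nat.card G = n → ∀ {M H : Subgroup G}, IsMinNormal M → H.IsSubnormal →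
      M ≤ normalizer (H : Set G) := by
  intro n
  induction n using Nat.strong_induction_on with
  | _ n ih =>
  intro G _ _ hn M H hM hH
  obtain rfl | ⟨N, hN, hHN, hNt⟩ := hH.lt_normal
  · rw [normalizer_eq_top]; exact le_top
  have hMn := hM.1
  obtain hb | hMN := hM.eq_bot_or_le hN
  · intro m hm
    rw [mem_normalizer_iff]
    -- `M` and `N` intersect trivially, hence commute
    have key : ∀ h ∈ N, m * h * m⁻¹ = h := fun h hh => by
      rw [(commute_of_normal_of_disjoint M N hMn hN (disjoint_iff.2 hb) m h hm hh).eq]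
      simp
    intro h
    constructor
    · intro hh
      rwa [key h (hHN hh)]
    · intro hh
      have h1 := hN.conj_mem _ (hHN hh) m⁻¹
      have h2 : h ∈ N := by simpa [mul_assoc] using h1
      rwa [key h h2] at hh
  · have hb' : M.subgroupOf N ≠ ⊥ := by
      rw [Ne, subgroupOf_eq_bot, disjoint_iff, inf_eq_left.2 hMN]
      exact hM.2.1
    obtain ⟨X, hX, hXM⟩ := exists_isMinNormal_le (N := M.subgroupOf N) inferInstance hb'
    have hcard : Nat.card N < n := hn ▸ card_lt_of_ne_top hNt.ne
    -- the part of `M` normalizing all conjugates of `H` is normal and contains `X`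
    have hle : M ≤ (normalizer (H : Set G)).normalCore := by
      have : (M ⊓ (normalizer (H : Set G)).normalCore) = M := by
        refine hM.2.2 _ inferInstance inf_le_left fun hbot => hX.2.1 ?_
        rw [eq_bot_iff]
        intro x hx
        have hxG : (x : G) ∈ M ⊓ (normalizer (H : Set G)).normalCore := by
          refine ⟨hXM hx, fun g => ?_⟩
          have hs := subnormal_conj hH g⁻¹
          have hle : H.map (MulAut.conj g⁻¹).toMonoidHom ≤ N := by
            rintro _ ⟨h, hh, rfl⟩
            exact hN.conj_mem _ (hHN hh) _
          have := ih _ hcard (G := N) rfl hX (hs.subgroupOf (K := N)) hx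
          rw [← subgroupOf_normalizer_eq hle, mem_subgroupOf, conj_mem_normalizer_map] at this
          simpa using this
        rw [hbot, mem_bot] at hxG
        simpa using hxG
      exact inf_eq_left.1 this
    exact hle.trans (normalCore_le _)

theorem IsMinNormal.le_normalizer {G : Type*} [Group G] [Finite G] {M H : Subgroup G}
    (hM : IsMinNormal M) (hH : H.IsSubnormal) : M ≤ Subgroup.normalizer (H : Set G) :=
  IsMinNormal.le_normalizer_of_subnormal _ rfl hM hH

theorem card_quotient_lt {G : Type*} [Group G] [Finite G] {M : Subgroup G} (h : M ≠ ⊥) :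
    Nat.card (G ⧸ M) < Nat.card G := by
  have h1 := M.card_eq_card_quotient_mul_card_subgroup
  have h2 : 1 < Nat.card M := Subgroup.one_lt_card_iff_ne_bot M |>.2 h
  have h3 : 0 < Nat.card (G ⧸ M) := Nat.card_pos
  nlinarith

open Subgroup in
/-- Wielandt's join theorem, by induction on the order: modulo a minimal normal subgroup `M` the
join is subnormal, and `M` normalizes both factors. -/
theorem subnormal_sup_aux : ∀ (n : ℕ) {G : Type*} [Group G] [Finite G],
    Nat.card G = n → ∀ {H K : Subgroup G}, H.IsSubnormal → K.IsSubnormal →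
      (H ⊔ K).IsSubnormal := by
  intro n
  induction n using Nat.strong_induction_on with
  | _ n ih =>
  intro G _ _ hn H K hH hK
  by_cases ht : (⊤ : Subgroup G) = ⊥
  · have : H ⊔ K = ⊤ := by rw [eq_top_iff, ht]; exact bot_le
    rw [this]
    exact .top
  obtain ⟨M, hM, -⟩ := exists_isMinNormal_le (inferInstance : (⊤ : Subgroup G).Normal) ht
  have hMn := hM.1
  have hlt : Nat.card (G ⧸ M) < n := hn ▸ card_quotient_lt hM.2.1
  have h1 := (ih _ hlt rfl (hH.quotient (K := M)) (hK.quotient (K := M))).comap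
    (QuotientGroup.mk' M)
  rw [← Subgroup.map_sup, QuotientGroup.comap_map_mk'] at h1
  refine subnormal_of_le_normalizer h1 le_sup_right (sup_le ?_ le_normalizer)
  intro m hm
  have hmH := hM.le_normalizer hH hm
  have hmK := hM.le_normalizer hK hm
  rw [mem_normalizer_iff_map_conj_eq] at hmH hmK ⊢
  rw [Subgroup.map_sup, hmH, hmK]

theorem subnormal_sup {G : Type*} [Group G] [Finite G] {H K : Subgroup G}
    (hH : H.IsSubnormal) (hK : K.IsSubnormal) : (H ⊔ K).IsSubnormal :=
  subnormal_sup_aux _ rfl hH hK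

/-! ### The residual `O^p` -/

section Residual

open Subgroup

variable {G : Type*} [Group G]

/-- The residual `O^p(H)` of a finite subgroup `H`, the smallest normal subgroup of `H` whose
quotient is a `p`-group, encoded as the subgroup generated by the `p'`-elements of `H`. -/
def pResidual (p : ℕ) (H : Subgroup G) : Subgroup G :=
  closure {x | x ∈ H ∧ ¬ p ∣ orderOf x}

theorem mem_pResidual {p : ℕ} {H : Subgroup G} {x : G} (hx : x ∈ H) (h : ¬ p ∣ orderOf x) :
    x ∈ pResidual p H :=
  subset_closure ⟨hx, h⟩

theorem pResidual_le_iff {p : ℕ} {H K : Subgroup G} :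
    pResidual p H ≤ K ↔ ∀ x ∈ H, ¬ p ∣ orderOf x → x ∈ K := by
  rw [pResidual, closure_le]
  exact ⟨fun h x hx hp => h ⟨hx, hp⟩, fun h x hx => h x hx.1 hx.2⟩

theorem pResidual_le (p : ℕ) (H : Subgroup G) : pResidual p H ≤ H :=
  pResidual_le_iff.2 fun _ hx _ => hx

theorem pResidual_mono (p : ℕ) {H K : Subgroup G} (h : H ≤ K) : pResidual p H ≤ pResidual p K :=
  pResidual_le_iff.2 fun _ hx hp => mem_pResidual (h hx) hp

theorem pResidual_pResidual (p : ℕ) (H : Subgroup G) :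
    pResidual p (pResidual p H) = pResidual p H :=
  le_antisymm (pResidual_le _ _)
    (pResidual_le_iff.2 fun _ hx hp => mem_pResidual (mem_pResidual hx hp) hp)

theorem pResidual_conj (p : ℕ) (H : Subgroup G) (g : G) :
    pResidual p (H.map (MulAut.conj g).toMonoidHom) =
      (pResidual p H).map (MulAut.conj g).toMonoidHom := by
  apply le_antisymm
  · rw [pResidual_le_iff]
    rintro _ ⟨x, hx, rfl⟩ hp
    refine ⟨x, mem_pResidual hx ?_, rfl⟩
    rwa [MulEquiv.coe_toMonoidHom, MulEquiv.orderOf_eq] at hp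
  · rw [map_le_iff_le_comap, pResidual_le_iff]
    intro x hx hp
    refine mem_pResidual ⟨x, hx, rfl⟩ ?_
    rwa [MulEquiv.coe_toMonoidHom, MulEquiv.orderOf_eq]

theorem normalizer_le_normalizer_pResidual (p : ℕ) (H : Subgroup G) :
    normalizer (H : Set G) ≤ normalizer (pResidual p H : Set G) := by
  intro g hg
  rw [mem_normalizer_iff_map_conj_eq] at hg ⊢
  have := pResidual_conj p H g
  rw [show H.map (MulAut.conj g).toMonoidHom = H from hg] at this
  exact this.symm

theorem le_normalizer_pResidual (p : ℕ) (H : Subgroup G) :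
    H ≤ normalizer (pResidual p H : Set G) :=
  le_normalizer.trans (normalizer_le_normalizer_pResidual p H)

theorem subnormal_pResidual (p : ℕ) {H : Subgroup G} (hH : H.IsSubnormal) :
    (pResidual p H).IsSubnormal :=
  subnormal_of_le_normalizer hH (pResidual_le p H) (le_normalizer_pResidual p H)

/-- A proper subnormal subgroup `H` of `J` and a `J`-conjugate of it generate a proper subgroup,
since both lie in a proper normal subgroup of `J`. -/
theorem sup_conj_lt {H J : Subgroup G} (hH : H.IsSubnormal) (hle : H ≤ J) (hne : H ≠ J) {g : G}
    (hg : g ∈ J) : H ⊔ H.map (MulAut.conj g).toMonoidHom < J := by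
  obtain ht | ⟨N, hN, hHN, hNt⟩ := (hH.subgroupOf (K := J)).lt_normal
  · exact absurd (le_antisymm hle (subgroupOf_eq_top.1 ht)) hne
  have key : H ⊔ H.map (MulAut.conj g).toMonoidHom ≤ N.map J.subtype := by
    refine sup_le (fun h hh => ⟨⟨h, hle hh⟩, hHN hh, rfl⟩) ?_
    rintro _ ⟨h, hh, rfl⟩
    exact ⟨⟨g, hg⟩ * ⟨h, hle hh⟩ * ⟨g, hg⟩⁻¹, hN.conj_mem _ (hHN hh) _, rfl⟩
  refine lt_of_le_of_lt key (lt_of_le_of_ne (map_subtype_le N) fun he => hNt.ne ?_)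
  apply map_injective J.subtype_injective
  rw [he, ← MonoidHom.range_eq_map, range_subtype]

variable [Finite G] {p : ℕ} [hp : Fact p.Prime]

/-- `H / O^p(H)` is a `p`-group. -/
theorem relIndex_pResidual (H : Subgroup G) : ∃ k, (pResidual p H).relIndex H ∣ p ^ k := by
  have hn : ((pResidual p H).subgroupOf H).Normal :=
    normal_subgroupOf_of_le_normalizer (le_normalizer_pResidual p H)
  have hP : IsPGroup p (H ⧸ (pResidual p H).subgroupOf H) := by
    rw [isPGroup_iff_pow_pow_eq_one]
    intro q
    obtain ⟨x, rfl⟩ := QuotientGroup.mk_surjective q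
    -- raising `x` to the `p`-part of its order yields a `p'`-element
    refine ⟨(orderOf x).factorization p, ?_⟩
    rw [← QuotientGroup.mk_pow, QuotientGroup.eq_one_iff, mem_subgroupOf]
    refine mem_pResidual (x ^ _).2 ?_
    rw [orderOf_coe, orderOf_pow, Nat.gcd_eq_right (Nat.ordProj_dvd _ _)]
    exact Nat.not_dvd_ordCompl hp.out (orderOf_pos x).ne'
  obtain ⟨k, hk⟩ := IsPGroup.iff_card.1 hP
  exact ⟨k, by rw [← hk]; exact dvd_rfl⟩

omit [Finite G] in
/-- If `D` is subnormal in `G` and `|E : D ∩ E|` is a power of `p`, then `D` contains every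
`p'`-element of `E`: descend along the subnormal series of `D`. -/
theorem pResidual_le_of_relIndex {D E : Subgroup G} (hD : D.IsSubnormal) {k : ℕ}
    (h : D.relIndex E ∣ p ^ k) : pResidual p E ≤ D := by
  rw [pResidual_le_iff]
  intro x hx hxp
  induction hD with
  | top => exact mem_top x
  | step D K hle hK hN ih =>
    have hxK := ih ((relIndex_dvd_of_le_left E hle).trans h)
    have hnorm := (normal_subgroupOf_iff_le_normalizer hle).1 hN
    have h1 : D.relIndex (K ⊓ E) ∣ p ^ k := by
      refine dvd_trans ⟨K.relIndex E, ?_⟩ h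
      rw [relIndex_inf_mul_relIndex, inf_eq_left.2 hle]
    have h2 : D.relIndex (zpowers x) ∣ D.relIndex (K ⊓ E) :=
      relIndex_dvd_of_le_normalizer (by simpa using ⟨hxK, hx⟩) (inf_le_left.trans hnorm)
    have h3 : D.relIndex (zpowers x) ∣ orderOf x := by
      rw [← Nat.card_zpowers]; exact relIndex_dvd_card _ _
    have hco : Nat.Coprime (orderOf x) (p ^ k) :=
      (((Nat.Prime.coprime_iff_not_dvd hp.out).2 hxp).symm).pow_right k
    have h4 := Nat.eq_one_of_dvd_coprimes hco h3 (h2.trans h1)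
    rw [relIndex_eq_one] at h4
    exact h4 (mem_zpowers x)

theorem mem_normalizer_of_map_conj_le {H : Subgroup G} {g : G}
    (h : H.map (MulAut.conj g).toMonoidHom ≤ H) : g ∈ normalizer (H : Set G) := by
  rw [mem_normalizer_iff_map_conj_eq]
  refine eq_of_le_of_card_ge h (le_of_eq ?_)
  exact (Nat.card_congr (H.equivMapOfInjective _ (MulAut.conj g).injective).toEquiv)

/-- The step of `pResidual_sup_le` for maximal pairs: no subnormal subgroup of `G` inside `J` that
properly contains `H` or `K` has its residual inside `D`. Maximality makes `H` and `K` absorb `D`,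
so both residuals equal `D`, and then `K` normalizes `H`. -/
theorem pResidual_sup_le_of_maximal {H K D J : Subgroup G} (hJ : H ⊔ K = J)
    (hH : H.IsSubnormal) (hK : K.IsSubnormal) (hD : pResidual p H ⊔ pResidual p K = D)
    (ih : ∀ X Y : Subgroup G, X.IsSubnormal → Y.IsSubnormal → X ⊔ Y < J →
      pResidual p (X ⊔ Y) ≤ pResidual p X ⊔ pResidual p Y)
    (mH : ∀ X : Subgroup G, X.IsSubnormal → H ≤ X → X ≤ J → pResidual p X ≤ D → X ≤ H)
    (mK : ∀ X : Subgroup G, X.IsSubnormal → K ≤ X → X ≤ J → pResidual p X ≤ D → X ≤ K) :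
    pResidual p J ≤ D := by
  have hHJ : H ≤ J := hJ ▸ le_sup_left
  have hKJ : K ≤ J := hJ ▸ le_sup_right
  have hAD : pResidual p H ≤ D := hD ▸ le_sup_left
  have hBD : pResidual p K ≤ D := hD ▸ le_sup_right
  have hDs : D.IsSubnormal :=
    hD ▸ subnormal_sup (subnormal_pResidual p hH) (subnormal_pResidual p hK)
  -- conjugating elements which keep the residual inside `D` normalize the subgroup, by maximality
  have conj : ∀ Z : Subgroup G, Z.IsSubnormal → Z ≤ J → Z ≠ J → pResidual p Z ≤ D →
      (∀ X : Subgroup G, X.IsSubnormal → Z ≤ X → X ≤ J → pResidual p X ≤ D → X ≤ Z) →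
      ∀ g ∈ J, (pResidual p Z).map (MulAut.conj g).toMonoidHom ≤ D →
        g ∈ normalizer (Z : Set G) := by
    intro Z hZ hZJ hne hZD mZ g hg hgD
    have hlt := sup_conj_lt hZ hZJ hne hg
    refine mem_normalizer_of_map_conj_le (le_sup_right.trans
      (mZ _ (subnormal_sup hZ (subnormal_conj hZ g)) le_sup_left hlt.le ?_))
    refine (ih _ _ hZ (subnormal_conj hZ g) hlt).trans (sup_le hZD ?_)
    rwa [pResidual_conj]
  by_cases hH1 : H = J
  · rwa [← hH1]
  by_cases hK1 : K = J
  · rwa [← hK1]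
  have conjD : ∀ Z : Subgroup G, pResidual p Z ≤ D → ∀ g ∈ D,
      (pResidual p Z).map (MulAut.conj g).toMonoidHom ≤ D := by
    rintro Z hZ g hg _ ⟨x, hx, rfl⟩
    exact D.mul_mem (D.mul_mem hg (hZ hx)) (D.inv_mem hg)
  have hDJ : D ≤ J :=
    hD ▸ sup_le ((pResidual_le p H).trans hHJ) ((pResidual_le p K).trans hKJ)
  -- hence `D` normalizes both subgroups, and lies in both
  have absorb : ∀ Z : Subgroup G, Z.IsSubnormal → Z ≤ J → Z ≠ J → pResidual p Z ≤ D →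
      (∀ X : Subgroup G, X.IsSubnormal → Z ≤ X → X ≤ J → pResidual p X ≤ D → X ≤ Z) →
      D ≤ Z := by
    intro Z hZ hZJ hne hZD mZ
    have hDn : D ≤ normalizer (Z : Set G) := fun g hg =>
      conj Z hZ hZJ hne hZD mZ g (hDJ hg) (conjD Z hZD g hg)
    obtain ⟨k, hk⟩ := relIndex_pResidual (p := p) Z
    have h1 : D.relIndex (Z ⊔ D) ∣ p ^ k := by
      rw [relIndex_sup_of_le_normalizer hDn]
      exact (relIndex_dvd_of_le_left Z hZD).trans hk
    exact le_sup_right.trans (mZ _ (subnormal_sup hZ hDs) le_sup_left (sup_le hZJ hDJ)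
      (pResidual_le_of_relIndex hDs h1))
  have hDH := absorb H hH hHJ hH1 hAD mH
  have hDK := absorb K hK hKJ hK1 hBD mK
  have hDD : pResidual p D = D := by
    refine le_antisymm (pResidual_le _ _) ?_
    conv_lhs => rw [← hD]
    exact sup_le (by rw [← pResidual_pResidual]; exact pResidual_mono p hAD)
      (by rw [← pResidual_pResidual]; exact pResidual_mono p hBD)
  have hA : pResidual p H = D := le_antisymm hAD (hDD ▸ pResidual_mono p hDH)
  have hB : pResidual p K = D := le_antisymm hBD (hDD ▸ pResidual_mono p hDK)
  -- now both residuals equal `D`, so `K` normalizes `H`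
  have hKn : K ≤ normalizer (H : Set G) := by
    intro g hg
    refine conj H hH hHJ hH1 hAD mH g (hKJ hg) ?_
    rw [hA, ← hB, ← pResidual_conj,
      show K.map (MulAut.conj g).toMonoidHom = K from
        mem_normalizer_iff_map_conj_eq.1 (le_normalizer hg)]
  obtain ⟨k, hk⟩ := relIndex_pResidual (p := p) K
  have h1 : H.relIndex J ∣ p ^ k := by
    rw [← hJ, relIndex_sup_left_of_le_normalizer hKn]
    exact (relIndex_dvd_of_le_left K (hB.trans_le hDH)).trans hk
  have := pResidual_mono p (pResidual_le_of_relIndex hH h1)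
  rwa [pResidual_pResidual, hA] at this

/-- Wielandt: `O^p(⟨H, K⟩) = ⟨O^p(H), O^p(K)⟩` for subnormal `H`, `K`; this is the nontrivial
inclusion. By induction on `⟨H, K⟩`,
after enlarging `H` and `K` as far as their residuals stay inside the right-hand side. -/
theorem pResidual_sup_le {H K : Subgroup G} (hH : H.IsSubnormal) (hK : K.IsSubnormal) :
    pResidual p (H ⊔ K) ≤ pResidual p H ⊔ pResidual p K := by
  obtain ⟨J, hJ⟩ : ∃ J, H ⊔ K = J := ⟨_, rfl⟩
  induction J using WellFoundedLT.induction generalizing H K with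
  | _ J ih =>
  obtain ⟨D, hD⟩ : ∃ D, pResidual p H ⊔ pResidual p K = D := ⟨_, rfl⟩
  have hHJ : H ≤ J := hJ ▸ le_sup_left
  have hKJ : K ≤ J := hJ ▸ le_sup_right
  have ext : ∀ Z : Subgroup G, Z.IsSubnormal → Z ≤ J → pResidual p Z ≤ D →
      ∃ Y : Subgroup G, Z ≤ Y ∧ Y.IsSubnormal ∧ Y ≤ J ∧ pResidual p Y ≤ D ∧
        ∀ X : Subgroup G, X.IsSubnormal → Y ≤ X → X ≤ J → pResidual p X ≤ D → X ≤ Y := by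
    intro Z h1 h2 h3
    obtain ⟨Y, hZY, hY⟩ := exists_maximal_ge_of_wellFoundedGT
      (fun X : Subgroup G => X.IsSubnormal ∧ X ≤ J ∧ pResidual p X ≤ D) Z ⟨h1, h2, h3⟩
    exact ⟨Y, hZY, hY.prop.1, hY.prop.2.1, hY.prop.2.2,
      fun X a b c d => hY.le_of_ge ⟨a, c, d⟩ b⟩
  obtain ⟨H', hHH', sH, hHJ', hHD, mH⟩ := ext H hH hHJ (hD ▸ le_sup_left)
  obtain ⟨K', hKK', sK, hKJ', hKD, mK⟩ := ext K hK hKJ (hD ▸ le_sup_right)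
  rw [hD, hJ]
  refine pResidual_sup_le_of_maximal (H := H') (K := K')
    (le_antisymm (sup_le hHJ' hKJ') (hJ ▸ sup_le_sup hHH' hKK')) sH sK
    (le_antisymm (sup_le hHD hKD)
      (hD ▸ sup_le_sup (pResidual_mono p hHH') (pResidual_mono p hKK')))
    (fun X Y hX hY hlt => ih _ hlt hX hY rfl) mH mK

end Residual

/-! ### Sylow subgroups of joins -/

section Sylow

open Subgroup

variable {G : Type*} [Group G] [Finite G] {p : ℕ}

theorem not_dvd_relIndex_of_subnormal_subgroupOf {P H X : Subgroup G} (hXH : X ≤ H)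
    (hX : (X.subgroupOf H).IsSubnormal) (h : ¬ p ∣ P.relIndex H) : ¬ p ∣ P.relIndex X := by
  have := not_dvd_relIndex_of_subnormal hX (S := P.subgroupOf H) h
  rwa [relIndex_subgroupOf hXH] at this

variable [hp : Fact p.Prime]

/-- If `T` meets `L₁` and `L₂`, both normal in `L₁ L₂`, in subgroups of index prime to `p`, then it
also meets `L₁ L₂` in one. -/
theorem not_dvd_relIndex_sup {T L₁ L₂ : Subgroup G} (h₁ : L₁ ⊔ L₂ ≤ normalizer (L₁ : Set G))
    (h₂ : L₁ ⊔ L₂ ≤ normalizer (L₂ : Set G)) (hT₁ : ¬ p ∣ T.relIndex L₁)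
    (hT₂ : ¬ p ∣ T.relIndex L₂) : ¬ p ∣ T.relIndex (L₁ ⊔ L₂) := by
  obtain ⟨M, hM⟩ : ∃ M, L₁ ⊔ L₂ = M := ⟨_, rfl⟩
  rw [hM] at h₁ h₂ ⊢
  have hL₁ : L₁ ≤ M := hM ▸ le_sup_left
  have hL₂ : L₂ ≤ M := hM ▸ le_sup_right
  -- with `Y = T ∩ M`, factor `|M : Y| = |M : L₁ Y| |L₁ Y : Y|`
  obtain ⟨Y, hY⟩ : ∃ Y, T ⊓ M = Y := ⟨_, rfl⟩
  have hYM : Y ≤ M := hY ▸ inf_le_right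
  have e : ∀ L ≤ M, Y.relIndex L = T.relIndex L := fun L hL => by
    rw [← hY, ← inf_relIndex_right (T ⊓ M), inf_assoc, inf_eq_right.2 hL, inf_relIndex_right]
  have hZ : L₁ ⊔ Y ≤ M := sup_le hL₁ hYM
  have e1 : Y.relIndex (L₁ ⊔ Y) = T.relIndex L₁ := by
    rw [relIndex_sup_of_le_normalizer (hYM.trans h₁), e _ hL₁]
  have e2 : (L₁ ⊔ Y).relIndex M = (L₁ ⊔ Y).relIndex L₂ := by
    rw [← relIndex_sup_of_le_normalizer (hZ.trans h₂)]
    congr 1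
    refine le_antisymm ?_ (sup_le hL₂ hZ)
    rw [← hM]
    exact sup_le (le_sup_left.trans le_sup_right) le_sup_left
  rw [← e M le_rfl, ← relIndex_mul_relIndex Y (L₁ ⊔ Y) M le_sup_right hZ, e1, e2, hp.out.dvd_mul]
  rintro (h | h)
  · exact hT₁ h
  · exact hT₂ (e L₂ hL₂ ▸ h.trans (relIndex_dvd_of_le_left L₂ le_sup_right))

/-- A special case of Gaschütz's theorem, by transfer: in a group with `O^p(G) = G`, a central
`p`-subgroup that splits off from a Sylow `p`-subgroup is trivial. -/
theorem eq_bot_of_central_of_disjoint {T M : Subgroup G} (hG : pResidual p (⊤ : Subgroup G) = ⊤)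
    (hMc : M ≤ center G) (hMp : IsPGroup p M) (hTp : IsPGroup p T) (hTM : T ⊓ M = ⊥)
    (hi : ¬ p ∣ (T ⊔ M).index) : M = ⊥ := by
  obtain ⟨Y, hY⟩ : ∃ Y, T ⊔ M = Y := ⟨_, rfl⟩
  have hMn : M.Normal := ⟨fun m hm g => by
    rw [mem_center_iff.1 (hMc hm) g]; simpa using hm⟩
  have hYp : IsPGroup p Y := hY ▸ hTp.to_sup_of_normal_right hMp
  rw [hY] at hi
  -- the transfer `V` into the abelian `p`-group `Y / [Y, Y]` is trivial
  let V : G →* Abelianization Y := MonoidHom.transfer (Abelianization.of (G := Y))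
  have hAp : IsPGroup p (Abelianization Y) :=
    hYp.of_surjective Abelianization.of (QuotientGroup.mk'_surjective _)
  have hV : ∀ g, V g = 1 := by
    have : pResidual p (⊤ : Subgroup G) ≤ V.ker := by
      rw [pResidual_le_iff]
      intro g _ hg
      rw [MonoidHom.mem_ker]
      by_contra hne
      exact hg ((hAp.dvd_orderOf hne).trans (orderOf_map_dvd V g))
    intro g
    rw [hG] at this
    exact this (mem_top g)
  -- `[Y, Y] ≤ T`, because `Y = TM` with `M` central
  have hcomm : ∀ y ∈ commutator Y, (y : G) ∈ T := by
    have : commutator Y ≤ T.subgroupOf Y := by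
      rw [commutator_def, commutator_le]
      rintro ⟨a, ha⟩ - ⟨b, hb⟩ -
      rw [← hY, mem_sup_of_normal_right] at ha hb
      obtain ⟨t, ht, m, hm, rfl⟩ := ha
      obtain ⟨u, hu, n, hn, rfl⟩ := hb
      have cm := mem_center_iff.1 (hMc hm)
      have cn := mem_center_iff.1 (hMc hn)
      have e1 : t * m * (u * n) = t * u * (m * n) := by
        rw [mul_assoc t m, ← mul_assoc m, ← cm u]; simp only [mul_assoc]
      have e2 : u * n * (t * m) = u * t * (m * n) := by
        rw [mul_assoc u n, ← mul_assoc n, ← cn t, mul_assoc t n, cm n]; simp only [mul_assoc]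
      rw [mem_subgroupOf]
      change t * m * (u * n) * (t * m)⁻¹ * (u * n)⁻¹ ∈ T
      have e3 : t * m * (u * n) * (t * m)⁻¹ * (u * n)⁻¹ = t * u * t⁻¹ * u⁻¹ := by
        rw [mul_assoc _ (t * m)⁻¹, ← mul_inv_rev, e1, e2]
        group
      rw [e3]
      exact T.mul_mem (T.mul_mem (T.mul_mem ht hu) (T.inv_mem ht)) (T.inv_mem hu)
    exact fun y hy => this hy
  rw [eq_bot_iff]
  intro m hm
  have hkey := MonoidHom.transfer_eq_pow (Abelianization.of (G := Y)) m (fun k g₀ _ => by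
    have : m ^ k ∈ center G := (center G).pow_mem (hMc hm) k
    rw [mul_assoc, ← mem_center_iff.1 this g₀, inv_mul_cancel_left])
  have h1 : m ^ Y.index ∈ T :=
    hcomm _ ((QuotientGroup.eq_one_iff _).1 (hkey.symm.trans (hV m)))
  have h2 : m ^ Y.index ∈ T ⊓ M := ⟨h1, M.pow_mem hm _⟩
  rw [hTM, mem_bot] at h2
  rw [mem_bot]
  by_contra hne
  have h3 : p ∣ orderOf (⟨m, hm⟩ : M) := hMp.dvd_orderOf (by simpa [Subtype.ext_iff] using hne)
  rw [orderOf_mk] at h3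
  exact hi (h3.trans (orderOf_dvd_of_pow_eq_one h2))

omit [Finite G] in
/-- If `G = ⟨H₁, H₂⟩` and `M` is a minimal normal subgroup normalizing `H₁` and `H₂`, then either
`M` is generated by its intersections with them, or `M` is central. -/
theorem IsMinNormal.sup_eq_or_le_center {M H₁ H₂ : Subgroup G} (hM : IsMinNormal M)
    (h₁ : M ≤ normalizer (H₁ : Set G)) (h₂ : M ≤ normalizer (H₂ : Set G)) (h : H₁ ⊔ H₂ = ⊤) :
    (H₁ ⊓ M) ⊔ (H₂ ⊓ M) = M ∨ M ≤ center G := by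
  have hMn := hM.1
  have comm : ∀ H : Subgroup G, M ≤ normalizer (H : Set G) → ∀ a ∈ H, ∀ m ∈ M,
      a * m * a⁻¹ * m⁻¹ ∈ H ⊓ M := by
    intro H hH a ha m hm
    refine ⟨?_, M.mul_mem (hMn.conj_mem m hm a) (M.inv_mem hm)⟩
    have : a * (m * a⁻¹ * m⁻¹) ∈ H :=
      H.mul_mem ha ((mem_normalizer_iff.1 (hH hm) _).1 (H.inv_mem ha))
    simpa [mul_assoc] using this
  obtain ⟨L, hL⟩ : ∃ L, (H₁ ⊓ M) ⊔ (H₂ ⊓ M) = L := ⟨_, rfl⟩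
  have hLM : L ≤ M := hL ▸ sup_le inf_le_right inf_le_right
  have norm : ∀ H : Subgroup G, M ≤ normalizer (H : Set G) → H ⊓ M ≤ L →
      H ≤ normalizer (L : Set G) := by
    intro H hH hHL
    rw [le_normalizer_iff]
    intro a ha m hm
    simpa using L.mul_mem (hHL (comm H hH a ha m (hLM hm))) hm
  have hLn : L.Normal := by
    rw [← normalizer_eq_top_iff, eq_top_iff, ← h]
    exact sup_le (norm H₁ h₁ (hL ▸ le_sup_left)) (norm H₂ h₂ (hL ▸ le_sup_right))
  rw [hL]
  by_cases hb : L = ⊥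
  · -- the commutators of `M` with `H₁` and `H₂` lie in `L`, so `L = ⊥` makes `M` central
    right
    have cent : ∀ H : Subgroup G, M ≤ normalizer (H : Set G) → H ⊓ M ≤ L →
        H ≤ centralizer (M : Set G) := by
      intro H hH hHL a ha
      rw [mem_centralizer_iff]
      intro m hm
      have := hHL (comm H hH a ha m hm)
      rw [hb, mem_bot, mul_inv_eq_one, mul_inv_eq_iff_eq_mul] at this
      exact this.symm
    have hc : (⊤ : Subgroup G) ≤ centralizer (M : Set G) := by
      rw [← h]
      exact sup_le (cent H₁ h₁ (hL ▸ le_sup_left)) (cent H₂ h₂ (hL ▸ le_sup_right))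
    intro m hm
    rw [mem_center_iff]
    exact fun g => ((mem_centralizer_iff.1 (hc (mem_top g))) m hm).symm
  · exact Or.inl (hM.2.2 L hLn hLM hb)

omit [Finite G] in
theorem normal_of_le_center {N : Subgroup G} (h : N ≤ center G) : N.Normal :=
  ⟨fun n hn g => by rw [mem_center_iff.1 (h hn) g]; simpa using hn⟩

theorem IsMinNormal.isPGroup_of_le_center {M : Subgroup G} (hM : IsMinNormal M)
    (hc : M ≤ center G) (hd : p ∣ Nat.card M) : IsPGroup p M := by
  obtain ⟨x, hx⟩ := exists_prime_orderOf_dvd_card' p hd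
  have hle : zpowers (x : G) ≤ M := by simp
  have hx' : orderOf (x : G) = p := by rw [orderOf_coe, hx]
  have : zpowers (x : G) = M := by
    refine hM.2.2 _ (normal_of_le_center (hle.trans hc)) hle ?_
    rw [Ne, zpowers_eq_bot]
    intro h1
    rw [h1, orderOf_one] at hx'
    exact hp.out.one_lt.ne hx'
  rw [← this]
  exact IsPGroup.of_card (n := 1) (by rw [Nat.card_zpowers, hx', pow_one])

/-- The step of `not_dvd_index_sup_aux` when `O^p(G) = G`: the index of `⟨P₁, P₂⟩` is prime to `p`
as soon as that of `⟨P₁, P₂⟩M` is, where `M` is a minimal normal subgroup. -/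
theorem not_dvd_index_of_minNormal {M H₁ H₂ P₁ P₂ : Subgroup G} (hM : IsMinNormal M)
    (hG : pResidual p (⊤ : Subgroup G) = ⊤)
    (h₁ : H₁.IsSubnormal) (h₂ : H₂.IsSubnormal) (h : H₁ ⊔ H₂ = ⊤)
    (i₁ : ¬ p ∣ P₁.relIndex H₁) (i₂ : ¬ p ∣ P₂.relIndex H₂)
    (hT : IsPGroup p (P₁ ⊔ P₂ : Subgroup G)) (hTM : ¬ p ∣ (P₁ ⊔ P₂ ⊔ M).index) :
    ¬ p ∣ (P₁ ⊔ P₂).index := by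
  have hMn := hM.1
  have n₁ := hM.le_normalizer h₁
  have n₂ := hM.le_normalizer h₂
  obtain ⟨T, hTdef⟩ : ∃ T, P₁ ⊔ P₂ = T := ⟨_, rfl⟩
  have hP₁ : P₁ ≤ T := hTdef ▸ le_sup_left
  have hP₂ : P₂ ≤ T := hTdef ▸ le_sup_right
  rw [hTdef] at hT hTM ⊢
  suffices hs : ¬ p ∣ T.relIndex M by
    rw [← relIndex_mul_index (le_sup_left : T ≤ T ⊔ M), hp.out.dvd_mul, sup_comm,
      relIndex_sup_of_le_normalizer le_normalizer_of_normal, sup_comm]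
    tauto
  rcases hM.sup_eq_or_le_center n₁ n₂ h with hL | hc
  · have nn : ∀ H : Subgroup G, M ≤ normalizer (H : Set G) →
        M ≤ normalizer ((H ⊓ M : Subgroup G) : Set G) := fun H hH =>
      (le_inf hH le_normalizer).trans inf_normalizer_le_normalizer_inf
    have key : ∀ H P : Subgroup G, P ≤ T → ¬ p ∣ P.relIndex H → ¬ p ∣ T.relIndex (H ⊓ M) := by
      intro H P hPT hi hd
      refine not_dvd_relIndex_of_subnormal_subgroupOf (X := H ⊓ M) inf_le_left ?_ hi
        (hd.trans (relIndex_dvd_of_le_left _ hPT))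
      rw [inf_subgroupOf_left]
      exact Normal.isSubnormal inferInstance
    rw [← hL]
    exact not_dvd_relIndex_sup (hL.symm ▸ nn H₁ n₁) (hL.symm ▸ nn H₂ n₂)
      (key H₁ P₁ hP₁ i₁) (key H₂ P₂ hP₂ i₂)
  · intro hd
    have hMp := hM.isPGroup_of_le_center (p := p) hc (hd.trans (relIndex_dvd_card _ _))
    by_cases hb : T ⊓ M = ⊥
    · exact hM.2.1 (eq_bot_of_central_of_disjoint hG hc hMp hT hb hTM)
    · have := hM.2.2 _ (normal_of_le_center (inf_le_right.trans hc)) inf_le_right hb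
      rw [relIndex_eq_one.2 (inf_eq_right.1 this)] at hd
      exact hp.out.one_lt.ne' (Nat.dvd_one.1 hd)

omit [Finite G] in
/-- If `|H : X ∩ H|` divides a power of `p` and `|H : P ∩ H|` is prime to `p`, then `P` and `X`
together generate at least `H`. -/
theorem le_sup_of_coprime {P X H : Subgroup G} {k : ℕ} (hX : X.relIndex H ∣ p ^ k)
    (hP : ¬ p ∣ P.relIndex H) : H ≤ P ⊔ X := by
  rw [← relIndex_eq_one]
  have h1 : (P ⊔ X).relIndex H ∣ p ^ k := (relIndex_dvd_of_le_left H le_sup_right).trans hX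
  have h2 : (P ⊔ X).relIndex H ∣ P.relIndex H := relIndex_dvd_of_le_left H le_sup_left
  exact Nat.eq_one_of_dvd_coprimes
    (((Nat.Prime.coprime_iff_not_dvd hp.out).2 hP).symm.pow_right k) h2 h1

end Sylow

open Subgroup in
/-- Let `G` be generated by subnormal subgroups `H₁`, `H₂`, and let `P₁`, `P₂` generate a `p`-group
and meet `H₁`, `H₂` in subgroups of index prime to `p`. Then `⟨P₁, P₂⟩` has index prime to `p`,
that is, it is a Sylow `p`-subgroup of `G`. -/
theorem not_dvd_index_sup_aux {p : ℕ} [hp : Fact p.Prime] :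
    ∀ (n : ℕ) {G : Type*} [Group G] [Finite G], Nat.card G = n →
      ∀ {H₁ H₂ P₁ P₂ : Subgroup G}, H₁.IsSubnormal → H₂.IsSubnormal → H₁ ⊔ H₂ = ⊤ →
        ¬ p ∣ P₁.relIndex H₁ → ¬ p ∣ P₂.relIndex H₂ →
        IsPGroup p (P₁ ⊔ P₂ : Subgroup G) → ¬ p ∣ (P₁ ⊔ P₂).index := by
  intro n
  induction n using Nat.strong_induction_on with
  | _ n ih =>
  intro G _ _ hn H₁ H₂ P₁ P₂ h₁ h₂ h i₁ i₂ hT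
  by_cases hG : pResidual p (⊤ : Subgroup G) = ⊤
  · by_cases ht : (⊤ : Subgroup G) = ⊥
    · have : P₁ ⊔ P₂ = ⊤ := by rw [eq_top_iff, ht]; exact bot_le
      rw [this, index_top]
      exact fun hd => hp.out.one_lt.ne' (Nat.dvd_one.1 hd)
    obtain ⟨M, hM, -⟩ := exists_isMinNormal_le (inferInstance : (⊤ : Subgroup G).Normal) ht
    have hMn := hM.1
    refine not_dvd_index_of_minNormal hM hG h₁ h₂ h i₁ i₂ hT ?_
    have hsurj := QuotientGroup.mk'_surjective M
    have im : ∀ P H : Subgroup G, ¬ p ∣ P.relIndex H →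
        ¬ p ∣ (P.map (QuotientGroup.mk' M)).relIndex (H.map (QuotientGroup.mk' M)) := by
      intro P H hi hd
      let f := QuotientGroup.mk' M
      have hle : (P.subgroupOf H).map (f.subgroupMap H) ≤ (P.map f).subgroupOf (H.map f) := by
        rintro _ ⟨x, hx, rfl⟩
        exact ⟨x, hx, rfl⟩
      exact hi (hd.trans ((index_dvd_of_le hle).trans
        (index_map_dvd _ (f.subgroupMap_surjective H))))
    have := ih _ (hn ▸ card_quotient_lt hM.2.1) (G := G ⧸ M) rfl h₁.quotient h₂.quotient
      (by rw [← Subgroup.map_sup, h, map_top_of_surjective _ hsurj])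
      (im P₁ H₁ i₁) (im P₂ H₂ i₂) (by rw [← Subgroup.map_sup]; exact hT.map _)
    rw [← Subgroup.map_sup, index_map, QuotientGroup.ker_mk', MonoidHom.range_eq_top.2 hsurj,
      index_top, mul_one] at this
    exact this
  · obtain ⟨X, hX⟩ : ∃ X, pResidual p (⊤ : Subgroup G) = X := ⟨_, rfl⟩
    have hXn : X.Normal := by
      rw [← normalizer_eq_top_iff, eq_top_iff, ← hX]
      exact le_normalizer_pResidual p ⊤
    have hXt : X ≠ ⊤ := hX ▸ hG
    have hA : ∀ H : Subgroup G, pResidual p H ≤ X := fun H => hX ▸ pResidual_mono p le_top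
    have hXsup : pResidual p H₁ ⊔ pResidual p H₂ = X :=
      le_antisymm (sup_le (hA _) (hA _)) (by rw [← hX, ← h]; exact pResidual_sup_le h₁ h₂)
    have res : ∀ P H : Subgroup G, ¬ p ∣ P.relIndex H →
        ¬ p ∣ (P.subgroupOf X).relIndex ((pResidual p H).subgroupOf X) := by
      intro P H hi
      rw [relIndex_subgroupOf (hA H)]
      refine not_dvd_relIndex_of_subnormal_subgroupOf (pResidual_le p H) ?_ hi
      exact (normal_subgroupOf_of_le_normalizer (le_normalizer_pResidual p H)).isSubnormal
    have hle : P₁.subgroupOf X ⊔ P₂.subgroupOf X ≤ (P₁ ⊔ P₂).subgroupOf X :=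
      sup_le (comap_mono le_sup_left) (comap_mono le_sup_right)
    have h3 := ih _ (hn ▸ card_lt_of_ne_top hXt) (G := X) rfl
      ((subnormal_pResidual p h₁).subgroupOf (K := X))
      ((subnormal_pResidual p h₂).subgroupOf (K := X))
      (by rw [← subgroupOf_sup (hA _) (hA _), hXsup, subgroupOf_self])
      (res P₁ H₁ i₁) (res P₂ H₂ i₂)
      (hT.comap_subtype.to_le hle)
    have h4 : ¬ p ∣ (P₁ ⊔ P₂).relIndex X := fun hd => h3 (hd.trans (index_dvd_of_le hle))
    -- `G = X (P₁ ⊔ P₂)`, so the index of `P₁ ⊔ P₂` can be computed inside `X`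
    obtain ⟨k, hk⟩ := relIndex_pResidual (p := p) (⊤ : Subgroup G)
    rw [hX, relIndex_top_right] at hk
    have gen : ∀ P H : Subgroup G, ¬ p ∣ P.relIndex H → H ≤ P ⊔ X := fun P H hi =>
      le_sup_of_coprime ((relIndex_dvd_index_of_normal X H).trans hk) hi
    have htop : X ⊔ (P₁ ⊔ P₂) = ⊤ := by
      rw [eq_top_iff, ← h]
      exact sup_le ((gen P₁ H₁ i₁).trans (sup_le (le_sup_left.trans le_sup_right) le_sup_left))
        ((gen P₂ H₂ i₂).trans (sup_le (le_sup_right.trans le_sup_right) le_sup_left))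
    have h5 := relIndex_sup_of_le_normalizer (N := X) (Y := P₁ ⊔ P₂) le_normalizer_of_normal
    rw [htop, relIndex_top_right] at h5
    rwa [h5]

/-- The chain definition agrees with Mathlib's inductive `Subgroup.IsSubnormal`. -/
theorem isSubnormal_iff_subgroup {G : Type*} [Group G] {H : Subgroup G} :
    IsSubnormal H ↔ H.IsSubnormal := by
  constructor
  · rintro ⟨n, c, rfl, hn, hc⟩
    have key : ∀ i : Fin (n + 1), (c i).IsSubnormal := by
      intro i
      induction i using Fin.reverseInduction with
      | last => rw [hn]; exact .top
      | cast i ih =>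
        obtain ⟨hle, hN⟩ := hc i
        refine subnormal_of_le_normalizer ih hle ?_
        rw [Subgroup.le_normalizer_iff]
        intro k hk h hh
        simpa using hN h hh k⁻¹ (inv_mem hk)
    exact key 0
  · intro h
    induction h with
    | top => exact ⟨0, fun _ => ⊤, rfl, rfl, fun i => i.elim0⟩
    | step H K hle hK hN ih =>
      obtain ⟨n, c, h0, hn, hc⟩ := ih
      refine ⟨n + 1, Fin.cons H c, rfl, ?_, ?_⟩
      · rw [← Fin.succ_last, Fin.cons_succ, hn]
      · intro i
        induction i using Fin.cases with
        | zero =>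
          have hk := (Subgroup.normal_subgroupOf_iff_le_normalizer hle).1 hN
          rw [Subgroup.le_normalizer_iff] at hk
          simp only [Fin.castSucc_zero, Fin.cons_zero, Fin.cons_succ, h0]
          exact ⟨hle, fun h hh k hkK => by simpa using hk k⁻¹ (inv_mem hkK) h hh⟩
        | succ i =>
          rw [← Fin.succ_castSucc, Fin.cons_succ, Fin.cons_succ]
          exact hc i

/-- If `H₁`, `H₂` are subnormal subgroups of a finite group `G` and `S` is a
Sylow `p`-subgroup of `G`, then `⟨H₁, H₂⟩` is subnormal in `G` and
`⟨H₁, H₂⟩ ∩ S = ⟨H₁ ∩ S, H₂ ∩ S⟩`. -/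
theorem wielandt_meierfrankenfeld {p : ℕ} [Fact p.Prime] {G : Type*} [Group G] [Finite G]
    (S : Sylow p G) (H₁ H₂ : Subgroup G)
    (h₁ : IsSubnormal H₁) (h₂ : IsSubnormal H₂) :
    IsSubnormal (H₁ ⊔ H₂) ∧
      (H₁ ⊔ H₂) ⊓ (S : Subgroup G) = (H₁ ⊓ (S : Subgroup G)) ⊔ (H₂ ⊓ (S : Subgroup G)) := by
  rw [isSubnormal_iff_subgroup] at h₁ h₂ ⊢
  refine ⟨subnormal_sup h₁ h₂, le_antisymm ?_ ?_⟩
  swap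
  · exact sup_le (inf_le_inf_right _ le_sup_left) (inf_le_inf_right _ le_sup_right)
  obtain ⟨J, hJ⟩ : ∃ J, H₁ ⊔ H₂ = J := ⟨_, rfl⟩
  obtain ⟨T, hT⟩ : ∃ T, (H₁ ⊓ (S : Subgroup G)) ⊔ (H₂ ⊓ (S : Subgroup G)) = T := ⟨_, rfl⟩
  have hH₁ : H₁ ≤ J := hJ ▸ le_sup_left
  have hH₂ : H₂ ≤ J := hJ ▸ le_sup_right
  have l₁ : H₁ ⊓ (S : Subgroup G) ≤ J := inf_le_left.trans hH₁
  have l₂ : H₂ ⊓ (S : Subgroup G) ≤ J := inf_le_left.trans hH₂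
  have hTJ : T ≤ J := hT ▸ sup_le l₁ l₂
  have hTS : T ≤ (S : Subgroup G) := hT ▸ sup_le inf_le_right inf_le_right
  -- inside `J = ⟨H₁, H₂⟩`, apply `not_dvd_index_sup_aux` with `Pᵢ = Hᵢ ∩ S`
  have key : ∀ H : Subgroup G, H ≤ J → H.IsSubnormal →
      ¬ p ∣ ((H ⊓ (S : Subgroup G)).subgroupOf J).relIndex (H.subgroupOf J) := by
    intro H hHJ hH
    rw [Subgroup.relIndex_subgroupOf hHJ, Subgroup.inf_relIndex_left]
    exact not_dvd_relIndex_of_subnormal hH S.not_dvd_index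
  have hsup : (H₁ ⊓ (S : Subgroup G)).subgroupOf J ⊔ (H₂ ⊓ (S : Subgroup G)).subgroupOf J =
      T.subgroupOf J := by rw [← Subgroup.subgroupOf_sup l₁ l₂, hT]
  have := not_dvd_index_sup_aux (p := p) _ rfl
    (h₁.subgroupOf (K := J)) (h₂.subgroupOf (K := J))
    (by rw [← Subgroup.subgroupOf_sup hH₁ hH₂, hJ, Subgroup.subgroupOf_self])
    (key H₁ hH₁ h₁) (key H₂ hH₂ h₂)
    (by rw [hsup]; exact (S.2.to_le hTS).comap_subtype)
  rw [hsup] at this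
  rw [hJ, hT]
  exact le_of_not_dvd_relIndex (le_inf hTJ hTS) inf_le_left (S.2.to_le inf_le_right) this
end

section
/- Let p be a prime, G a finite group, S a Sylow p-subgroup of G, and let H₁ and H₂ be subnormal subgroups of G. Set H := ⟨H₁, H₂⟩, T := H ∩ S, K₁ := ⟨H₁, T⟩ and K₂ := ⟨H₂, T⟩. Then T = ⟨H₁ ∩ S, H₂ ∩ S⟩, and for every h ∈ H and every subgroup P of T with P^h ≤ T, there exist finitely many elements f₁, …, fₙ ∈ K₁ ∪ K₂ such that P^{f₁⋯fᵢ} ≤ T for every i = 1, …, n and a^h = a^{f₁⋯fₙ} for every a ∈ P. -/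
universe u

namespace SubnormalFusion

open Subgroup

/-! ### Joins of subnormal subgroups -/

section Join

lemma card_lt_of_ne_top {G : Type u} [Group G] [Finite G] {X : Subgroup G} (h : X ≠ ⊤) :
    Nat.card X < Nat.card G :=
  lt_of_le_of_ne X.card_le_card_group fun e => h (X.eq_top_of_card_eq e)

lemma isSubnormal_normal_sup {G : Type u} [Group G] (N : Subgroup G) [N.Normal] {B : Subgroup G}
    (hB : B.IsSubnormal) : (N ⊔ B).IsSubnormal := by
  have h := (hB.quotient (K := N)).comap (QuotientGroup.mk' N)
  rwa [Subgroup.comap_map_eq, QuotientGroup.ker_mk', sup_comm] at h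

lemma isSubnormal_conj {G : Type u} [Group G] {A : Subgroup G} (hA : A.IsSubnormal) (g : G) :
    (A.map (MulAut.conj g).toMonoidHom).IsSubnormal :=
  hA.map (MulAut.conj g).surjective

lemma mem_conj {G : Type u} [Group G] {A : Subgroup G} {g x : G} :
    x ∈ A.map (MulAut.conj g).toMonoidHom ↔ ∃ a ∈ A, g * a * g⁻¹ = x := by
  simp [Subgroup.mem_map]

/-- A subnormal subgroup `A` is already normal if its normal closure, together with a subgroup `C`
normalizing `A`, generates the whole group: the normal closure of `A` inside `N = ⟨A^G⟩` is
invariant under `N` and `C`, hence equals `N`, and a subnormal subgroup of `N` whose normal closure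
is `N` is `N`. -/
lemma normal_of_normalClosure_sup {G : Type u} [Group G] {A C : Subgroup G} (hA : A.IsSubnormal)
    (hC : C ≤ normalizer (A : Set G)) (htop : normalClosure (A : Set G) ⊔ C = ⊤) : A.Normal := by
  set N := normalClosure (A : Set G) with hN
  have hAN : A ≤ N := le_normalClosure
  rw [le_normalizer_iff] at hC
  by_cases hne : A.subgroupOf N = ⊤
  · rw [subgroupOf_eq_top] at hne
    rw [le_antisymm hAN hne]
    infer_instance
  obtain ⟨K, hK, hAK, hKt⟩ :=
    (hA.subgroupOf (K := N)).exists_normal_and_le_and_lt_top_of_ne hne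
  exfalso
  let s : Set G := {x | ∃ n ∈ N, ∃ a ∈ A, n * a * n⁻¹ = x}
  have h1 : N ≤ normalizer (closure s : Set G) := by
    rw [le_normalizer_closure_iff]
    rintro m hm _ ⟨n, hn, a, ha, rfl⟩
    exact subset_closure ⟨m * n, mul_mem hm hn, a, ha, by group⟩
  have h2 : C ≤ normalizer (closure s : Set G) := by
    rw [le_normalizer_closure_iff]
    rintro m hm _ ⟨n, hn, a, ha, rfl⟩
    exact subset_closure ⟨m * n * m⁻¹, normalClosure_normal.conj_mem n hn m, m * a * m⁻¹,
      hC m hm a ha, by group⟩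
  have h3 : (closure s).Normal := by
    rw [← normalizer_eq_top_iff, ← top_le_iff, ← htop]
    exact sup_le h1 h2
  have h4 : N ≤ closure s := normalClosure_le_normal fun a ha =>
    subset_closure ⟨1, one_mem _, a, ha, by group⟩
  have h5 : closure s ≤ K.map N.subtype := by
    rw [closure_le]
    rintro _ ⟨n, hn, a, ha, rfl⟩
    exact ⟨⟨n, hn⟩ * ⟨a, hAN ha⟩ * ⟨n, hn⟩⁻¹,
      hK.conj_mem ⟨a, hAN ha⟩ (hAK (by simpa [mem_subgroupOf] using ha)) ⟨n, hn⟩, rfl⟩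
  refine hKt.ne (eq_top_iff.mpr fun x _ => ?_)
  obtain ⟨y, hy, hyx⟩ := h5 (h4 x.2)
  rwa [← Subtype.ext hyx]

lemma isSubnormal_iSup_of_sup {G : Type u} [Group G]
    (hj : ∀ A B : Subgroup G, A.IsSubnormal → B.IsSubnormal → (A ⊔ B).IsSubnormal)
    {ι : Type*} [Finite ι] {f : ι → Subgroup G} (hf : ∀ i, (f i).IsSubnormal) :
    (⨆ i, f i).IsSubnormal := by
  have := Fintype.ofFinite ι
  rw [← Finset.sup_univ_eq_iSup]
  exact Finset.sup_induction Subgroup.IsSubnormal.bot (fun A hA B hB => hj A B hA hB)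
    fun i _ => hf i

lemma isSubnormal_sup_aux (n : ℕ) : ∀ (G : Type u) [Group G] [Finite G], Nat.card G = n →
    ∀ A B : Subgroup G, A.IsSubnormal → B.IsSubnormal → (A ⊔ B).IsSubnormal := by
  induction n using Nat.strong_induction_on with
  | _ n ih =>
  intro G _ _ hn A B hA hB
  by_cases hX : ∃ X : Subgroup G, X.Normal ∧ X ≠ ⊤ ∧ A ≤ X ∧ B ≤ X
  · obtain ⟨X, hXn, hXt, hAX, hBX⟩ := hX
    have h := ih _ (hn ▸ card_lt_of_ne_top hXt) X rfl (A.subgroupOf X) (B.subgroupOf X)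
      hA.subgroupOf hB.subgroupOf
    rw [← subgroupOf_sup hAX hBX] at h
    exact h.trans (sup_le hAX hBX) hXn.isSubnormal
  push Not at hX
  set N := normalClosure (A : Set G) with hN
  by_cases hAt : A = ⊤
  · simp [hAt]
  have hAN : A ≤ N := le_normalClosure
  have hNt : N ≠ ⊤ := by
    obtain ⟨K, hK, hAK, hKt⟩ := hA.exists_normal_and_le_and_lt_top_of_ne hAt
    exact ne_top_of_le_ne_top hKt.ne (normalClosure_le_normal hAK)
  have hNB : N ⊔ B = ⊤ := by
    by_contra hne
    obtain ⟨K, hK, hNK, hKt⟩ :=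
      (isSubnormal_normal_sup N hB).exists_normal_and_le_and_lt_top_of_ne hne
    exact hX K hK hKt.ne (hAN.trans (le_sup_left.trans hNK)) (le_sup_right.trans hNK)
  -- the join of the `B`-conjugates of `A`; it lives in the proper normal subgroup `N`
  set A₂ : Subgroup G := ⨆ b : B, A.map (MulAut.conj (b : G)).toMonoidHom with hA₂
  have hconj : ∀ b : B, A.map (MulAut.conj (b : G)).toMonoidHom ≤ N := by
    rintro b _ ⟨a, ha, rfl⟩
    exact normalClosure_normal.conj_mem a (hAN ha) b
  have hA₂N : A₂ ≤ N := iSup_le hconj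
  have hA₂sn : A₂.IsSubnormal := by
    have h := isSubnormal_iSup_of_sup (ih _ (hn ▸ card_lt_of_ne_top hNt) N rfl)
      (f := fun b : B => (A.map (MulAut.conj (b : G)).toMonoidHom).subgroupOf N)
      (fun b => (isSubnormal_conj hA _).subgroupOf)
    have h' := h.trans' (normalClosure_normal (s := (A : Set G))).isSubnormal
    rw [Subgroup.map_iSup] at h'
    simp_rw [map_subgroupOf_eq_of_le (hconj _)] at h'
    exact h'
  have hAA₂ : A ≤ A₂ := by
    refine le_trans ?_ (le_iSup _ (1 : B))
    intro a ha
    exact mem_conj.mpr ⟨a, ha, by simp⟩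
  have hA₂B : A₂ ≤ A ⊔ B := iSup_le fun b => by
    rintro _ ⟨a, ha, rfl⟩
    exact mul_mem (mul_mem (mem_sup_right b.2) (mem_sup_left ha)) (mem_sup_right (inv_mem b.2))
  have hBA₂ : B ≤ normalizer (A₂ : Set G) := by
    rw [le_normalizer_iff]
    intro b hb x hx
    have : A₂ ≤ A₂.comap (MulAut.conj b).toMonoidHom := iSup_le fun c => by
      rintro _ ⟨a, ha, rfl⟩
      refine (le_iSup (fun b : B => A.map (MulAut.conj (b : G)).toMonoidHom)
        (⟨b, hb⟩ * c)) (mem_conj.mpr ⟨a, ha, ?_⟩)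
      simp [mul_assoc]
    exact this hx
  have hNA₂ : N ≤ normalClosure (A₂ : Set G) := normalClosure_mono hAA₂
  have hn₂ := normal_of_normalClosure_sup hA₂sn hBA₂ (top_le_iff.mp (hNB ▸ sup_le_sup_right hNA₂ B))
  have : (⊤ : Subgroup G) ≤ A ⊔ B := by
    rw [← hNB]
    exact sup_le ((normalClosure_le_normal hAA₂).trans hA₂B) le_sup_right
  rw [top_le_iff.mp this]
  exact Subgroup.IsSubnormal.top

/-- Wielandt's join theorem for finite groups. By induction one may assume that no proper normal
subgroup contains both `A` and `B`; then the join of the `B`-conjugates of `A` is subnormal, by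
induction inside the normal closure of `A`, hence normal by `normal_of_normalClosure_sup`, and it
follows that `⟨A, B⟩` is the whole group. -/
theorem isSubnormal_sup {G : Type u} [Group G] [Finite G] {A B : Subgroup G}
    (hA : A.IsSubnormal) (hB : B.IsSubnormal) : (A ⊔ B).IsSubnormal :=
  isSubnormal_sup_aux _ G rfl A B hA hB

end Join

/-! ### Sylow subgroups and subnormal subgroups -/

section Sylow

variable {p : ℕ} {G : Type u} [Group G]

/-- The largest normal `p`-subgroup `O_p(G)`, as the intersection of all Sylow `p`-subgroups. -/
def pCore (p : ℕ) (G : Type u) [Group G] : Subgroup G := ⨅ P : Sylow p G, (P : Subgroup G)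

lemma pCore_le (S : Sylow p G) : pCore p G ≤ S := iInf_le _ S

lemma isPGroup_pCore : IsPGroup p (pCore p G) :=
  (Classical.arbitrary (Sylow p G)).isPGroup'.to_le (pCore_le _)

instance pCore_normal : (pCore p G).Normal := by
  refine ⟨fun n hn g => ?_⟩
  simp only [pCore, mem_iInf] at hn ⊢
  intro P
  have h := hn (g⁻¹ • P)
  rw [Sylow.coe_subgroup_smul, mem_pointwise_smul_iff_inv_smul_mem] at h
  simpa using h

lemma le_pCore_of_normal {N : Subgroup G} [N.Normal] (h : IsPGroup p N) : N ≤ pCore p G :=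
  le_iInf fun P => h.le_sylow_of_normal P

/-- The second isomorphism theorem, read as a divisibility between indices. -/
lemma relIndex_dvd_index [Finite G] (S H : Subgroup G) [H.Normal] : S.relIndex H ∣ S.index := by
  have h1 := relIndex_mul_relIndex (S ⊓ H) S (S ⊔ H) inf_le_left le_sup_left
  have h2 := relIndex_mul_relIndex (S ⊓ H) H (S ⊔ H) inf_le_right le_sup_right
  rw [inf_relIndex_left] at h1
  rw [inf_relIndex_right, relIndex_sup_right] at h2
  have h3 : S.relIndex (S ⊔ H) = S.relIndex H := by
    have h0 : 0 < H.relIndex S := 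
      Nat.pos_of_dvd_of_pos (relIndex_dvd_card H S) Nat.card_pos
    apply Nat.eq_of_mul_eq_mul_left h0
    rw [h1, ← h2, mul_comm]
  rw [← h3]
  exact relIndex_dvd_index_of_le le_sup_left

/-- An element of order prime to `p` in `AU`, with `A` subnormal and `U` a normal `p`-subgroup, lies
in `A`, since all factors of a subnormal chain from `A` to `AU` are `p`-groups. -/
lemma mem_of_coprime_orderOf [Fact p.Prime] {A U : Subgroup G} (hA : A.IsSubnormal) [U.Normal]
    (hU : IsPGroup p U) {x : G} (hx : x ∈ A ⊔ U) (hxp : (orderOf x).Coprime p) : x ∈ A := by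
  induction hA with
  | top => trivial
  | step H K hle hK hN ih =>
    have hxK := ih (sup_le_sup_right hle U hx)
    obtain ⟨h, hh, u, hu, rfl⟩ := mem_sup_of_normal_right.mp hx
    have huK : u ∈ K := (mul_mem_cancel_left (hle hh)).mp hxK
    have e : QuotientGroup.mk' (H.subgroupOf K) ⟨h * u, hxK⟩ =
        QuotientGroup.mk' (H.subgroupOf K) ⟨u, huK⟩ := by
      have h1 : QuotientGroup.mk' (H.subgroupOf K) ⟨h, hle hh⟩ = 1 :=
        (QuotientGroup.eq_one_iff _).mpr (by simpa [mem_subgroupOf] using hh)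
      have h2 : (⟨h * u, hxK⟩ : K) = ⟨h, hle hh⟩ * ⟨u, huK⟩ := rfl
      rw [h2, map_mul, h1, one_mul]
    have d1 := orderOf_map_dvd (QuotientGroup.mk' (H.subgroupOf K)) ⟨h * u, hxK⟩
    have d2 := orderOf_map_dvd (QuotientGroup.mk' (H.subgroupOf K)) ⟨u, huK⟩
    rw [← e] at d2
    obtain ⟨k, hk⟩ := (IsPGroup.iff_orderOf.mp hU) ⟨u, hu⟩
    rw [orderOf_mk] at d1 d2 hk
    rw [hk] at d2
    have h3 := Nat.eq_one_of_dvd_coprimes (hxp.pow_right k) d1 d2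
    rw [orderOf_eq_one_iff, QuotientGroup.mk'_apply, QuotientGroup.eq_one_iff] at h3
    simpa [mem_subgroupOf] using h3

lemma mem_of_pow_mem_of_coprime {H : Subgroup G} {a : G} {i j : ℕ} (hi : a ^ i ∈ H)
    (hj : a ^ j ∈ H) (hij : i.Coprime j) : a ∈ H := by
  have h := Nat.gcd_eq_gcd_ab i j
  rw [hij.gcd_eq_one] at h
  have e : a = (a ^ i) ^ (i.gcdA j) * (a ^ j) ^ (i.gcdB j) := by
    rw [← zpow_natCast, ← zpow_natCast, ← zpow_mul, ← zpow_mul, ← zpow_add, ← h]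
    simp
  rw [e]
  exact mul_mem (zpow_mem hi _) (zpow_mem hj _)

variable [Fact p.Prime] [Finite G]

lemma not_dvd_relIndex (S : Sylow p G) {A : Subgroup G} (hA : A.IsSubnormal) :
    ¬ p ∣ (S : Subgroup G).relIndex A := by
  induction hA with
  | top => rw [relIndex_top_right]; exact S.not_dvd_index
  | step H K hle hK hN ih =>
    intro h
    refine ih (h.trans ?_)
    have := relIndex_dvd_index ((S : Subgroup G).subgroupOf K) (H.subgroupOf K)
    rwa [relIndex_subgroupOf hle] at this

/-- A Sylow subgroup of `G` meets a subnormal subgroup in one of its Sylow subgroups. -/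
lemma exists_sylow_subgroupOf (S : Sylow p G) {A : Subgroup G} (hA : A.IsSubnormal) :
    ∃ T : Sylow p A, (T : Subgroup A) = (S : Subgroup G).subgroupOf A :=
  ⟨(S.isPGroup'.comap_subtype (K := A)).toSylow (not_dvd_relIndex S hA), rfl⟩

lemma le_pCore_of_isSubnormal {A : Subgroup G} (hA : A.IsSubnormal) (hp : IsPGroup p A) :
    A ≤ pCore p G := by
  refine le_iInf fun S => ?_
  obtain ⟨T, hT⟩ := exists_sylow_subgroupOf S hA
  have h : (T : Subgroup A) = ⊤ :=
    (T.is_maximal' (Q := ⊤) (hp.of_equiv topEquiv.symm) le_top).symm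
  rwa [← subgroupOf_eq_top, ← hT]

lemma inf_sylow_eq_bot_iff (S : Sylow p G) {A : Subgroup G} (hA : A.IsSubnormal) :
    A ⊓ S = ⊥ ↔ ¬ p ∣ Nat.card A := by
  obtain ⟨T, hT⟩ := exists_sylow_subgroupOf S hA
  constructor
  · intro h hd
    apply T.ne_bot_of_dvd_card hd
    rw [hT, subgroupOf_eq_bot, disjoint_comm, disjoint_iff, h]
  · intro h
    have hp : IsPGroup p (A ⊓ S : Subgroup G) := S.isPGroup'.to_inf_right
    rcases hp.card_eq_or_dvd with h1 | h1
    · exact eq_bot_of_card_eq _ h1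
    · exact absurd (h1.trans (card_dvd_of_le inf_le_left)) h

/-- If a subnormal subgroup `A` meets a normal subgroup `M` trivially, then every `p`-subgroup of
`A` centralizes `M` modulo `O_p(G)`: such a subgroup `P` is subnormal in `PM`, hence lies in
`O_p(PM)`, so that `[P, M] ≤ O_p(PM) ∩ M`, which is a subnormal `p`-subgroup of `G`. -/
lemma commutator_mem_pCore {A M P : Subgroup G} (hA : A.IsSubnormal) [hM : M.Normal]
    (hAM : A ⊓ M = ⊥) (hPA : P ≤ A) (hP : IsPGroup p P) {s m : G} (hs : s ∈ P) (hm : m ∈ M) :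
    s * m * s⁻¹ * m⁻¹ ∈ pCore p G := by
  have hPY : P ≤ P ⊔ M := le_sup_left
  have hMY : M ≤ P ⊔ M := le_sup_right
  have hPsn : (P.subgroupOf (P ⊔ M)).IsSubnormal := by
    have h : P.subgroupOf (P ⊔ M) = A.subgroupOf (P ⊔ M) := by
      ext ⟨y, hy⟩
      simp only [mem_subgroupOf]
      refine ⟨fun h => hPA h, fun h => ?_⟩
      obtain ⟨q, hq, n, hn, rfl⟩ := mem_sup_of_normal_right.mp hy
      have : n ∈ A ⊓ M := ⟨(mul_mem_cancel_left (hPA hq)).mp h, hn⟩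
      rw [hAM, mem_bot] at this
      simpa [this] using hq
    rw [h]
    exact hA.subgroupOf
  have hle := le_pCore_of_isSubnormal hPsn (hP.comap_subtype)
  set V : Subgroup G := (pCore p (P ⊔ M : Subgroup G)).map (P ⊔ M).subtype ⊓ M with hV
  have hVp : IsPGroup p V := (isPGroup_pCore.map _).to_inf_left
  have hVsn : V.IsSubnormal := by
    refine Subgroup.IsSubnormal.step V M inf_le_right hM.isSubnormal ?_
    rw [normal_subgroupOf_iff_le_normalizer inf_le_right, le_normalizer_iff]
    rintro n hn _ ⟨⟨y, hy, rfl⟩, hy2⟩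
    refine ⟨⟨⟨n, hMY hn⟩ * y * ⟨n, hMY hn⟩⁻¹, pCore_normal.conj_mem y hy _, rfl⟩, ?_⟩
    exact M.mul_mem (M.mul_mem hn hy2) (M.inv_mem hn)
  refine le_pCore_of_isSubnormal hVsn hVp ⟨⟨⟨s, hPY hs⟩ * (⟨m, hMY hm⟩ * ⟨s, hPY hs⟩⁻¹ *
    ⟨m, hMY hm⟩⁻¹), ?_, ?_⟩, ?_⟩
  · have h1 : (⟨s, hPY hs⟩ : (P ⊔ M : Subgroup G)) ∈ pCore p (P ⊔ M : Subgroup G) :=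
      hle (by simpa [mem_subgroupOf] using hs)
    exact mul_mem h1 (pCore_normal.conj_mem _ (inv_mem h1) _)
  · simp [mul_assoc]
  · exact M.mul_mem (hM.conj_mem m hm s) (M.inv_mem hm)

/-- Every element is generated by a power of order a power of `p` and a power of order prime to
`p`. -/
lemma exists_pow_coprime (p : ℕ) [Fact p.Prime] (a : G) : ∃ i j : ℕ, i.Coprime j ∧
    (orderOf (a ^ i)).Coprime p ∧ ∃ k, (a ^ j) ^ p ^ k = 1 := by
  have h0 : orderOf a ≠ 0 := (orderOf_pos a).ne'
  obtain ⟨k, m, hm, hk⟩ := Nat.exists_eq_pow_mul_and_not_dvd h0 p (Fact.out : p.Prime).ne_one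
  have hmp : m.Coprime p := ((Nat.Prime.coprime_iff_not_dvd Fact.out).mpr hm).symm
  refine ⟨p ^ k, m, (hmp.pow_right k).symm, ?_, k, ?_⟩
  · refine Nat.Coprime.coprime_dvd_left (orderOf_dvd_of_pow_eq_one ?_) hmp
    rw [← pow_mul, ← hk, pow_orderOf_eq_one]
  · rw [← pow_mul, mul_comm, ← hk, pow_orderOf_eq_one]

lemma isPGroup_of_coprime_imp {A : Subgroup G}
    (h : ∀ x ∈ A, (orderOf x).Coprime p → x = 1) : IsPGroup p A := by
  rintro ⟨x, hx⟩
  have h0 : orderOf x ≠ 0 := (orderOf_pos x).ne'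
  obtain ⟨k, m, hm, hk⟩ := Nat.exists_eq_pow_mul_and_not_dvd h0 p (Fact.out : p.Prime).ne_one
  have hmp : m.Coprime p := ((Nat.Prime.coprime_iff_not_dvd Fact.out).mpr hm).symm
  refine ⟨k, Subtype.ext (h _ (pow_mem hx _) ?_)⟩
  refine Nat.Coprime.coprime_dvd_left (orderOf_dvd_of_pow_eq_one ?_) hmp
  show (x ^ p ^ k) ^ m = 1
  rw [← pow_mul, ← hk, pow_orderOf_eq_one]

/-- The image of a Sylow subgroup in a quotient meets the image of a subnormal subgroup `A` in the
image of `A ∩ S`, as both are Sylow subgroups there. -/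
lemma map_inf_sylow_le {G' : Type u} [Group G'] (f : G →* G') (S : Sylow p G)
    {A : Subgroup G} (hA : A.IsSubnormal) :
    A.map f ⊓ (S : Subgroup G).map f ≤ (A ⊓ S).map f := by
  obtain ⟨T, hT⟩ := exists_sylow_subgroupOf S hA
  have : Finite (A.map f) := Finite.of_surjective _ (f.subgroupMap_surjective A)
  let T' := T.mapSurjective (f.subgroupMap_surjective A)
  have hQ : IsPGroup p (((S : Subgroup G).map f).subgroupOf (A.map f)) :=
    (S.isPGroup'.map f).comap_subtype
  have hle : (T' : Subgroup (A.map f)) ≤ ((S : Subgroup G).map f).subgroupOf (A.map f) := by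
    rw [Sylow.coe_mapSurjective, hT]
    rintro _ ⟨a, ha, rfl⟩
    exact ⟨a, ha, rfl⟩
  have he := T'.is_maximal' hQ hle
  rintro y ⟨hyA, hyS⟩
  have hy : (⟨y, hyA⟩ : A.map f) ∈ (T' : Subgroup (A.map f)) :=
    he ▸ mem_subgroupOf.mpr hyS
  rw [Sylow.coe_mapSurjective, hT] at hy
  obtain ⟨a, ha, hay⟩ := hy
  exact ⟨a, ⟨a.2, ha⟩, congrArg Subtype.val hay⟩

end Sylow

/-! ### Sylow subgroups of a join -/

section SylowJoin

variable {p : ℕ} {G : Type u} [Group G]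

/-- If `A` and the normal subgroup `M` generate `G`, and a subgroup `P ≤ A` centralizes `M` modulo a
normal subgroup `U`, then all conjugates of `P` lie in `AU`. -/
lemma normalClosure_le_sup {A M U P : Subgroup G} [M.Normal] [U.Normal] (hAM : A ⊔ M = ⊤)
    (hPA : P ≤ A) (hc : ∀ s ∈ P, ∀ m ∈ M, s * m * s⁻¹ * m⁻¹ ∈ U) :
    normalClosure (P : Set G) ≤ A ⊔ U := by
  rw [normalClosure, closure_le]
  intro x hx
  obtain ⟨s, hs, hsx⟩ := Group.mem_conjugatesOfSet_iff.mp hx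
  obtain ⟨g, rfl⟩ := isConj_iff.mp hsx
  obtain ⟨a, ha, m, hm, rfl⟩ := mem_sup_of_normal_right.mp (hAM ▸ mem_top g : g ∈ A ⊔ M)
  have h1 := hc s hs m hm
  have e : a * m * s * (a * m)⁻¹ = a * (s * m * s⁻¹ * m⁻¹)⁻¹ * a⁻¹ * (a * s * a⁻¹) := by group
  rw [e]
  refine mul_mem (mem_sup_right (Normal.conj_mem ‹_› _ (inv_mem h1) _)) (mem_sup_left ?_)
  exact mul_mem (mul_mem ha (hPA hs)) (inv_mem ha)

lemma normalClosure_sup_ne_top [Finite G] {A B C : Subgroup G} (hA : A.IsSubnormal)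
    (hC : C ≤ normalizer (A : Set G)) (h : ¬ B ⊓ normalClosure (A : Set G) ≤ A) :
    normalClosure (A : Set G) ⊔ C ≠ ⊤ := by
  intro htop
  have := normal_of_normalClosure_sup hA hC htop
  rw [normalClosure_eq_self] at h
  exact h inf_le_right

lemma sup_normalClosure_eq_top {A B : Subgroup G} (h : A ⊔ B = ⊤) :
    A ⊔ normalClosure (B : Set G) = ⊤ :=
  top_le_iff.mp (h ▸ sup_le_sup_left le_normalClosure A)

lemma inf_eq_of_inf_normalClosure_le {A B : Subgroup G}
    (h : A ⊓ normalClosure (B : Set G) ≤ B) : A ⊓ normalClosure (B : Set G) = A ⊓ B :=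
  le_antisymm (le_inf inf_le_left h) (inf_le_inf_left A le_normalClosure)

lemma inf_normal {A B : Subgroup G} (hAB : A ⊔ B = ⊤)
    (hBN : B ⊓ normalClosure (A : Set G) ≤ A) (hAM : A ⊓ normalClosure (B : Set G) ≤ B) :
    (A ⊓ B).Normal := by
  rw [← normalizer_eq_top_iff, ← top_le_iff, ← hAB]
  refine sup_le ?_ ?_ <;> rw [le_normalizer_iff] <;> rintro g hg n ⟨hnA, hnB⟩
  · have h : g * n * g⁻¹ ∈ A := mul_mem (mul_mem hg hnA) (inv_mem hg)
    exact ⟨h, hAM ⟨h, normalClosure_normal.conj_mem _ (le_normalClosure hnB) _⟩⟩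
  · have h : g * n * g⁻¹ ∈ B := mul_mem (mul_mem hg hnB) (inv_mem hg)
    exact ⟨hBN ⟨h, normalClosure_normal.conj_mem _ (le_normalClosure hnA) _⟩, h⟩

variable [Fact p.Prime] [Finite G]

/-- The statement that two subnormal subgroups `A`, `B` generating `G` satisfy
`S = ⟨A ∩ S, B ∩ S⟩` for all Sylow `p`-subgroups `S` of `G`. -/
def SylowJoin (p : ℕ) (G : Type u) [Group G] : Prop :=
  ∀ (S : Sylow p G) (A B : Subgroup G), A.IsSubnormal → B.IsSubnormal → A ⊔ B = ⊤ →
    (S : Subgroup G) ≤ (A ⊓ S) ⊔ (B ⊓ S)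

lemma inf_sup_le (S : Sylow p G) {A B : Subgroup G} (hA : A.IsSubnormal) (hB : B.IsSubnormal)
    (h : SylowJoin p (A ⊔ B : Subgroup G)) :
    (A ⊔ B) ⊓ (S : Subgroup G) ≤ (A ⊓ S) ⊔ (B ⊓ S) := by
  obtain ⟨T, hT⟩ := exists_sylow_subgroupOf S (isSubnormal_sup hA hB)
  have h1 := h T (A.subgroupOf (A ⊔ B)) (B.subgroupOf (A ⊔ B)) hA.subgroupOf hB.subgroupOf
    (by rw [← subgroupOf_sup le_sup_left le_sup_right, subgroupOf_self])
  rw [hT] at h1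
  have h2 := map_mono (f := (A ⊔ B).subtype) h1
  rw [subgroupOf_map_subtype, Subgroup.map_sup, inf_comm] at h2
  refine h2.trans (sup_le_sup ?_ ?_) <;>
  · rintro _ ⟨y, ⟨h3, h4⟩, rfl⟩
    exact ⟨h3, h4⟩

/-- Reduction modulo a normal subgroup `X` with `S ∩ X ≤ ⟨A ∩ S, B ∩ S⟩`. -/
lemma le_of_quotient (S : Sylow p G) {A B X : Subgroup G} [X.Normal] (hA : A.IsSubnormal)
    (hB : B.IsSubnormal) (hAB : A ⊔ B = ⊤) (h : SylowJoin p (G ⧸ X))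
    (hX : (S : Subgroup G) ⊓ X ≤ (A ⊓ S) ⊔ (B ⊓ S)) :
    (S : Subgroup G) ≤ (A ⊓ S) ⊔ (B ⊓ S) := by
  have hs := QuotientGroup.mk'_surjective X
  have h1 := h (S.mapSurjective hs) (A.map (QuotientGroup.mk' X)) (B.map (QuotientGroup.mk' X))
    (hA.map hs) (hB.map hs)
    (by rw [← Subgroup.map_sup, hAB, ← MonoidHom.range_eq_map, MonoidHom.range_eq_top.mpr hs])
  rw [Sylow.coe_mapSurjective] at h1
  have h2 := h1.trans (sup_le_sup (map_inf_sylow_le _ S hA) (map_inf_sylow_le _ S hB))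
  rw [← Subgroup.map_sup] at h2
  intro s hs'
  obtain ⟨r, hr, e⟩ := h2 (mem_map_of_mem _ hs')
  have hrS : r ∈ (S : Subgroup G) :=
    (sup_le inf_le_right inf_le_right : (A ⊓ S) ⊔ (B ⊓ S) ≤ (S : Subgroup G)) hr
  have hx : r⁻¹ * s ∈ X := by
    rw [QuotientGroup.mk'_apply, QuotientGroup.mk'_apply, QuotientGroup.eq] at e
    exact e
  have := mul_mem hr (hX ⟨(S : Subgroup G).mul_mem ((S : Subgroup G).inv_mem hrS) hs', hx⟩)
  simpa using this

/-- If `A` meets the normal closure of `B` trivially and contains no nontrivial normal subgroup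
of `G`, then `A ∩ S ≤ O_p(G)`. -/
lemma inf_sylow_le_pCore (S : Sylow p G) {A B : Subgroup G} (hA : A.IsSubnormal)
    (hAB : A ⊔ B = ⊤) (hAM : A ⊓ normalClosure (B : Set G) = ⊥)
    (hq : ∀ X : Subgroup G, X.Normal → X ≤ A → X = ⊥) : A ⊓ (S : Subgroup G) ≤ pCore p G := by
  have h1 : normalClosure ((A ⊓ (S : Subgroup G) : Subgroup G) : Set G) ≤ A ⊔ pCore p G :=
    normalClosure_le_sup (sup_normalClosure_eq_top hAB) inf_le_left fun s hs m hm =>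
      commutator_mem_pCore hA hAM inf_le_left S.isPGroup'.to_inf_right hs hm
  set A₀ : Subgroup G := normalClosure ((A ⊓ (S : Subgroup G) : Subgroup G) : Set G) ⊔ pCore p G
    with hA₀
  have hle : A₀ ≤ A ⊔ pCore p G := sup_le h1 le_sup_right
  -- the subgroup generated by the `p'`-elements of `A₀` is normal in `G` and lies in `A`
  have h2 := hq (closure {x | x ∈ A₀ ∧ (orderOf x).Coprime p})
    (by
      rw [← normalizer_eq_top_iff, ← top_le_iff, le_normalizer_iff]
      intro g _ x hx
      have h3 : closure {x | x ∈ A₀ ∧ (orderOf x).Coprime p} ≤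
          (closure {x | x ∈ A₀ ∧ (orderOf x).Coprime p}).comap (MulAut.conj g).toMonoidHom := by
        rw [closure_le]
        rintro y ⟨hy, hyp⟩
        refine subset_closure ⟨(inferInstance : A₀.Normal).conj_mem y hy g, ?_⟩
        have := MulEquiv.orderOf_eq (MulAut.conj g) y
        rw [← this] at hyp
        exact hyp
      exact h3 hx)
    (by
      rw [closure_le]
      rintro x ⟨hx, hxp⟩
      exact mem_of_coprime_orderOf hA isPGroup_pCore (hle hx) hxp)
  have h3 : IsPGroup p A₀ := isPGroup_of_coprime_imp fun x hx hxp => by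
    rw [← mem_bot, ← h2]
    exact subset_closure ⟨hx, hxp⟩
  exact (le_normalClosure.trans le_sup_left).trans (le_pCore_of_normal h3)

/-- If `A ∩ S` and `B ∩ S` both lie in `O_p(G)`, then `A` normalizes `⟨A ∩ S, B ∩ S⟩`: the
`p`-elements of `A` lie in `A ∩ S`, and each `p'`-element of `A` centralizes `O_p(G)` modulo
`A ∩ O_p(G)`. -/
lemma le_normalizer_of_le_pCore (S : Sylow p G) {A B : Subgroup G} (hA : A.IsSubnormal)
    (hAU : A ⊓ (S : Subgroup G) ≤ pCore p G) (hBU : B ⊓ (S : Subgroup G) ≤ pCore p G) :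
    A ≤ normalizer (((A ⊓ S) ⊔ (B ⊓ S) : Subgroup G) : Set G) := by
  have hUA : A ⊓ pCore p G ≤ A ⊓ S := inf_le_inf_left A (pCore_le S)
  have hU : (pCore p G).Normal := inferInstance
  have key : ∀ x ∈ A, (orderOf x).Coprime p → (A ⊓ S) ⊔ (B ⊓ S) ≤
      ((A ⊓ S) ⊔ (B ⊓ S) : Subgroup G).comap (MulAut.conj x).toMonoidHom := by
    intro x hx hxp
    refine sup_le ?_ ?_ <;> rintro s hs
    · exact mem_sup_left (hUA ⟨A.mul_mem (A.mul_mem hx hs.1) (A.inv_mem hx),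
        hU.conj_mem s (hAU hs) x⟩)
    · have h1 : s⁻¹ * x * s ∈ A := by
        refine mem_of_coprime_orderOf (p := p) (U := pCore p G) hA isPGroup_pCore ?_ ?_
        · exact mul_mem (mul_mem (mem_sup_right (inv_mem (hBU hs))) (mem_sup_left hx))
            (mem_sup_right (hBU hs))
        · have := MulEquiv.orderOf_eq (MulAut.conj s⁻¹) x
          rw [← this] at hxp
          simpa using hxp
      have h2 : s * (s⁻¹ * x * s * x⁻¹) ∈ (A ⊓ S) ⊔ (B ⊓ S) := by
        refine mul_mem (mem_sup_right hs) (mem_sup_left (hUA ⟨A.mul_mem h1 (A.inv_mem hx), ?_⟩))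
        have := mul_mem (inv_mem (hBU hs)) (hU.conj_mem s (hBU hs) x)
        simpa [mul_assoc] using this
      simpa [mul_assoc] using h2
  intro a ha
  obtain ⟨i, j, hij, hi, k, hk⟩ := exists_pow_coprime p a
  refine mem_of_pow_mem_of_coprime (i := i) (j := j) ?_ ?_ hij
  · rw [mem_normalizer_iff]
    refine fun r => ⟨fun hr => key _ (pow_mem ha i) hi hr, fun hr => ?_⟩
    have h1 := key _ (inv_mem (pow_mem ha i)) (by rwa [orderOf_inv]) hr
    have h2 : (a ^ i)⁻¹ * (a ^ i * r * (a ^ i)⁻¹) * (a ^ i)⁻¹⁻¹ = r := by group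
    rwa [← h2]
  · refine le_normalizer (mem_sup_left ⟨pow_mem ha j, ?_⟩)
    obtain ⟨T, hT⟩ := exists_sylow_subgroupOf S hA
    have hTU : (T : Subgroup A) = (pCore p G).subgroupOf A := by
      rw [hT]
      ext ⟨y, hy⟩
      exact ⟨fun h => hAU ⟨hy, h⟩, fun h => pCore_le S h⟩
    have hN : (T : Subgroup A).Normal := hTU ▸ inferInstance
    have hp : IsPGroup p (zpowers (⟨a ^ j, pow_mem ha j⟩ : A)) := by
      rintro ⟨_, n, rfl⟩
      refine ⟨k, Subtype.ext (Subtype.ext ?_)⟩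
      show ((a ^ j) ^ n) ^ p ^ k = 1
      rw [← zpow_natCast, zpow_comm, zpow_natCast, hk, one_zpow]
    have h1 := hp.inf_normalizer_sylow T
    rw [show normalizer (T : Set A) = ⊤ from normalizer_eq_top_iff.mpr hN, inf_top_eq] at h1
    have h2 : (⟨a ^ j, pow_mem ha j⟩ : A) ∈ (T : Subgroup A) :=
      (inf_eq_left.mp h1.symm) (mem_zpowers _)
    rw [hT] at h2
    exact h2

/-- If `A` has order prime to `p` and a proper normal closure, and the Sylow join property holds for
proper joins, then a maximal subnormal `p'`-subgroup between `A` and its normal closure is normal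
in `G`; so `A` is trivial if `G` has no nontrivial normal `p'`-subgroup. -/
lemma eq_bot_of_inf_sylow_eq_bot (S : Sylow p G) {A : Subgroup G} (hA : A.IsSubnormal)
    (hN : normalClosure (A : Set G) ≠ ⊤)
    (hs : ∀ A₁ B₁ : Subgroup G, A₁.IsSubnormal → B₁.IsSubnormal → A₁ ⊔ B₁ ≠ ⊤ →
      (A₁ ⊔ B₁) ⊓ (S : Subgroup G) ≤ (A₁ ⊓ S) ⊔ (B₁ ⊓ S))
    (hq : ∀ X : Subgroup G, X.Normal → X ⊓ (S : Subgroup G) = ⊥ → X = ⊥)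
    (hAS : A ⊓ (S : Subgroup G) = ⊥) : A = ⊥ := by
  obtain ⟨X, hAX, ⟨hX, hXN, hXS⟩, hmax⟩ := Finite.exists_le_maximal
    (p := fun X : Subgroup G => X.IsSubnormal ∧ X ≤ normalClosure (A : Set G) ∧
      X ⊓ (S : Subgroup G) = ⊥) ⟨hA, le_normalClosure, hAS⟩
  have hXn : X.Normal := by
    refine ⟨fun x hx g => ?_⟩
    have hY := isSubnormal_conj hX g
    have hYN : X.map (MulAut.conj g).toMonoidHom ≤ normalClosure (A : Set G) := by
      rintro _ ⟨y, hy, rfl⟩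
      exact normalClosure_normal.conj_mem _ (hXN hy) g
    have hYS : X.map (MulAut.conj g).toMonoidHom ⊓ (S : Subgroup G) = ⊥ := by
      rw [inf_sylow_eq_bot_iff S hX] at hXS
      rw [inf_sylow_eq_bot_iff S hY]
      rwa [Subgroup.card_map_of_injective (MulAut.conj g).injective]
    have hle := sup_le hXN hYN
    have h1 := hs X _ hX hY (fun h => hN (top_le_iff.mp (h ▸ hle)))
    rw [hXS, hYS, sup_bot_eq, le_bot_iff] at h1
    exact hmax ⟨isSubnormal_sup hX hY, hle, h1⟩ le_sup_left
      (mem_sup_right (mem_map_of_mem _ hx))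
  exact le_bot_iff.mp (hAX.trans (hq X hXn hXS).le)

/-- The Sylow join property in the case where neither `A` nor `B` can be enlarged inside its normal
closure by elements of the other. If the property failed, no nontrivial normal subgroup `X` of `G`
would satisfy `S ∩ X ≤ R := ⟨A ∩ S, B ∩ S⟩`; but then `A ∩ B = 1`, next `R ≤ O_p(G)`, so that `R` is
normal and hence trivial, and `A` and `B` are `p'`-groups and therefore trivial. -/
lemma sylow_le_of_inf_normalClosure_le (S : Sylow p G) {A B : Subgroup G} (hA : A.IsSubnormal)
    (hB : B.IsSubnormal) (hAB : A ⊔ B = ⊤)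
    (hBN : B ⊓ normalClosure (A : Set G) ≤ A) (hAM : A ⊓ normalClosure (B : Set G) ≤ B)
    (hs : ∀ A₁ B₁ : Subgroup G, A₁.IsSubnormal → B₁.IsSubnormal → A₁ ⊔ B₁ ≠ ⊤ →
      (A₁ ⊔ B₁) ⊓ (S : Subgroup G) ≤ (A₁ ⊓ S) ⊔ (B₁ ⊓ S))
    (hq : ∀ X : Subgroup G, X.Normal → X ≠ ⊥ → (S : Subgroup G) ⊓ X ≤ (A ⊓ S) ⊔ (B ⊓ S) →
      (S : Subgroup G) ≤ (A ⊓ S) ⊔ (B ⊓ S)) :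
    (S : Subgroup G) ≤ (A ⊓ S) ⊔ (B ⊓ S) := by
  by_contra hS
  have hq' : ∀ X : Subgroup G, X.Normal → (S : Subgroup G) ⊓ X ≤ (A ⊓ S) ⊔ (B ⊓ S) → X = ⊥ :=
    fun X hX h => by_contra fun h0 => hS (hq X hX h0 h)
  have hqA : ∀ X : Subgroup G, X.Normal → X ≤ A → X = ⊥ := fun X hX h =>
    hq' X hX ((le_inf (inf_le_right.trans h) inf_le_left).trans le_sup_left)
  have hqB : ∀ X : Subgroup G, X.Normal → X ≤ B → X = ⊥ := fun X hX h =>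
    hq' X hX ((le_inf (inf_le_right.trans h) inf_le_left).trans le_sup_right)
  have hBA : B ⊔ A = ⊤ := by rwa [sup_comm]
  have hD : A ⊓ B = ⊥ := hqA _ (inf_normal hAB hBN hAM) inf_le_left
  have hAU := inf_sylow_le_pCore S hA hAB ((inf_eq_of_inf_normalClosure_le hAM).trans hD) hqA
  have hBU := inf_sylow_le_pCore S hB hBA
    ((inf_eq_of_inf_normalClosure_le hBN).trans (inf_comm B A ▸ hD)) hqB
  have hR : ((A ⊓ S) ⊔ (B ⊓ S) : Subgroup G).Normal := by
    rw [← normalizer_eq_top_iff, ← top_le_iff, ← hAB]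
    refine sup_le (le_normalizer_of_le_pCore S hA hAU hBU) ?_
    have := le_normalizer_of_le_pCore S hB hBU hAU
    rwa [sup_comm] at this
  have hR0 := hq' _ hR inf_le_right
  rw [sup_eq_bot_iff] at hR0
  -- a proper subnormal subgroup has a proper normal closure
  have hN : ∀ C : Subgroup G, C.IsSubnormal → C ≠ ⊤ → normalClosure (C : Set G) ≠ ⊤ := by
    intro C hC h h'
    refine normalClosure_sup_ne_top (B := ⊤) (C := ⊥) hC bot_le ?_ (by rwa [sup_bot_eq])
    rw [h', inf_top_eq]
    exact fun h2 => h (top_le_iff.mp h2)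
  have hq0 : ∀ X : Subgroup G, X.Normal → X ⊓ (S : Subgroup G) = ⊥ → X = ⊥ := fun X hX h =>
    hq' X hX (by rw [inf_comm, h]; exact bot_le)
  have hA' : A ≠ ⊤ := by
    rintro rfl
    exact hS (le_sup_of_le_left (by rw [top_inf_eq]))
  have hB' : B ≠ ⊤ := by
    rintro rfl
    exact hS (le_sup_of_le_right (by rw [top_inf_eq]))
  have hA0 := eq_bot_of_inf_sylow_eq_bot S hA (hN A hA hA') hs hq0 hR0.1
  exact hB' (by rwa [hA0, bot_sup_eq] at hAB)

omit [Fact p.Prime] in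
/-- One step of the induction on the pair `(A, B)`: if `B` meets the normal closure of `A` outside
`A`, then `A` may be replaced by the larger subgroup `A' = ⟨A, B ∩ normalClosure A⟩ ≠ G`. -/
lemma sylow_le_of_enlarge (S : Sylow p G) {A B : Subgroup G} (hA : A.IsSubnormal)
    (hB : B.IsSubnormal) (hAB : A ⊔ B = ⊤) (h : ¬ B ⊓ normalClosure (A : Set G) ≤ A)
    (hs : ∀ A₁ B₁ : Subgroup G, A₁.IsSubnormal → B₁.IsSubnormal → A₁ ⊔ B₁ ≠ ⊤ →
      (A₁ ⊔ B₁) ⊓ (S : Subgroup G) ≤ (A₁ ⊓ S) ⊔ (B₁ ⊓ S))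
    (ih : ∀ A' : Subgroup G, A < A' → A'.IsSubnormal → A' ⊔ B = ⊤ →
      (S : Subgroup G) ≤ (A' ⊓ S) ⊔ (B ⊓ S)) :
    (S : Subgroup G) ≤ (A ⊓ S) ⊔ (B ⊓ S) := by
  have hBN : (B ⊓ normalClosure (A : Set G)).IsSubnormal :=
    hB.inf (normalClosure_normal.isSubnormal)
  have hne : A ⊔ B ⊓ normalClosure (A : Set G) ≠ ⊤ := fun h0 =>
    normalClosure_sup_ne_top (C := ⊥) hA bot_le h
      (top_le_iff.mp (h0 ▸ (sup_le le_normalClosure inf_le_right).trans le_sup_left))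
  have h1 := ih (A ⊔ B ⊓ normalClosure (A : Set G)) (left_lt_sup.mpr h) (isSubnormal_sup hA hBN)
    (top_le_iff.mp (hAB ▸ sup_le_sup_right le_sup_left B))
  refine h1.trans (sup_le ((hs A _ hA hBN hne).trans (sup_le_sup_left ?_ _)) le_sup_right)
  exact inf_le_inf_right _ inf_le_left

omit [Finite G] in
lemma sylowJoin_aux (n : ℕ) : ∀ (G : Type u) [Group G] [Finite G], Nat.card G = n →
    SylowJoin p G := by
  induction n using Nat.strong_induction_on with
  | _ n ihn =>
  intro G _ _ hn S A B
  have hs : ∀ A₁ B₁ : Subgroup G, A₁.IsSubnormal → B₁.IsSubnormal → A₁ ⊔ B₁ ≠ ⊤ →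
      (A₁ ⊔ B₁) ⊓ (S : Subgroup G) ≤ (A₁ ⊓ S) ⊔ (B₁ ⊓ S) := fun A₁ B₁ h1 h2 h3 =>
    inf_sup_le S h1 h2 (ihn _ (hn ▸ card_lt_of_ne_top h3) _ rfl)
  induction A using WellFoundedGT.induction generalizing B with
  | ind A ihA =>
  induction B using WellFoundedGT.induction with
  | ind B ihB =>
  intro hA hB hAB
  by_cases hBN : B ⊓ normalClosure (A : Set G) ≤ A
  · by_cases hAM : A ⊓ normalClosure (B : Set G) ≤ B
    · refine sylow_le_of_inf_normalClosure_le S hA hB hAB hBN hAM hs fun X hX hX0 h => ?_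
      refine le_of_quotient S hA hB hAB (ihn _ ?_ _ rfl) h
      rw [← hn, card_eq_card_quotient_mul_card_subgroup X]
      exact lt_mul_of_one_lt_right Nat.card_pos (one_lt_card_iff_ne_bot X |>.mpr hX0)
    · rw [sup_comm]
      rw [sup_comm] at hAB
      refine sylow_le_of_enlarge S hB hA hAB hAM hs fun B' h1 h2 h3 => ?_
      rw [sup_comm]
      exact ihB B' h1 hA h2 (by rwa [sup_comm])
  · exact sylow_le_of_enlarge S hA hB hAB hBN hs fun A' h1 h2 h3 => ihA A' h1 B h2 hB h3

/-- A Sylow `p`-subgroup of the join of two subnormal subgroups `A`, `B` is generated by its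
intersections with `A` and with `B`. -/
theorem sup_inf_sylow (S : Sylow p G) {A B : Subgroup G} (hA : A.IsSubnormal)
    (hB : B.IsSubnormal) : (A ⊔ B) ⊓ (S : Subgroup G) = (A ⊓ S) ⊔ (B ⊓ S) :=
  le_antisymm (inf_sup_le S hA hB (sylowJoin_aux _ _ rfl))
    (sup_le (inf_le_inf_right _ le_sup_left) (inf_le_inf_right _ le_sup_right))

end SylowJoin

/-! ### Generation of fusion -/

section Fusion

variable {G : Type u} [Group G]

/-- The element `x` conjugates the set `P` into `T`: `P^x ⊆ T`. -/
def ConjInto (T P : Set G) (x : G) : Prop := ∀ a ∈ P, x⁻¹ * a * x ∈ T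

/-- A single fusion step: `P^x` and `P^y` lie in `T`, and conjugation by the element `x⁻¹y` of `K`
takes `P^x` to `P^y`. -/
def Step (T K P : Set G) (x y : G) : Prop := x⁻¹ * y ∈ K ∧ ConjInto T P x ∧ ConjInto T P y

/-- Every fusion step with an element of `X` is a composite of fusion steps with elements
of `K`. -/
def Gen (T K X : Set G) : Prop :=
  ∀ (P : Set G) (x y : G), Step T X P x y → Relation.ReflTransGen (Step T K P) x y

lemma gen_of_subset {T K X : Set G} (h : X ⊆ K) : Gen T K X :=
  fun _ _ _ hxy => .single ⟨h hxy.1, hxy.2⟩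

lemma Gen.union {T K X Y : Set G} (hX : Gen T K X) (hY : Gen T K Y) : Gen T K (X ∪ Y) :=
  fun P x y h => h.1.elim (fun h1 => hX P x y ⟨h1, h.2⟩) (fun h1 => hY P x y ⟨h1, h.2⟩)

lemma Gen.trans {T K X Y : Set G} (hX : Gen T K X) (hY : Gen T X Y) : Gen T K Y := by
  intro P x y h
  have h' := hY P x y h
  clear h
  induction h' with
  | refl => exact .refl
  | tail _ h2 ih => exact ih.trans (hX _ _ _ h2)

/-- Generation of fusion inside a subgroup `Y ≥ T` passes to the whole group; by translation only
paths starting at `1` matter. -/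
lemma gen_of_subgroup {Y T : Subgroup G} (hT : T ≤ Y) {K' : Set Y} {K : Set G}
    (hK : ∀ k ∈ K', (k : G) ∈ K) (h : Gen (T.subgroupOf Y : Set Y) K' Set.univ) :
    Gen (T : Set G) K (Y : Set G) := by
  rintro P x y ⟨hxy, hx, hy⟩
  have h1 := h {q : Y | ∃ a ∈ P, x⁻¹ * a * x = q} 1 ⟨x⁻¹ * y, hxy⟩ ⟨trivial, ?_, ?_⟩
  · have h2 : ∀ z w : Y, Step (T.subgroupOf Y : Set Y) K' {q : Y | ∃ a ∈ P, x⁻¹ * a * x = q} z w →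
        Step (T : Set G) K P (x * z) (x * w) := by
      have h3 : ∀ z : Y, ConjInto (T.subgroupOf Y : Set Y) {q : Y | ∃ a ∈ P, x⁻¹ * a * x = q} z →
          ConjInto (T : Set G) P (x * z) := by
        intro z hz a ha
        have := hz ⟨x⁻¹ * a * x, hT (hx a ha)⟩ ⟨a, ha, rfl⟩
        have e : (x * (z : G))⁻¹ * a * (x * z) = (z : G)⁻¹ * (x⁻¹ * a * x) * z := by group
        rw [e]
        exact this
      rintro z w ⟨hzw, hz, hw⟩
      refine ⟨?_, h3 z hz, h3 w hw⟩
      have e : (x * (z : G))⁻¹ * (x * w) = ((z⁻¹ * w : Y) : G) := by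
        push_cast
        group
      rw [e]
      exact hK _ hzw
    have h4 := h1.lift (fun z : Y => x * (z : G)) h2
    simpa [Function.onFun] using h4
  · rintro q ⟨a, ha, e⟩
    have := hx a ha
    rw [e] at this
    simpa [mem_subgroupOf] using this
  · rintro q ⟨a, ha, e⟩
    have h2 := hy a ha
    have e2 : y⁻¹ * a * y = (x⁻¹ * y)⁻¹ * (x⁻¹ * a * x) * (x⁻¹ * y) := by group
    rw [e2, e] at h2
    exact h2

/-- Elements of `K` normalizing `T` can be split off on the right. -/
lemma gen_univ_of_sup {T : Subgroup G} {K : Set G} {X W₁ W₂ : Subgroup G} [X.Normal]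
    (hX : Gen (T : Set G) K (X : Set G)) (h : X ⊔ (W₁ ⊔ W₂) = ⊤)
    (hW₁ : (W₁ : Set G) ⊆ K) (hW₂ : (W₂ : Set G) ⊆ K)
    (hT₁ : W₁ ≤ normalizer (T : Set G)) (hT₂ : W₂ ≤ normalizer (T : Set G)) :
    Gen (T : Set G) K Set.univ := by
  have hconj : ∀ {P : Set G} {w z : G}, w ∈ normalizer (T : Set G) → ConjInto (T : Set G) P z →
      ConjInto (T : Set G) P (z * w) := by
    intro P w z hw hz a ha
    have := (mem_normalizer_iff''.mp hw _).mp (hz a ha)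
    simpa [mul_assoc] using this
  have hW : ∀ w ∈ W₁ ⊔ W₂, ∀ (P : Set G) (z : G), ConjInto (T : Set G) P z →
      Relation.ReflTransGen (Step (T : Set G) K P) z (z * w) := by
    intro w hw
    rw [sup_eq_iSup] at hw
    have hT : ∀ b, (cond b W₁ W₂) ≤ normalizer (T : Set G) := by simp [hT₁, hT₂]
    have hWK : ∀ b, ((cond b W₁ W₂ : Subgroup G) : Set G) ⊆ K := by simp [hW₁, hW₂]
    induction hw using iSup_induction' with
    | hp b w hw =>
      intro P z hz
      exact .single ⟨by simpa using hWK b hw, hz, hconj (hT b hw) hz⟩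
    | h1 => intro P z _; simpa using .refl
    | hmul v w hv hw ihv ihw =>
      intro P z hz
      rw [← mul_assoc]
      exact (ihv P z hz).trans (ihw P (z * v) (hconj (iSup_le hT hv) hz))
  rintro P x y ⟨_, hx, hy⟩
  obtain ⟨g, hg, w, hw, e⟩ := mem_sup_of_normal_left.mp (h ▸ mem_top (x⁻¹ * y) : x⁻¹ * y ∈ X ⊔ _)
  have hyw : ConjInto (T : Set G) P (y * w⁻¹) := hconj (inv_mem (sup_le hT₁ hT₂ hw)) hy
  have h1 := hX P x (y * w⁻¹) ⟨by rw [← mul_assoc, ← e]; simpa using hg, hx, hyw⟩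
  have h2 := hW w hw P _ hyw
  rw [inv_mul_cancel_right] at h2
  exact h1.trans h2

variable {p : ℕ} [Fact p.Prime] [Finite G]

/-- A `p`-subgroup of `K ≥ S` is conjugate into `S` by an element of `K`. -/
lemma exists_conj_mem (S : Sylow p G) {K Q : Subgroup G} (hS : (S : Subgroup G) ≤ K) (hQ : Q ≤ K)
    (hp : IsPGroup p Q) : ∃ c ∈ K, ∀ q ∈ Q, c⁻¹ * q * c ∈ (S : Subgroup G) := by
  obtain ⟨R, hR⟩ := (hp.comap_subtype (K := K)).exists_le_sylow
  obtain ⟨c, hc⟩ := MulAction.exists_smul_eq K (S.subtype hS) R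
  refine ⟨c, c.2, fun q hq => ?_⟩
  have h1 : (⟨q, hQ hq⟩ : K) ∈ (R : Subgroup K) := hR hq
  rw [← hc, Sylow.coe_subgroup_smul, mem_pointwise_smul_iff_inv_smul_mem] at h1
  simpa [mem_subgroupOf, mul_assoc] using h1

/-- Fusion by products `k₁k₂` with `kᵢ ∈ Kᵢ ≥ S`: the intermediate image lies in a `p`-subgroup of
`K₁ ∩ K₂`, which Sylow's theorem in `K₁ ∩ K₂` moves back into `S`. -/
lemma gen_of_mul (S : Sylow p G) {K₁ K₂ : Subgroup G} (h₁ : (S : Subgroup G) ≤ K₁)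
    (h₂ : (S : Subgroup G) ≤ K₂) {X : Set G} (hX : ∀ g ∈ X, ∃ a ∈ K₁, ∃ b ∈ K₂, a * b = g) :
    Gen ((S : Subgroup G) : Set G) (K₁ ∪ K₂) X := by
  rintro P x y ⟨hxy, hx, hy⟩
  obtain ⟨a, ha, b, hb, e⟩ := hX _ hxy
  set Q : Subgroup G := (S : Subgroup G).map (MulAut.conj a⁻¹).toMonoidHom ⊓
    (S : Subgroup G).map (MulAut.conj b).toMonoidHom with hQ
  have hQK : Q ≤ K₁ ⊓ K₂ := by
    refine inf_le_inf ?_ ?_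
    · rintro _ ⟨s, hs, rfl⟩
      exact mul_mem (mul_mem (inv_mem ha) (h₁ hs)) (inv_mem (inv_mem ha))
    · rintro _ ⟨s, hs, rfl⟩
      exact mul_mem (mul_mem hb (h₂ hs)) (inv_mem hb)
  obtain ⟨c, ⟨hc₁, hc₂⟩, hc⟩ := exists_conj_mem S (le_inf h₁ h₂) hQK
    ((S.isPGroup'.map _).to_inf_left)
  have hxac : ConjInto ((S : Subgroup G) : Set G) P (x * a * c) := by
    intro q hq
    have h1 : a⁻¹ * (x⁻¹ * q * x) * a ∈ Q := by
      refine ⟨mem_conj.mpr ⟨_, hx q hq, by group⟩, mem_conj.mpr ⟨_, hy q hq, ?_⟩⟩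
      have hy' : y = x * (a * b) := by rw [e]; group
      rw [hy']
      group
    have h2 := hc _ h1
    have h3 : (x * a * c)⁻¹ * q * (x * a * c) = c⁻¹ * (a⁻¹ * (x⁻¹ * q * x) * a) * c := by group
    rw [h3]
    exact h2
  refine .tail (.single ⟨Or.inl (?_ : x⁻¹ * (x * a * c) ∈ K₁), hx, hxac⟩)
    ⟨Or.inr (?_ : (x * a * c)⁻¹ * y ∈ K₂), hxac, hy⟩
  · have := mul_mem ha hc₁
    simpa [mul_assoc] using this
  · have h3 : (x * a * c)⁻¹ * y = c⁻¹ * b := by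
      have hy' : y = x * (a * b) := by rw [e]; group
      rw [hy']
      group
    rw [h3]
    exact mul_mem (inv_mem hc₂) hb

/-- If `A` meets the normal subgroup `M` in a normal subgroup `D` of `G`, then the `p`-subgroups of
`A` centralize `M` modulo the preimage of `O_p(G/D)`. -/
lemma commutator_mem_comap_pCore {A M D P : Subgroup G} (hA : A.IsSubnormal) [M.Normal] [D.Normal]
    (hD : A ⊓ M = D) (hPA : P ≤ A) (hP : IsPGroup p P) {s m : G} (hs : s ∈ P) (hm : m ∈ M) :
    s * m * s⁻¹ * m⁻¹ ∈ (pCore p (G ⧸ D)).comap (QuotientGroup.mk' D) := by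
  have hsurj := QuotientGroup.mk'_surjective D
  have hMn : (M.map (QuotientGroup.mk' D)).Normal := Normal.map ‹_› _ hsurj
  have hbot : A.map (QuotientGroup.mk' D) ⊓ M.map (QuotientGroup.mk' D) = ⊥ := by
    rw [eq_bot_iff]
    rintro _ ⟨⟨a, ha, rfl⟩, ⟨n, hn, e⟩⟩
    rw [mem_bot]
    refine (QuotientGroup.eq_one_iff a).mpr ?_
    have h1 : n⁻¹ * a ∈ D := QuotientGroup.eq.mp e
    have h2 : n⁻¹ * a ∈ M := (hD ▸ inf_le_right : D ≤ M) h1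
    rw [← hD]
    exact ⟨ha, (mul_mem_cancel_left (inv_mem hn)).mp h2⟩
  have := commutator_mem_pCore (p := p) (hA.map hsurj) hbot (map_mono hPA) (hP.map _)
    (mem_map_of_mem _ hs) (mem_map_of_mem _ hm)
  simpa using this

/-- A variant of the Frattini argument: if `S^a ≤ A₀S` for all `a ∈ A`, with `A₀ ≤ AS` normal, then
every element of `A` is a product of an element of `A₀S` and an element of `A` normalizing `S`. -/
lemma le_sup_inf_normalizer (S : Sylow p G) {A A₀ X : Subgroup G} [A₀.Normal]
    (hSA : (S : Subgroup G) ≤ normalizer (A : Set G)) (hA₀ : A₀ ≤ A ⊔ S) (hA₀X : A₀ ≤ X)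
    (hSX : (S : Subgroup G) ≤ X)
    (hconj : ∀ a ∈ A, ∀ s ∈ (S : Subgroup G), a⁻¹ * s * a ∈ A₀ ⊔ S) :
    A ≤ X ⊔ (A ⊓ normalizer ((S : Subgroup G) : Set G)) := by
  intro a ha
  obtain ⟨c, hc, hcS⟩ := exists_conj_mem S (K := A₀ ⊔ S)
    (Q := (S : Subgroup G).map (MulAut.conj a⁻¹).toMonoidHom) le_sup_right
    (by
      rintro _ ⟨s, hs, rfl⟩
      simpa using hconj a ha s hs) (S.isPGroup'.map _)
  obtain ⟨x, hx, s₁, hs₁, rfl⟩ := mem_sup_of_normal_left.mp hc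
  have hxA : x ∈ ((A ⊔ S : Subgroup G) : Set G) := hA₀ hx
  rw [coe_mul_of_right_le_normalizer_left A S hSA] at hxA
  obtain ⟨a', ha', s', hs', rfl⟩ := hxA
  have ha'X : a' ∈ X := by
    have := mul_mem (hA₀X hx) (inv_mem (hSX hs'))
    simpa using this
  have hw : (a * a')⁻¹ ∈ normalizer ((S : Subgroup G) : Set G) := by
    refine mem_normalizer_fintype fun s hs => ?_
    have h1 := hcS (a⁻¹ * s * a) (mem_conj.mpr ⟨s, hs, by group⟩)
    have h2 := (S : Subgroup G).mul_mem ((S : Subgroup G).mul_mem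
      ((S : Subgroup G).mul_mem hs' hs₁) h1)
      ((S : Subgroup G).inv_mem ((S : Subgroup G).mul_mem hs' hs₁))
    have e : (a * a')⁻¹ * s * ((a * a')⁻¹)⁻¹ = s' * s₁ *
        ((a' * s' * s₁)⁻¹ * (a⁻¹ * s * a) * (a' * s' * s₁)) * (s' * s₁)⁻¹ := by group
    rw [e]
    exact h2
  have e : a = (a * a') * a'⁻¹ := by group
  rw [e]
  refine mul_mem (mem_sup_right ⟨A.mul_mem ha ha', ?_⟩) (mem_sup_left (inv_mem ha'X))
  simpa using inv_mem hw

omit [Fact p.Prime] [Finite G] in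
/-- For all conjugates of `S` by elements of `A`: `S^a ≤ A₀S`, where `A₀` contains the conjugates of
`A ∩ S` and `A` centralizes `B ∩ S` modulo `U ≤ A₀`. -/
lemma conj_mem_sup (S : Sylow p G) {A B A₀ U N : Subgroup G} (hS : (S : Subgroup G) ≤ A ⊓ S ⊔ B ⊓ S)
    (hA₀ : normalClosure ((A ⊓ S : Subgroup G) : Set G) ≤ A₀) (hU : U ≤ A₀) (hAN : A ≤ N)
    (hc : ∀ s ∈ B ⊓ (S : Subgroup G), ∀ m ∈ N, s * m * s⁻¹ * m⁻¹ ∈ U) {a : G} (ha : a ∈ A)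
    {s : G} (hs : s ∈ (S : Subgroup G)) : a⁻¹ * s * a ∈ A₀ ⊔ S := by
  have h : A ⊓ S ⊔ B ⊓ S ≤ (A₀ ⊔ S : Subgroup G).comap (MulAut.conj a⁻¹).toMonoidHom := by
    refine sup_le ?_ ?_ <;> intro t ht
    · exact mem_sup_left (hA₀ (normalClosure_normal.conj_mem _ (le_normalClosure ht) _))
    · have h1 := hc t⁻¹ (inv_mem ht) a⁻¹ (inv_mem (hAN ha))
      have h2 := mul_mem (mem_sup_right (S := A₀) ht.2) (mem_sup_left (T := (S : Subgroup G))
        (hU h1))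
      simpa [mul_assoc] using h2
  simpa using h (hS hs)

/-- Generation of fusion in the case where neither `A` nor `B` can be enlarged inside its normal
closure by elements of the other. -/
lemma gen_of_inf_normalClosure_le (S : Sylow p G) {A B : Subgroup G} (hA : A.IsSubnormal)
    (hB : B.IsSubnormal) (hAB : A ⊔ B = ⊤)
    (hSA : (S : Subgroup G) ≤ normalizer (A : Set G))
    (hSB : (S : Subgroup G) ≤ normalizer (B : Set G))
    (hBN : B ⊓ normalClosure (A : Set G) ≤ A) (hAM : A ⊓ normalClosure (B : Set G) ≤ B) :
    Gen ((S : Subgroup G) : Set G) ((A ⊔ S : Subgroup G) ∪ (B ⊔ S : Subgroup G)) Set.univ := by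
  have hDn := inf_normal hAB hBN hAM
  have hS : (S : Subgroup G) ≤ A ⊓ S ⊔ B ⊓ S := by
    rw [← sup_inf_sylow S hA hB, hAB, top_inf_eq]
  have hsurj := QuotientGroup.mk'_surjective (A ⊓ B)
  set U : Subgroup G := (pCore p (G ⧸ (A ⊓ B))).comap (QuotientGroup.mk' (A ⊓ B)) with hU
  have hUn : U.Normal := pCore_normal.comap _
  have hUle : U ≤ A ⊓ B ⊔ S := by
    intro u hu
    obtain ⟨s, hs, e⟩ := pCore_le (S.mapSurjective hsurj) (mem_comap.mp hu)
    have h1 : s⁻¹ * u ∈ A ⊓ B := QuotientGroup.eq.mp e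
    have h2 := mul_mem (mem_sup_right (S := A ⊓ B) hs)
      (mem_sup_left (T := (S : Subgroup G)) h1)
    simpa using h2
  have hcA : ∀ s ∈ A ⊓ (S : Subgroup G), ∀ m ∈ normalClosure (B : Set G),
      s * m * s⁻¹ * m⁻¹ ∈ U := fun s hs m hm =>
    commutator_mem_comap_pCore hA (inf_eq_of_inf_normalClosure_le hAM) inf_le_left
      S.isPGroup'.to_inf_right hs hm
  have hcB : ∀ s ∈ B ⊓ (S : Subgroup G), ∀ m ∈ normalClosure (A : Set G),
      s * m * s⁻¹ * m⁻¹ ∈ U := fun s hs m hm =>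
    commutator_mem_comap_pCore hB
      ((inf_eq_of_inf_normalClosure_le hBN).trans (inf_comm B A)) inf_le_left
      S.isPGroup'.to_inf_right hs hm
  have hBA : B ⊔ A = ⊤ := by rwa [sup_comm]
  set A₀ : Subgroup G := normalClosure ((A ⊓ S : Subgroup G) : Set G) ⊔ U with hA₀
  set B₀ : Subgroup G := normalClosure ((B ⊓ S : Subgroup G) : Set G) ⊔ U with hB₀
  have hA₀le : A₀ ≤ A ⊔ S := by
    refine sup_le ((normalClosure_le_sup (sup_normalClosure_eq_top hAB) inf_le_left hcA).trans
      (sup_le le_sup_left ?_)) ?_ <;>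
    exact hUle.trans (sup_le_sup_right inf_le_left _)
  have hB₀le : B₀ ≤ B ⊔ S := by
    refine sup_le ((normalClosure_le_sup (sup_normalClosure_eq_top hBA) inf_le_left hcB).trans
      (sup_le le_sup_left ?_)) ?_ <;>
    exact hUle.trans (sup_le_sup_right inf_le_right _)
  have hSX : (S : Subgroup G) ≤ A₀ ⊔ B₀ :=
    hS.trans (sup_le_sup (le_normalClosure.trans le_sup_left) (le_normalClosure.trans le_sup_left))
  have hX : Gen ((S : Subgroup G) : Set G) ((A ⊔ S : Subgroup G) ∪ (B ⊔ S : Subgroup G))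
      (A₀ ⊔ B₀ : Subgroup G) := by
    refine gen_of_mul S le_sup_right le_sup_right fun g hg => ?_
    obtain ⟨a, ha, b, hb, e⟩ := mem_sup_of_normal_left.mp hg
    exact ⟨a, hA₀le ha, b, hB₀le hb, e⟩
  have hAX := le_sup_inf_normalizer S hSA hA₀le le_sup_left hSX fun a ha s hs =>
    conj_mem_sup S hS le_sup_left le_sup_right le_normalClosure hcB ha hs
  have hBX := le_sup_inf_normalizer S hSB hB₀le le_sup_right hSX fun b hb s hs =>
    conj_mem_sup S (A := B) (B := A) (by rwa [sup_comm]) le_sup_left le_sup_right le_normalClosure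
      hcA hb hs
  refine gen_univ_of_sup hX (W₁ := A ⊓ normalizer ((S : Subgroup G) : Set G))
    (W₂ := B ⊓ normalizer ((S : Subgroup G) : Set G)) ?_ ?_ ?_ inf_le_right inf_le_right
  · rw [eq_top_iff, ← hAB]
    exact sup_le (hAX.trans (sup_le_sup_left le_sup_left _))
      (hBX.trans (sup_le_sup_left le_sup_right _))
  · exact fun w hw => Or.inl (mem_sup_left (T := (S : Subgroup G)) hw.1)
  · exact fun w hw => Or.inr (mem_sup_left (T := (S : Subgroup G)) hw.1)

/-- The statement that for subnormal subgroups `A`, `B` generating `G` and normalized by the Sylow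
`p`-subgroup `S`, the fusion in `S` is generated by the fusion in `AS` and in `BS`. -/
def FusionJoin (p : ℕ) (G : Type u) [Group G] : Prop :=
  ∀ (S : Sylow p G) (A B : Subgroup G), A.IsSubnormal → B.IsSubnormal → A ⊔ B = ⊤ →
    (S : Subgroup G) ≤ normalizer (A : Set G) → (S : Subgroup G) ≤ normalizer (B : Set G) →
    Gen ((S : Subgroup G) : Set G) ((A ⊔ S : Subgroup G) ∪ (B ⊔ S : Subgroup G)) Set.univ

omit [Fact p.Prime] [Finite G] in
/-- Transfer of `FusionJoin` from a subgroup `Y ≥ S` with `Y = ⟨A ∩ Y, B ∩ Y⟩`. -/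
lemma gen_of_fusionJoin (S : Sylow p G) {A B Y : Subgroup G} (hA : A.IsSubnormal)
    (hB : B.IsSubnormal) (hSA : (S : Subgroup G) ≤ normalizer (A : Set G))
    (hSB : (S : Subgroup G) ≤ normalizer (B : Set G)) (hSY : (S : Subgroup G) ≤ Y)
    (hY : Y ≤ A ⊓ Y ⊔ B ⊓ Y) (h : FusionJoin p Y) :
    Gen ((S : Subgroup G) : Set G) ((A ⊔ S : Subgroup G) ∪ (B ⊔ S : Subgroup G)) (Y : Set G) := by
  have hn : ∀ {C : Subgroup G}, (S : Subgroup G) ≤ normalizer (C : Set G) →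
      ((S.subtype hSY : Sylow p Y) : Subgroup Y) ≤ normalizer ((C.subgroupOf Y : Subgroup Y) :
        Set Y) := by
    intro C hC
    rw [le_normalizer_iff] at hC ⊢
    exact fun s hs c hc => hC s hs c hc
  have h1 := h (S.subtype hSY) (A.subgroupOf Y) (B.subgroupOf Y) hA.subgroupOf hB.subgroupOf ?_
    (hn hSA) (hn hSB)
  · refine gen_of_subgroup hSY ?_ h1
    have h2 : ∀ C : Subgroup G, C.subgroupOf Y ⊔ (S.subtype hSY : Subgroup Y) ≤
        (C ⊔ S).subgroupOf Y := fun C =>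
      sup_le (comap_mono le_sup_left) (comap_mono le_sup_right)
    rintro k (hk | hk)
    · exact Or.inl (h2 A hk)
    · exact Or.inr (h2 B hk)
  · rw [← inf_subgroupOf_right A, ← inf_subgroupOf_right B, ← subgroupOf_sup inf_le_right
      inf_le_right, subgroupOf_eq_top]
    exact hY

/-- One step of the induction on the pair `(A, B)`: if `B` meets the normal closure `N` of `A`
outside `A`, then `A` may be replaced by `A' = ⟨A, B ∩ N⟩`, since `A'S ≤ NS` is a proper subgroup
of `G`. -/
lemma gen_of_enlarge (S : Sylow p G) {A B : Subgroup G} (hA : A.IsSubnormal)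
    (hB : B.IsSubnormal) (hAB : A ⊔ B = ⊤)
    (hSA : (S : Subgroup G) ≤ normalizer (A : Set G))
    (hSB : (S : Subgroup G) ≤ normalizer (B : Set G))
    (h : ¬ B ⊓ normalClosure (A : Set G) ≤ A)
    (hs : ∀ Y : Subgroup G, Y ≠ ⊤ → FusionJoin p Y)
    (ih : ∀ A' : Subgroup G, A < A' → A'.IsSubnormal → A' ⊔ B = ⊤ →
      (S : Subgroup G) ≤ normalizer (A' : Set G) →
      Gen ((S : Subgroup G) : Set G) ((A' ⊔ S : Subgroup G) ∪ (B ⊔ S : Subgroup G)) Set.univ) :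
    Gen ((S : Subgroup G) : Set G) ((A ⊔ S : Subgroup G) ∪ (B ⊔ S : Subgroup G)) Set.univ := by
  have hS : (S : Subgroup G) ≤ A ⊓ S ⊔ B ⊓ S := by
    rw [← sup_inf_sylow S hA hB, hAB, top_inf_eq]
  set N : Subgroup G := normalClosure (A : Set G) with hN
  have hBN : (B ⊓ N).IsSubnormal := hB.inf normalClosure_normal.isSubnormal
  set A' : Subgroup G := A ⊔ B ⊓ N with hA'
  have hSA' : (S : Subgroup G) ≤ normalizer (A' : Set G) :=
    (le_inf hSA ((le_inf hSB le_normalizer_of_normal).trans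
      inf_normalizer_le_normalizer_inf)).trans (normalizer_inf_normalizer_le_normalizer_sup _ _)
  have hle : A' ⊔ S ≤ N ⊔ S := sup_le_sup_right (sup_le le_normalClosure inf_le_right) _
  have hY : A' ⊔ S ≠ ⊤ := fun h0 => normalClosure_sup_ne_top hA hSA h (top_le_iff.mp (h0 ▸ hle))
  have hAY : A ≤ A ⊓ (A' ⊔ S) := le_inf le_rfl (le_sup_left.trans le_sup_left)
  have hBY : B ⊓ N ≤ B ⊓ (A' ⊔ S) := le_inf inf_le_left (le_sup_right.trans le_sup_left)
  have h1 := gen_of_fusionJoin S hA hB hSA hSB (Y := A' ⊔ S) le_sup_right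
    (sup_le (sup_le_sup hAY hBY) (hS.trans (sup_le_sup (inf_le_inf_left _ le_sup_right)
      (inf_le_inf_left _ le_sup_right)))) (hs _ hY)
  exact (h1.union (gen_of_subset Set.subset_union_right)).trans
    (ih A' (left_lt_sup.mpr h) (isSubnormal_sup hA hBN)
      (top_le_iff.mp (hAB ▸ sup_le_sup_right le_sup_left B)) hSA')

omit [Finite G] in
lemma fusionJoin_aux (n : ℕ) : ∀ (G : Type u) [Group G] [Finite G], Nat.card G = n →
    FusionJoin p G := by
  induction n using Nat.strong_induction_on with
  | _ n ihn =>
  intro G _ _ hn S A B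
  have hs : ∀ Y : Subgroup G, Y ≠ ⊤ → FusionJoin p Y := fun Y hY =>
    ihn _ (hn ▸ card_lt_of_ne_top hY) _ rfl
  induction A using WellFoundedGT.induction generalizing B with
  | ind A ihA =>
  induction B using WellFoundedGT.induction with
  | ind B ihB =>
  intro hA hB hAB hSA hSB
  by_cases hBN : B ⊓ normalClosure (A : Set G) ≤ A
  · by_cases hAM : A ⊓ normalClosure (B : Set G) ≤ B
    · exact gen_of_inf_normalClosure_le S hA hB hAB hSA hSB hBN hAM
    · rw [Set.union_comm]
      rw [sup_comm] at hAB
      refine gen_of_enlarge S hB hA hAB hSB hSA hAM hs fun B' h1 h2 h3 h4 => ?_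
      rw [Set.union_comm]
      exact ihB B' h1 hA h2 (by rwa [sup_comm]) hSA h4
  · exact gen_of_enlarge S hA hB hAB hSA hSB hBN hs fun A' h1 h2 h3 h4 =>
      ihA A' h1 B h2 hB h3 h4 hSB

end Fusion

/-! ### Arbitrary subnormal subgroups -/

section Main

variable {G : Type u} [Group G]

/-- Fusion in `S` is generated by the fusion in `AS` and in `BS`, for subnormal subgroups `A`, `B`
generating `G`; the invariance under `S` is achieved by passing to joins of `S`-conjugates. -/
theorem gen_of_isSubnormal {p : ℕ} [Fact p.Prime] [Finite G] (S : Sylow p G) {A B : Subgroup G}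
    (hA : A.IsSubnormal) (hB : B.IsSubnormal) (hAB : A ⊔ B = ⊤) :
    Gen ((S : Subgroup G) : Set G) ((A ⊔ S : Subgroup G) ∪ (B ⊔ S : Subgroup G)) Set.univ := by
  have key : ∀ C : Subgroup G, C.IsSubnormal → ∃ C' : Subgroup G, C'.IsSubnormal ∧ C ≤ C' ∧
      (S : Subgroup G) ≤ normalizer (C' : Set G) ∧ C' ⊔ S ≤ C ⊔ S := by
    intro C hC
    refine ⟨⨆ s : (S : Subgroup G), C.map (MulAut.conj (s : G)).toMonoidHom,
      isSubnormal_iSup_of_sup (fun _ _ => isSubnormal_sup) fun s => isSubnormal_conj hC s,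
      ?_, ?_, ?_⟩
    · refine le_trans ?_ (le_iSup _ (1 : (S : Subgroup G)))
      exact fun c hc => mem_conj.mpr ⟨c, hc, by simp⟩
    · rw [le_normalizer_iff]
      intro s hs
      have h : (⨆ s : (S : Subgroup G), C.map (MulAut.conj (s : G)).toMonoidHom) ≤
          (⨆ s : (S : Subgroup G), C.map (MulAut.conj (s : G)).toMonoidHom).comap
            (MulAut.conj s).toMonoidHom := by
        refine iSup_le fun t => ?_
        rintro _ ⟨c, hc, rfl⟩
        refine mem_iSup_of_mem (⟨s, hs⟩ * t) (mem_conj.mpr ⟨c, hc, ?_⟩)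
        simp [mul_assoc]
      exact fun x hx => h hx
    · refine sup_le (iSup_le fun s => ?_) le_sup_right
      rintro _ ⟨c, hc, rfl⟩
      exact mul_mem (mul_mem (mem_sup_right s.2) (mem_sup_left hc)) (inv_mem (mem_sup_right s.2))
  obtain ⟨A', hA', hAA', hSA', hA'S⟩ := key A hA
  obtain ⟨B', hB', hBB', hSB', hB'S⟩ := key B hB
  have h := fusionJoin_aux _ G rfl S A' B' hA' hB'
    (top_le_iff.mp (hAB ▸ sup_le_sup hAA' hBB')) hSA' hSB'
  exact (gen_of_subset (Set.union_subset_union hA'S hB'S)).trans h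

lemma exists_list_of_path {T K P : Set G} {x y : G} (hx : ConjInto T P x)
    (h : Relation.ReflTransGen (Step T K P) x y) : ∃ l : List G, (∀ f ∈ l, f ∈ K) ∧
      (∀ i ≤ l.length, ConjInto T P (x * (l.take i).prod)) ∧ x * l.prod = y := by
  induction h using Relation.ReflTransGen.head_induction_on with
  | refl => exact ⟨[], by simp, by simpa using hx, by simp⟩
  | @head u v h1 _ ih =>
    obtain ⟨l, hl, hT, e⟩ := ih h1.2.2
    refine ⟨(u⁻¹ * v) :: l, ?_, ?_, ?_⟩
    · simpa using ⟨h1.1, hl⟩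
    · rintro (_ | i) hi
      · simpa using hx
      · have := hT i (by simpa using hi)
        simpa [← mul_assoc] using this
    · simpa [← mul_assoc] using e

lemma isSubnormal_of_chain {H : Subgroup G} (h : _root_.IsSubnormal H) : H.IsSubnormal := by
  obtain ⟨n, c, rfl, htop, hc⟩ := h
  suffices ∀ i, (c i).IsSubnormal from this 0
  intro i
  induction i using Fin.reverseInduction with
  | last => rw [htop]; exact Subgroup.IsSubnormal.top
  | cast i ih =>
    refine Subgroup.IsSubnormal.step _ _ (hc i).1 ih ?_
    rw [normal_subgroupOf_iff_le_normalizer (hc i).1, le_normalizer_iff]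
    intro k hk h hh
    simpa using (hc i).2 h hh k⁻¹ (inv_mem hk)

end Main

end SubnormalFusion

/-- **Theorem 1.3 (unfolded)**: let `H₁`, `H₂` be subnormal subgroups of the
finite group `G`, `S ∈ Syl_p(G)`, `H := ⟨H₁, H₂⟩`, `T := H ∩ S`,
`K₁ := ⟨H₁, T⟩`, `K₂ := ⟨H₂, T⟩`. Then `T = ⟨H₁ ∩ S, H₂ ∩ S⟩`, and every
conjugation map `c_h : P → T` (for `h ∈ H` and `P ≤ T` with `P^h ≤ T`) is a
composite of conjugation maps by elements `f₁, …, fₙ` of `K₁ ∪ K₂` such that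
all intermediate images `P^{f₁⋯fᵢ}` lie in `T`. -/
theorem fusion_generated {p : ℕ} [Fact p.Prime] {G : Type*} [Group G] [Finite G]
    (S : Sylow p G) (H₁ H₂ : Subgroup G)
    (h₁ : IsSubnormal H₁) (h₂ : IsSubnormal H₂)
    (H T K₁ K₂ : Subgroup G)
    (hH : H = H₁ ⊔ H₂) (hT : T = H ⊓ (S : Subgroup G))
    (hK₁ : K₁ = H₁ ⊔ T) (hK₂ : K₂ = H₂ ⊔ T) :
    T = (H₁ ⊓ (S : Subgroup G)) ⊔ (H₂ ⊓ (S : Subgroup G)) ∧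
      ∀ h ∈ H, ∀ P : Subgroup G, P ≤ T → (∀ a ∈ P, h⁻¹ * a * h ∈ T) →
        ∃ l : List G, (∀ f ∈ l, f ∈ K₁ ∨ f ∈ K₂) ∧
          (∀ i : ℕ, i ≤ l.length → ∀ a ∈ P,
            (l.take i).prod⁻¹ * a * (l.take i).prod ∈ T) ∧
          (∀ a ∈ P, h⁻¹ * a * h = l.prod⁻¹ * a * l.prod) := by
  subst hH hT hK₁ hK₂
  have hs₁ := SubnormalFusion.isSubnormal_of_chain h₁
  have hs₂ := SubnormalFusion.isSubnormal_of_chain h₂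
  refine ⟨SubnormalFusion.sup_inf_sylow S hs₁ hs₂, fun h hh P hP hPh => ?_⟩
  obtain ⟨T, hT⟩ :=
    SubnormalFusion.exists_sylow_subgroupOf S (SubnormalFusion.isSubnormal_sup hs₁ hs₂)
  have h1 := SubnormalFusion.gen_of_isSubnormal T
    (hs₁.subgroupOf (K := H₁ ⊔ H₂)) (hs₂.subgroupOf (K := H₁ ⊔ H₂))
    (by rw [← Subgroup.subgroupOf_sup le_sup_left le_sup_right, Subgroup.subgroupOf_self])
  rw [hT, ← Subgroup.inf_subgroupOf_left] at h1
  have h2 := SubnormalFusion.gen_of_subgroup (Y := H₁ ⊔ H₂) inf_le_left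
    (K := ((H₁ ⊔ (H₁ ⊔ H₂) ⊓ S : Subgroup G) : Set G) ∪
      ((H₂ ⊔ (H₁ ⊔ H₂) ⊓ S : Subgroup G) : Set G)) ?_ h1
  · have h3 : SubnormalFusion.ConjInto (((H₁ ⊔ H₂) ⊓ S : Subgroup G) : Set G) P 1 :=
      fun a ha => by
      rw [inv_one, one_mul, mul_one]
      exact hP ha
    obtain ⟨l, hl, hT', e⟩ := SubnormalFusion.exists_list_of_path h3
      (h2 P 1 h ⟨by simpa using hh, h3, hPh⟩)
    rw [one_mul] at e
    refine ⟨l, hl, fun i hi a ha => ?_, fun a _ => by rw [e]⟩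
    have h4 := hT' i hi a ha
    rw [one_mul] at h4
    exact h4
  · have h4 : ∀ C : Subgroup G, C.subgroupOf (H₁ ⊔ H₂) ⊔
        ((H₁ ⊔ H₂) ⊓ (S : Subgroup G)).subgroupOf (H₁ ⊔ H₂) ≤
          (C ⊔ (H₁ ⊔ H₂) ⊓ S : Subgroup G).subgroupOf (H₁ ⊔ H₂) := fun C =>
      sup_le (Subgroup.comap_mono le_sup_left) (Subgroup.comap_mono le_sup_right)
    rintro k (hk | hk)
    · exact Or.inl (h4 H₁ hk)
    · exact Or.inr (h4 H₂ hk)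
end
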